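/- arXiv:1512.09174 — 4 statements merged into one kernel-verified Lean document; each statement's English description precedes it below -/
import Mathlib

section
/- Let f satisfy (H) and be bounded above by M > 0, and let x be a solution on [-1,∞) of x'(t) = f(x(t-1)) whose initial segment φ belongs to K and is not identically zero. Then x is slowly oscillating on [0,∞): any two distinct zeros z, z' ≥ 0 of x satisfy |z - z'| > 1. -/
/-!
Call a zero `z ≥ 0` of `x` *bad* if `x` has another zero in `(z - 1, z)`. If a zero `z ≥ 0` is not
bad, then `x' (t) = f (x (t - 1)) ≠ 0` for `t ∈ (z, z + 1)`, so by Rolle's theorem `x` has no zero in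
`(z, z + 1]` (`no_zero_after`). Hence it suffices that no zero is bad.

A zero `w ≤ 0` never makes a zero `z ≥ 0` bad: `x` vanishes on `[-1, w]` by monotonicity, so `x` is
constant, equal to `x 0 > 0`, on `[0, w + 1]`, and `z > w + 1` (`zero_gap_initial`). Therefore a bad
zero has a nonnegative zero less than `1` before it, which by `no_zero_after` is itself bad. If bad
zeros existed, their infimum `m` would be a zero of `x` by continuity; it is not bad, as there would
be a smaller bad zero, so there is no zero in `(m, m + 1]`, which contradicts the choice of `m`.
-/

open Set Filter

/-- Hypotheses (H): `f` is continuous, satisfies the negative feedback condition,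
and is differentiable on a neighborhood of `0` with `f'(0) < 0`. -/
def HypH (f : ℝ → ℝ) : Prop :=
  Continuous f ∧ (∀ x : ℝ, x ≠ 0 → x * f x < 0) ∧
    (∀ᶠ y in nhds (0 : ℝ), DifferentiableAt ℝ f y) ∧ deriv f 0 < 0

/-- A solution on `[-1,∞)` of the delay equation `x'(t) = f (x (t-1))`. -/
def IsSolOn (f x : ℝ → ℝ) : Prop :=
  ContinuousOn x (Ici (-1)) ∧ ∀ t : ℝ, 0 < t → HasDerivAt x (f (x (t - 1))) t

/-- Membership in the set `K`: `φ(-1) = 0`, `φ` nondecreasing on `[-1,0]`,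
continuous there, and `|φ| ≤ M`. -/
def MemK (M : ℝ) (φ : ℝ → ℝ) : Prop :=
  ContinuousOn φ (Icc (-1) 0) ∧ φ (-1) = 0 ∧ MonotoneOn φ (Icc (-1) 0) ∧
    ∀ s ∈ Icc (-1 : ℝ) 0, |φ s| ≤ M

/-- `T` is the minimal (positive) period of `p`. -/
def MinPeriod {α : Type*} (p : ℝ → α) (T : ℝ) : Prop :=
  0 < T ∧ (∀ t, p (t + T) = p t) ∧
    ∀ T' : ℝ, 0 < T' → (∀ t, p (t + T') = p t) → T ≤ T'

/-- A slowly oscillating periodic (SOP) solution of `x'(t) = f (x (t-1))`: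
a nonconstant periodic differentiable solution any two of whose distinct
zeros are separated by more than `1`. -/
def IsSOP (f p : ℝ → ℝ) : Prop :=
  (∀ t : ℝ, HasDerivAt p (f (p (t - 1))) t) ∧
    (∃ T : ℝ, 0 < T ∧ ∀ t, p (t + T) = p t) ∧
    (∃ t s : ℝ, p t ≠ p s) ∧
    ∀ z z' : ℝ, p z = 0 → p z' = 0 → z ≠ z' → 1 < |z - z'|

/-- A Kaplan–Yorke solution: an SOP solution of minimal period `4`
satisfying `x(t) = -x(t-2)`. -/
def IsKY (f x : ℝ → ℝ) : Prop :=
  IsSOP f x ∧ MinPeriod x 4 ∧ ∀ t : ℝ, x t = -x (t - 2)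

/-- Hypotheses (H') with constants `μ, β, σ`. -/
def HypH' (f : ℝ → ℝ) (μ β σ : ℝ) : Prop :=
  (∀ x : ℝ, |f x| ≤ μ) ∧ ∀ x : ℝ, β ≤ |x| → σ ≤ |f x|

/-- Hypotheses (H'') with constants `a, c, δ, γ`. -/
def HypH'' (f : ℝ → ℝ) (a c δ γ : ℝ) : Prop :=
  (∀ x : ℝ, f (-x) = -f x) ∧ (∀ x ∈ Icc (0 : ℝ) (2 * a), |f x| ≤ γ) ∧
    (∀ x ∈ Icc a (2 * a - c), f x = -γ) ∧ ∀ x ∈ Icc (2 * a) γ, f x = -δ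

/-- The minimal period of `p` equals `z'' - z` for three consecutive zeros
`z < z' < z''` of `p`. -/
def PeriodThreeZeros (p : ℝ → ℝ) : Prop :=
  ∃ z z' z'' : ℝ, z < z' ∧ z' < z'' ∧ p z = 0 ∧ p z' = 0 ∧ p z'' = 0 ∧
    (∀ t, t ∈ Ioo z z' ∪ Ioo z' z'' → p t ≠ 0) ∧ MinPeriod p (z'' - z)

/-- Negative feedback and continuity force `f 0 = 0`. -/
lemma feedback_zero {f : ℝ → ℝ} (hc : Continuous f) (hn : ∀ x : ℝ, x ≠ 0 → x * f x < 0) :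
    f 0 = 0 := by
  apply le_antisymm
  · have h : closure (Ioi (0 : ℝ)) ⊆ {y | f y ≤ 0} := by
      apply closure_minimal _ (isClosed_le hc continuous_const)
      intro y (hy : 0 < y)
      have := hn y hy.ne'
      change f y ≤ 0
      nlinarith
    rw [closure_Ioi] at h
    exact h self_mem_Ici
  · have h : closure (Iio (0 : ℝ)) ⊆ {y | 0 ≤ f y} := by
      apply closure_minimal _ (isClosed_le continuous_const hc)
      intro y (hy : y < 0)
      have := hn y hy.ne
      change 0 ≤ f y
      nlinarith
    rw [closure_Iio] at h
    exact h self_mem_Iic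

/-- If `x` has no zero in the unit interval before the zero `z`, it has none in the unit interval
after `z`. -/
lemma no_zero_after {f x : ℝ → ℝ} (hn : ∀ x : ℝ, x ≠ 0 → x * f x < 0) (hx : IsSolOn f x)
    {z : ℝ} (hz : 0 ≤ z) (hxz : x z = 0) (hA : ∀ t ∈ Ioo (z - 1) z, x t ≠ 0) :
    ∀ t ∈ Ioc z (z + 1), x t ≠ 0 := by
  intro t ht hxt
  obtain ⟨c, hc, hc0⟩ := exists_hasDerivAt_eq_zero ht.1
    (hx.1.mono fun s hs => by
      have := hs.1
      change (-1 : ℝ) ≤ s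
      linarith)
    (hxz.trans hxt.symm) fun s hs => hx.2 s (hz.trans_lt hs.1)
  have := hn _ (hA (c - 1) ⟨by linarith [hc.1], by linarith [hc.2, ht.2]⟩)
  simp [hc0] at this

/-- A zero in the initial interval lies more than `1` before every nonnegative zero. -/
lemma zero_gap_initial {f x : ℝ → ℝ} (hf0 : f 0 = 0) (hx : IsSolOn f x)
    (h1 : x (-1) = 0) (hmono : MonotoneOn x (Icc (-1) 0)) (h0 : 0 < x 0)
    {w z : ℝ} (hw : w ∈ Icc (-1 : ℝ) 0) (hxw : x w = 0) (hz : 0 ≤ z) (hxz : x z = 0) :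
    w + 1 < z := by
  by_contra! hle
  have hz' : 0 < z := lt_of_le_of_ne hz fun h => by rw [← h] at hxz; linarith
  obtain ⟨c, hc, hslope⟩ := exists_hasDerivAt_eq_slope x _ hz'
    (hx.1.mono fun s hs => by
      have := hs.1
      change (-1 : ℝ) ≤ s
      linarith)
    fun s hs => hx.2 s hs.1
  have hmem : c - 1 ∈ Icc (-1 : ℝ) 0 := ⟨by linarith [hc.1], by linarith [hc.2, hw.2]⟩
  have hxc : x (c - 1) = 0 := by
    apply le_antisymm
    · rw [← hxw]
      exact hmono hmem hw (by linarith [hc.2])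
    · rw [← h1]
      exact hmono ⟨le_rfl, by norm_num⟩ hmem hmem.1
  rw [hxc, hf0, hxz, eq_comm, div_eq_zero_iff] at hslope
  rcases hslope with h | h <;> linarith

/-- No nonnegative zero is bad, by descent to the infimum of the bad zeros. -/
lemma no_zero_before {f x : ℝ → ℝ} (hf0 : f 0 = 0) (hn : ∀ x : ℝ, x ≠ 0 → x * f x < 0)
    (hx : IsSolOn f x) (h1 : x (-1) = 0) (hmono : MonotoneOn x (Icc (-1) 0)) (h0 : 0 < x 0)
    {z : ℝ} (hz : 0 ≤ z) (hxz : x z = 0) : ∀ t ∈ Ioo (z - 1) z, x t ≠ 0 := by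
  by_contra hbad
  -- The set of bad zeros.
  set B : Set ℝ := {z | (0 ≤ z ∧ x z = 0) ∧ ¬ ∀ t ∈ Ioo (z - 1) z, x t ≠ 0} with hB
  have hne : B.Nonempty := ⟨z, ⟨hz, hxz⟩, hbad⟩
  have hbdd : BddBelow B := ⟨0, fun y hy => hy.1.1⟩
  have hdesc : ∀ y ∈ B, ∃ w ∈ B, w < y := by
    rintro y ⟨⟨hy, hxy⟩, hyb⟩
    push Not at hyb
    obtain ⟨w, hw, hxw⟩ := hyb
    rcases le_total w 0 with hw0 | hw0
    · have := zero_gap_initial hf0 hx h1 hmono h0 ⟨by linarith [hw.1], hw0⟩ hxw hy hxy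
      linarith [hw.1]
    · exact ⟨w, ⟨⟨hw0, hxw⟩, fun hA =>
        no_zero_after hn hx hw0 hxw hA y ⟨hw.2, by linarith [hw.1]⟩ hxy⟩, hw.2⟩
  have hclosed : IsClosed (Ici (0 : ℝ) ∩ x ⁻¹' {0}) :=
    (hx.1.mono (Ici_subset_Ici.2 (by norm_num))).preimage_isClosed_of_isClosed
      isClosed_Ici isClosed_singleton
  have hm : sInf B ∈ Ici (0 : ℝ) ∩ x ⁻¹' {0} :=
    closure_minimal (fun y hy => hy.1) hclosed (csInf_mem_closure hne hbdd)
  have hmB : sInf B ∉ B := fun h => by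
    obtain ⟨w, hw, hlt⟩ := hdesc _ h
    exact (csInf_le hbdd hw).not_gt hlt
  have hmA : ∀ t ∈ Ioo (sInf B - 1) (sInf B), x t ≠ 0 := by
    by_contra h
    exact hmB ⟨hm, h⟩
  obtain ⟨y, hy, hylt⟩ := exists_lt_of_csInf_lt hne (lt_add_one (sInf B))
  have hmy : sInf B < y :=
    lt_of_le_of_ne (csInf_le hbdd hy) fun h => hmB (h ▸ hy)
  exact no_zero_after hn hx hm.1 hm.2 hmA y ⟨hmy, hylt.le⟩ hy.1.2

theorem statement_0 (f : ℝ → ℝ) (M : ℝ) (hM : 0 < M)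
    (hH : HypH f) (hbd : ∀ y : ℝ, f y ≤ M)
    (x : ℝ → ℝ) (hx : IsSolOn f x) (hK : MemK M x)
    (hne : ∃ s ∈ Icc (-1 : ℝ) 0, x s ≠ 0) :
    ∀ z z' : ℝ, 0 ≤ z → 0 ≤ z' → x z = 0 → x z' = 0 → z ≠ z' →
      1 < |z - z'| := by
  obtain ⟨hc, hn, -, -⟩ := hH
  obtain ⟨-, h1, hmono, -⟩ := hK
  have hf0 := feedback_zero hc hn
  have h0 : 0 < x 0 := by
    obtain ⟨s, hs, hxs⟩ := hne
    have ha : x (-1) ≤ x s := hmono ⟨le_rfl, by norm_num⟩ hs hs.1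
    have hb : x s ≤ x 0 := hmono hs ⟨by norm_num, le_rfl⟩ hs.2
    rw [h1] at ha
    exact (lt_of_le_of_ne ha hxs.symm).trans_le hb
  have key : ∀ a b : ℝ, 0 ≤ a → x a = 0 → x b = 0 → a < b → a + 1 < b := by
    intro a b ha hxa hxb hab
    by_contra! hle
    exact no_zero_after hn hx ha hxa (no_zero_before hf0 hn hx h1 hmono h0 ha hxa) b
      ⟨hab, hle⟩ hxb
  intro z z' hz hz' hxz hxz' hzz
  rw [lt_abs]
  rcases lt_or_gt_of_ne hzz with h | h
  · right
    linarith [key z z' hz hxz hxz' h]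
  · left
    linarith [key z' z hz' hxz' hxz h]
end

section
/- Let f satisfy (H) and be bounded above by M > 0, and let x be a solution on [-1,∞) of x'(t) = f(x(t-1)) whose initial segment φ belongs to K and is not identically zero. If z > 0 is a zero of x, then setting B := sup{|f(ξ)| : ξ ∈ x([z-1,z])}, one has |x(t)| ≤ B for all t ∈ [z, z+1], |x'(t)| ≤ B for all t ∈ (z, z+1), and the function s ↦ |x(z+1+s)| is monotone nondecreasing on [-1,0]. -/
/-!
Call a positive zero `c` of `x` good if `x` has no zero in `(c, c + 1)`. The heart of the matter is
that every positive zero is good (`zero_good`). Granting this, no zero lies in `(z - 1, z)`, so `x`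
has a weak sign on `[z - 1, z]` (`sign_before_zero`; for `z < 1` the initial segment is
nonnegative and agrees with the sign of `x` on `(0, z)`). By negative feedback `x'` has the
opposite weak sign on `(z, z + 1)` and `x z = 0`, so `x` is monotone or antitone there and `|x|`
is nondecreasing; the bounds by `B` follow from the equation and the mean value inequality.

That zeros are good: let `c` be the infimum of the bad ones. It is a zero, positive because
`x 0 > 0`, and no zero precedes it within distance `1`, since that zero would be bad. Hence `x` has
a weak sign on `[c - 1, c]` and is monotone or antitone on `[c, c + 1]`. If it vanished at
some `t` in `(c, c + 1)`, it would vanish on `[c, t]`, hence by the equation on `(c - 1, t - 1)`;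
this contradicts either the absence of zeros or, if `c < 1`, monotonicity of the initial segment,
which would force `x` to be constant on `[0, c]`. So `c` is good and bad zeros are at
least `c + 1`, which is absurd.
-/


open Set Filter

lemma HypH.map_zero {f : ℝ → ℝ} (hH : HypH f) : f 0 = 0 := by
  obtain ⟨hc, hneg, -⟩ := hH
  have h1 : ∀ y ∈ Ioi (0 : ℝ), f y ≤ 0 := fun y (hy : 0 < y) => by
    have := hneg y hy.ne'
    by_contra! h
    nlinarith
  have h2 : ∀ y ∈ Iio (0 : ℝ), 0 ≤ f y := fun y (hy : y < 0) => by
    have := hneg y hy.ne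
    by_contra! h
    nlinarith
  apply le_antisymm
  · exact le_on_closure h1 hc.continuousOn continuousOn_const (by simp)
  · exact le_on_closure h2 continuousOn_const hc.continuousOn (by simp)

lemma HypH.nonpos {f : ℝ → ℝ} (hH : HypH f) {y : ℝ} (hy : 0 ≤ y) : f y ≤ 0 := by
  rcases hy.eq_or_lt with rfl | hy
  · exact hH.map_zero.le
  · have := hH.2.1 y hy.ne'
    by_contra! h
    nlinarith

lemma HypH.nonneg {f : ℝ → ℝ} (hH : HypH f) {y : ℝ} (hy : y ≤ 0) : 0 ≤ f y := by
  rcases hy.eq_or_lt with rfl | hy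
  · exact hH.map_zero.ge
  · have := hH.2.1 y hy.ne
    by_contra! h
    nlinarith

lemma HypH.eq_zero {f : ℝ → ℝ} (hH : HypH f) {y : ℝ} (hy : f y = 0) : y = 0 := by
  by_contra h
  have := hH.2.1 y h
  simp [hy] at this

lemma sign_of_no_zero {x : ℝ → ℝ} {a b : ℝ} (hab : a < b) (hc : ContinuousOn x (Icc a b))
    (h : ∀ t ∈ Ioo a b, x t ≠ 0) :
    (∀ t ∈ Icc a b, 0 ≤ x t) ∨ (∀ t ∈ Icc a b, x t ≤ 0) := by
  have key : (∀ t ∈ Ioo a b, 0 ≤ x t) ∨ (∀ t ∈ Ioo a b, x t ≤ 0) := by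
    by_contra! hcon
    obtain ⟨⟨p, hp, hp'⟩, q, hq, hq'⟩ := hcon
    obtain ⟨r, hr, hr'⟩ := isPreconnected_Ioo.intermediate_value hp hq
      (hc.mono Ioo_subset_Icc_self) ⟨hp'.le, hq'.le⟩
    exact h r hr hr'
  rw [← closure_Ioo hab.ne] at hc ⊢
  rcases key with key | key
  · exact Or.inl fun t ht => le_on_closure key continuousOn_const hc ht
  · exact Or.inr fun t ht => le_on_closure key hc continuousOn_const ht

lemma pos_at_zero {x : ℝ → ℝ} {M : ℝ} (hK : MemK M x)
    (hne : ∃ s ∈ Icc (-1 : ℝ) 0, x s ≠ 0) : 0 < x 0 := by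
  obtain ⟨-, h0, hm, -⟩ := hK
  obtain ⟨s, hs, hs0⟩ := hne
  have h1 := hm (by simp) hs hs.1
  have h2 := hm hs (by simp) hs.2
  rw [h0] at h1
  exact (lt_of_le_of_ne h1 hs0.symm).trans_le h2

/-- If no positive zero precedes `c` within distance `1`, then `x` has a weak sign on
`[c - 1, c]`. -/
lemma sign_before_zero {f x : ℝ → ℝ} {M : ℝ} (hx : IsSolOn f x) (hK : MemK M x)
    (hne : ∃ s ∈ Icc (-1 : ℝ) 0, x s ≠ 0) {c : ℝ} (hc : 0 < c)
    (hnz : ∀ t ∈ Ioo (c - 1) c, 0 < t → x t ≠ 0) :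
    (∀ t ∈ Icc (c - 1) c, 0 ≤ x t) ∨ (∀ t ∈ Icc (c - 1) c, x t ≤ 0) := by
  rcases le_total 1 c with h1 | h1
  · refine sign_of_no_zero (by linarith) (hx.1.mono fun t ht => ?_) fun t ht => ?_
    · simp only [mem_Ici]
      linarith [ht.1]
    · exact hnz t ht (by linarith [ht.1])
  · left
    intro t ht
    have hp := pos_at_zero hK hne
    rcases le_total t 0 with h0 | h0
    · have := hK.2.2.1 (show (-1 : ℝ) ∈ Icc (-1 : ℝ) 0 by simp)
        (show t ∈ Icc (-1 : ℝ) 0 from ⟨by linarith [ht.1], h0⟩) (by linarith [ht.1])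
      rwa [hK.2.1] at this
    · rcases sign_of_no_zero hc (hx.1.mono fun s hs => by
          simp only [mem_Ici]
          linarith [hs.1]) (fun s hs => hnz s ⟨by linarith [hs.1], hs.2⟩ hs.1) with h | h
      · exact h t ⟨h0, ht.2⟩
      · linarith [h 0 ⟨le_rfl, hc.le⟩]

lemma IsSolOn.continuousOn_Icc {f x : ℝ → ℝ} (hx : IsSolOn f x) {a b : ℝ} (ha : -1 ≤ a) :
    ContinuousOn x (Icc a b) :=
  hx.1.mono fun _ hs => ha.trans hs.1

lemma monotone_or_antitone_after {f x : ℝ → ℝ} (hH : HypH f) (hx : IsSolOn f x)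
    {c : ℝ} (hc : 0 < c)
    (hs : (∀ t ∈ Icc (c - 1) c, 0 ≤ x t) ∨ (∀ t ∈ Icc (c - 1) c, x t ≤ 0)) :
    MonotoneOn x (Icc c (c + 1)) ∨ AntitoneOn x (Icc c (c + 1)) := by
  have hcont : ContinuousOn x (Icc c (c + 1)) := hx.continuousOn_Icc (by linarith)
  have hd : ∀ t ∈ interior (Icc c (c + 1)),
      HasDerivWithinAt x (f (x (t - 1))) (interior (Icc c (c + 1))) t := fun t ht => by
    rw [interior_Icc] at ht
    exact (hx.2 t (hc.trans ht.1)).hasDerivWithinAt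
  rcases hs with hs | hs
  · right
    refine antitoneOn_of_hasDerivWithinAt_nonpos (convex_Icc _ _) hcont hd fun t ht => ?_
    rw [interior_Icc] at ht
    exact hH.nonpos (hs _ ⟨by linarith [ht.1], by linarith [ht.2]⟩)
  · left
    refine monotoneOn_of_hasDerivWithinAt_nonneg (convex_Icc _ _) hcont hd fun t ht => ?_
    rw [interior_Icc] at ht
    exact hH.nonneg (hs _ ⟨by linarith [ht.1], by linarith [ht.2]⟩)

/-- A positive zero that is not preceded by a positive zero within distance `1` is not followed
by a zero within distance `1` either. -/
lemma no_zero_after_s1 {f x : ℝ → ℝ} {M : ℝ} (hH : HypH f) (hx : IsSolOn f x) (hK : MemK M x)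
    (hne : ∃ s ∈ Icc (-1 : ℝ) 0, x s ≠ 0) {c : ℝ} (hc : 0 < c) (hxc : x c = 0)
    (hnz : ∀ t ∈ Ioo (c - 1) c, 0 < t → x t ≠ 0) :
    ∀ t ∈ Ioo c (c + 1), x t ≠ 0 := by
  intro t ht hxt
  have hmon := monotone_or_antitone_after hH hx hc (sign_before_zero hx hK hne hc hnz)
  have hzero : ∀ s ∈ Icc c t, x s = 0 := by
    intro s hs
    have hsm : s ∈ Icc c (c + 1) := ⟨hs.1, hs.2.trans ht.2.le⟩
    have hcm : c ∈ Icc c (c + 1) := ⟨le_rfl, by linarith⟩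
    have htm : t ∈ Icc c (c + 1) := ⟨ht.1.le, ht.2.le⟩
    rcases hmon with h | h
    · have h1 := h hcm hsm hs.1
      have h2 := h hsm htm hs.2
      linarith
    · have h1 := h hcm hsm hs.1
      have h2 := h hsm htm hs.2
      linarith
  have hprev : ∀ s ∈ Ioo c t, x (s - 1) = 0 := by
    intro s hs
    apply hH.eq_zero
    have h0 : x =ᶠ[nhds s] fun _ => (0 : ℝ) := by
      filter_upwards [Ioo_mem_nhds hs.1 hs.2] with u hu
      exact hzero u ⟨hu.1.le, hu.2.le⟩
    exact (hx.2 s (hc.trans hs.1)).unique ((hasDerivAt_const s (0 : ℝ)).congr_of_eventuallyEq h0)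
  obtain ⟨s, hs⟩ := exists_between ht.1
  have hs0 := hprev s hs
  rcases lt_or_ge 0 (s - 1) with h | h
  · exact hnz (s - 1) ⟨by linarith, by linarith [ht.2]⟩ h hs0
  · -- The initial segment vanishes on `[-1, s - 1]`, so `x` is constant on `[0, s]`, which
    -- contains `c`, contradicting `x c = 0 < x 0`.
    have hinit : ∀ u ∈ Icc (-1) (s - 1), x u = 0 := by
      intro u hu
      have hum : u ∈ Icc (-1 : ℝ) 0 := ⟨hu.1, hu.2.trans h⟩
      have hsm : s - 1 ∈ Icc (-1 : ℝ) 0 := ⟨by linarith, h⟩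
      have h1 := hK.2.2.1 (show (-1 : ℝ) ∈ Icc (-1 : ℝ) 0 by simp) hum hu.1
      have h2 := hK.2.2.1 hum hsm hu.2
      rw [hK.2.1] at h1
      linarith
    have hmono : MonotoneOn x (Icc 0 s) := by
      have hd : ∀ t ∈ interior (Icc 0 s),
          HasDerivWithinAt x 0 (interior (Icc 0 s)) t := fun u hu => by
        rw [interior_Icc] at hu
        have := (hx.2 u hu.1).hasDerivWithinAt (s := interior (Icc 0 s))
        rwa [hinit (u - 1) ⟨by linarith [hu.1], by linarith [hu.2]⟩, hH.map_zero] at this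
      exact monotoneOn_of_hasDerivWithinAt_nonneg (convex_Icc _ _)
        (hx.continuousOn_Icc (by norm_num)) hd fun _ _ => le_rfl
    have h1 := hmono (show (0 : ℝ) ∈ Icc 0 s from ⟨le_rfl, by linarith⟩) ⟨hc.le, hs.1.le⟩ hc.le
    linarith [pos_at_zero hK hne]

/-- Positive zeros are at distance at least `1` from each other. -/
lemma zero_good {f x : ℝ → ℝ} {M : ℝ} (hH : HypH f) (hx : IsSolOn f x) (hK : MemK M x)
    (hne : ∃ s ∈ Icc (-1 : ℝ) 0, x s ≠ 0) {a : ℝ} (ha : 0 < a) (hxa : x a = 0) :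
    ∀ t ∈ Ioo a (a + 1), x t ≠ 0 := by
  by_contra hbad
  let S : Set ℝ := {a | 0 < a ∧ x a = 0 ∧ ¬ ∀ t ∈ Ioo a (a + 1), x t ≠ 0}
  have hSne : S.Nonempty := ⟨a, ha, hxa, hbad⟩
  have hSb : BddBelow S := ⟨0, fun b hb => hb.1.le⟩
  have hclosed : IsClosed (Ici (0 : ℝ) ∩ x ⁻¹' {0}) :=
    (hx.1.mono (Ici_subset_Ici.2 (by norm_num))).preimage_isClosed_of_isClosed
      isClosed_Ici isClosed_singleton
  have hsub : S ⊆ Ici (0 : ℝ) ∩ x ⁻¹' {0} := fun b hb => ⟨hb.1.le, hb.2.1⟩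
  have hcS : sInf S ∈ Ici (0 : ℝ) ∩ x ⁻¹' {0} :=
    closure_minimal hsub hclosed (csInf_mem_closure hSne hSb)
  set c := sInf S
  have hxc : x c = 0 := hcS.2
  have hc : 0 < c := by
    refine lt_of_le_of_ne hcS.1 fun h => ?_
    exact (pos_at_zero hK hne).ne' (h.symm ▸ hxc)
  have hgood := no_zero_after_s1 hH hx hK hne hc hxc fun t ht ht0 hxt =>
    notMem_of_lt_csInf ht.2 hSb ⟨ht0, hxt, fun h => h c ⟨ht.2, by linarith [ht.1]⟩ hxc⟩
  have hlb : c + 1 ≤ sInf S := by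
    refine le_csInf hSne fun b hb => ?_
    by_contra! hlt
    rcases (csInf_le hSb hb).eq_or_lt with h | h
    · exact hb.2.2 (h ▸ hgood)
    · exact hgood b ⟨h, hlt⟩ hb.2.1
  linarith

theorem statement_1 (f : ℝ → ℝ) (M : ℝ) (hM : 0 < M)
    (hH : HypH f) (hbd : ∀ y : ℝ, f y ≤ M)
    (x : ℝ → ℝ) (hx : IsSolOn f x) (hK : MemK M x)
    (hne : ∃ s ∈ Icc (-1 : ℝ) 0, x s ≠ 0)
    (z : ℝ) (hz : 0 < z) (hxz : x z = 0)
    (B : ℝ) (hB : B = sSup ((fun ξ => |f ξ|) '' (x '' Icc (z - 1) z))) :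
    (∀ t ∈ Icc z (z + 1), |x t| ≤ B) ∧
    (∀ t ∈ Ioo z (z + 1), |deriv x t| ≤ B) ∧
    MonotoneOn (fun s => |x (z + 1 + s)|) (Icc (-1 : ℝ) 0) := by
  have hmon := monotone_or_antitone_after hH hx hz <|
    sign_before_zero hx hK hne hz fun t ht ht0 hxt =>
      zero_good hH hx hK hne ht0 hxt z ⟨ht.2, by linarith [ht.1]⟩ hxz
  have hbdd : BddAbove ((fun ξ => |f ξ|) '' (x '' Icc (z - 1) z)) :=
    ((isCompact_Icc.image_of_continuousOn (hx.continuousOn_Icc (by linarith))).image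
      hH.1.abs).bddAbove
  have hfB : ∀ t ∈ Icc z (z + 1), |f (x (t - 1))| ≤ B := by
    intro t ht
    rw [hB]
    exact le_csSup hbdd ⟨_, ⟨t - 1, ⟨by linarith [ht.1], by linarith [ht.2]⟩, rfl⟩, rfl⟩
  have hB0 : 0 ≤ B := (abs_nonneg _).trans (hfB z ⟨le_rfl, by linarith⟩)
  refine ⟨fun t ht => ?_, fun t ht => ?_, fun s hs t ht hst => ?_⟩
  · have := (convex_Icc z (z + 1)).norm_image_sub_le_of_norm_hasDerivWithin_le
      (fun u hu => (hx.2 u (hz.trans_le hu.1)).hasDerivWithinAt) hfB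
      (left_mem_Icc.2 (by linarith)) ht
    rw [hxz, sub_zero, Real.norm_eq_abs, Real.norm_eq_abs,
      abs_of_nonneg (sub_nonneg.2 ht.1)] at this
    exact this.trans (mul_le_of_le_one_right hB0 (by linarith [ht.2]))
  · rw [(hx.2 t (hz.trans ht.1)).deriv]
    exact hfB t ⟨ht.1.le, ht.2.le⟩
  · have hzm : z ∈ Icc z (z + 1) := ⟨le_rfl, by linarith⟩
    have hsm : z + 1 + s ∈ Icc z (z + 1) := ⟨by linarith [hs.1], by linarith [hs.2]⟩
    have htm : z + 1 + t ∈ Icc z (z + 1) := ⟨by linarith [ht.1], by linarith [ht.2]⟩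
    have hle : z + 1 + s ≤ z + 1 + t := by linarith
    rcases hmon with h | h
    · have h1 := h hzm hsm hsm.1
      rw [hxz] at h1
      exact abs_le_abs_of_nonneg h1 (h hsm htm hle)
    · have h1 := h hzm hsm hsm.1
      rw [hxz] at h1
      exact abs_le_abs_of_nonpos h1 (h hsm htm hle)
end

section
/- Suppose f satisfies (H), is bounded above by M > 0, and f'(0) < -π/2. Then the equation x'(t) = f(x(t-1)) has an SOP solution; moreover this SOP solution p can be chosen so that p(-1) = 0, p is nondecreasing on [-1,0], p has exactly two zeros z₁ < z₂ in (0, z₂], and p(t + z₂ + 1) = p(t) for all t ∈ ℝ, with z₂ + 1 the minimal period of p. -/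
/-!
A solution with a nondecreasing history `φ` on `[-1, 0]`, `φ (-1) = 0`, `φ 0 > 0`, decreases through
a zero `z`, and minus its segment on `[z, z + 1]` is again such a history, now for the equation with
`f` replaced by `u ↦ -f (-u)`.  This defines two half-return maps (`halfMap`), one for `u ↦ -f u`
and one for `u ↦ f (-u)`, both restricted to `u ≥ 0`; a fixed point of their composition is the
initial segment of the required periodic solution, whose zeros per period are exactly the two
crossings (`sop_of_orbit`).  The upper bound `M` bounds positive half-waves, and then
`C = max (-f)` over `[0, M]` bounds the negative ones, so `f` may be cut off.

The difficulty is that the zero function is also fixed.  The composed map `H` is compact, and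
`halfMap_lower` keeps `H φ 0` away from zero when `φ 0 ≥ ε`.  Hence `k φ • H φ`, with
`k φ = max 1 (ε / H φ 0)`, is a continuous self-map of the compact convex set of Lipschitz
nondecreasing histories with `φ 0 ≥ ε`, and Schauder's theorem gives `φ = k φ • H φ`.  If
`k φ > 1`, then `φ 0 = ε` is small.  As `-f'(0) = α > π / 2`, the equation `l + α e^{-l} = 0` has a
root with `re l > 0` and `0 < im l < π` (`exists_char_root`); the modulus `L` of the associated
linear functional is comparable to `φ 0` on images of half-return maps, since `im l < π` prevents
cancellation (`linFun_lower`), and it grows by nearly a factor `e^{re l}` along each half-turn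
(`halfMap_expand`).  So `L φ < L (H φ) ≤ k φ * L (H φ) = L φ`, a contradiction; thus `k φ = 1`.

Schauder's theorem is deduced from Brouwer's theorem, which is proved by the analytic argument of
Milnor and Rogers (`no_C1_retraction`).
-/

open Set Filter

/-! ### Brouwer's fixed point theorem -/

/-- `det (1 + t A)` is a polynomial in `t` of degree at most `dim E`, so its value at `t = 1` is a
fixed linear combination of its values at `dim E + 1` nodes. -/
theorem det_one_add_eq_sum_lagrange {E : Type*} [NormedAddCommGroup E] [NormedSpace ℝ E]
    [FiniteDimensional ℝ E] (v : Fin (Module.finrank ℝ E + 1) → ℝ) (hv : Function.Injective v)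
    (A : E →L[ℝ] E) :
    (1 + A).det = ∑ i, (1 + v i • A).det * (Lagrange.basis Finset.univ v i).eval 1 := by
  classical
  let b := Module.finBasis ℝ E
  let m : Matrix (Fin (Module.finrank ℝ E)) (Fin (Module.finrank ℝ E)) ℝ :=
    LinearMap.toMatrix b b (A : E →ₗ[ℝ] E)
  let q : Polynomial ℝ :=
    ((Polynomial.X : Polynomial ℝ) • m.map Polynomial.C +
      (1 : Matrix (Fin (Module.finrank ℝ E)) (Fin (Module.finrank ℝ E)) ℝ).map Polynomial.C).det
  have hq : ∀ t : ℝ, q.eval t = (1 + t • A).det := by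
    intro t
    have h1 : q.eval t = (t • m + 1).det := by
      change (Polynomial.evalRingHom t) q = _
      rw [RingHom.map_det]
      congr 1
      ext i j
      rcases eq_or_ne i j with rfl | hij
      · simp [Matrix.map_apply, mul_comm t]
      · simp [Matrix.map_apply, Matrix.one_apply_ne hij, mul_comm t]
    rw [h1]
    change _ = LinearMap.det ((1 + t • A : E →L[ℝ] E) : E →ₗ[ℝ] E)
    rw [← LinearMap.det_toMatrix b]
    congr 1
    have : ((1 + t • A : E →L[ℝ] E) : E →ₗ[ℝ] E) = t • (A : E →ₗ[ℝ] E) + 1 := by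
      ext x; simp [add_comm]
    rw [this, map_add, map_smul, LinearMap.toMatrix_one]
  have hdeg : q.degree < ((Finset.univ : Finset (Fin (Module.finrank ℝ E + 1))).card : ℕ) := by
    have := Polynomial.natDegree_det_X_add_C_le m 1
    refine lt_of_le_of_lt Polynomial.degree_le_natDegree ?_
    rw [Finset.card_univ, Fintype.card_fin]
    rw [Fintype.card_fin] at this
    exact_mod_cast Nat.lt_succ_of_le this
  have h := Lagrange.eq_interpolate (s := Finset.univ) (v := v) hv.injOn hdeg
  have h1 := congrArg (Polynomial.eval 1) h
  rw [hq, one_smul, Lagrange.interpolate_apply, Polynomial.eval_finsetSum] at h1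
  rw [h1]
  refine Finset.sum_congr rfl fun i _ => ?_
  rw [Polynomial.eval_mul, Polynomial.eval_C, hq]

theorem det_one_add_pos {E : Type*} [NormedAddCommGroup E] [NormedSpace ℝ E]
    [FiniteDimensional ℝ E] (A : E →L[ℝ] E) (h : ‖A‖ < 1) : 0 < (1 + A).det := by
  -- along `s ↦ 1 + s A` the determinant never vanishes and starts at `1`
  have hcont : Continuous fun s : ℝ => (1 + s • A).det := by
    have : Continuous fun B : E →L[ℝ] E => B.det := ContinuousLinearMap.continuous_det
    exact this.comp (by fun_prop)
  have hne : ∀ s ∈ Icc (0 : ℝ) 1, (1 + s • A).det ≠ 0 := by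
    intro s hs h0
    have hinj : Function.Injective (1 + s • A : E →L[ℝ] E) := by
      rw [injective_iff_map_eq_zero]
      intro x hx
      have hx' : x = -(s • A x) := by
        have : x + s • A x = 0 := by simpa using hx
        exact eq_neg_of_add_eq_zero_left this
      by_contra hx0
      have hpos : 0 < ‖x‖ := norm_pos_iff.2 hx0
      have : ‖x‖ ≤ ‖A‖ * ‖x‖ := by
        calc ‖x‖ = ‖s • A x‖ := by conv_lhs => rw [hx', norm_neg]
          _ = |s| * ‖A x‖ := by rw [norm_smul, Real.norm_eq_abs]
          _ ≤ 1 * (‖A‖ * ‖x‖) := by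
            gcongr
            · rw [abs_of_nonneg hs.1]; exact hs.2
            · exact A.le_opNorm x
          _ = _ := one_mul _
      nlinarith
    have hker := LinearMap.bot_lt_ker_of_det_eq_zero
      (f := ((1 + s • A : E →L[ℝ] E) : E →ₗ[ℝ] E)) h0
    rw [LinearMap.ker_eq_bot.2 hinj] at hker
    exact lt_irrefl _ hker
  by_contra hneg
  push Not at hneg
  have h0 : (1 + (0 : ℝ) • A).det = 1 := by
    rw [zero_smul, add_zero]
    change LinearMap.det ((1 : E →L[ℝ] E) : E →ₗ[ℝ] E) = 1
    simp
  have himg := intermediate_value_Icc' (zero_le_one (α := ℝ)) hcont.continuousOn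
  have h0mem : (0 : ℝ) ∈ Icc ((fun s : ℝ => (1 + s • A).det) 1)
      ((fun s : ℝ => (1 + s • A).det) 0) := by
    refine ⟨?_, ?_⟩
    · simpa using hneg
    · simp only; rw [h0]; exact zero_le_one
  obtain ⟨s, hs, hs0⟩ := himg h0mem
  exact hne s hs hs0

open MeasureTheory in
/-- There is no `C¹` retraction of the closed unit ball onto the unit sphere.  With `g = r - id`
and `t` small, `id + t g` is a bijection of the ball, so `∫ det (1 + t Dg)` over the ball is its
volume.  This integral is polynomial in `t`, hence equals the volume at `t = 1` too, where the
integrand `det Dr` vanishes. -/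
theorem no_C1_retraction {E : Type*} [NormedAddCommGroup E] [InnerProductSpace ℝ E]
    [FiniteDimensional ℝ E] (r : E → E) (U : Set E) (hU : IsOpen U)
    (hBU : Metric.closedBall (0 : E) 1 ⊆ U) (hr : ContDiffOn ℝ 1 r U)
    (hr1 : ∀ x, ‖x‖ ≤ 1 → ‖r x‖ = 1) (hr2 : ∀ x, ‖x‖ = 1 → r x = x) : False := by
  borelize E
  let μ : Measure E := Measure.addHaar
  let B : Set E := Metric.closedBall 0 1
  let O : Set E := Metric.ball 0 1
  have hOB : O ⊆ B := Metric.ball_subset_closedBall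
  have hB1 : ∀ x ∈ B, ‖x‖ ≤ 1 := fun x hx => by simpa [B] using hx
  let g : E → E := fun x => r x - x
  have hrd : ∀ x ∈ B, DifferentiableAt ℝ r x := fun x hx =>
    (hr.differentiableOn one_ne_zero).differentiableAt (hU.mem_nhds (hBU hx))
  have hgd : ∀ x ∈ B, DifferentiableAt ℝ g x := fun x hx => (hrd x hx).sub differentiableAt_id
  have hrc : ContinuousOn (fderiv ℝ r) B :=
    (hr.continuousOn_fderiv_of_isOpen hU le_rfl).mono hBU
  have hgf : ∀ x ∈ B, fderiv ℝ g x = fderiv ℝ r x - 1 := by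
    intro x hx
    change fderiv ℝ (fun x => r x - x) x = _
    rw [fderiv_fun_sub (hrd x hx) differentiableAt_fun_id, fderiv_fun_id]
    rfl
  have hgc : ContinuousOn (fderiv ℝ g) B := (hrc.sub continuousOn_const).congr hgf
  have hBc : IsCompact B := isCompact_closedBall 0 1
  obtain ⟨L0, hL0⟩ := hBc.exists_bound_of_continuousOn hgc
  let L : ℝ := max L0 1
  have hL1 : 1 ≤ L := le_max_right _ _
  have hL : ∀ x ∈ B, ‖fderiv ℝ g x‖ ≤ L := fun x hx => (hL0 x hx).trans (le_max_left _ _)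
  have hlip : ∀ x ∈ B, ∀ y ∈ B, ‖g y - g x‖ ≤ L * ‖y - x‖ := fun x hx y hy =>
    Convex.norm_image_sub_le_of_norm_fderiv_le hgd hL (convex_closedBall 0 1) hx hy
  have hgS : ∀ x, ‖x‖ = 1 → g x = 0 := fun x hx => by simp [g, hr2 x hx]
  -- extend `g` by zero outside the ball
  classical
  let e : E → E := fun x => if ‖x‖ ≤ 1 then g x else 0
  have hcross : ∀ x y : E, ‖x‖ ≤ 1 → 1 < ‖y‖ → ‖g x‖ ≤ L * ‖x - y‖ := by
    intro x y hx hy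
    have hc : ContinuousOn (fun s : ℝ => ‖x + s • (y - x)‖) (Icc 0 1) := by fun_prop
    have := intermediate_value_Icc (zero_le_one (α := ℝ)) hc
    obtain ⟨s, hs, hs1⟩ := this (show (1 : ℝ) ∈ _ from ⟨by simpa using hx, by simpa using hy.le⟩)
    simp only at hs1
    have h1 := hlip (x + s • (y - x)) (by simp [B, hs1]) x (by simpa [B] using hx)
    rw [hgS _ hs1, sub_zero] at h1
    refine h1.trans ?_
    have : x - (x + s • (y - x)) = s • (x - y) := by rw [smul_sub, smul_sub]; abel
    rw [this, norm_smul, Real.norm_eq_abs, abs_of_nonneg hs.1]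
    have : s * ‖x - y‖ ≤ 1 * ‖x - y‖ := by gcongr; exact hs.2
    have hL0 : 0 ≤ L := by linarith
    nlinarith
  have helip : ∀ x y : E, ‖e x - e y‖ ≤ L * ‖x - y‖ := by
    intro x y
    have hL0 : 0 ≤ L := by linarith
    by_cases hx : ‖x‖ ≤ 1 <;> by_cases hy : ‖y‖ ≤ 1
    · simp only [e, hx, hy, if_true]
      exact hlip y (by simpa [B] using hy) x (by simpa [B] using hx)
    · simp only [e, hx, hy, if_true, if_false, sub_zero]
      exact hcross x y hx (not_le.1 hy)
    · simp only [e, hx, hy, if_true, if_false, zero_sub, norm_neg]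
      rw [norm_sub_rev x y]
      exact hcross y x hy (not_le.1 hx)
    · simp only [e, hx, hy, if_false, sub_zero, norm_zero]
      positivity
  -- for small `t` the map `x ↦ x + t g x` is a bijection of the open ball
  have hbij : ∀ t : ℝ, 0 < t → t * L < 1 →
      InjOn (fun x => x + t • g x) O ∧ (fun x => x + t • g x) '' O = O := by
    intro t ht htL
    have ht1 : t < 1 := by nlinarith
    refine ⟨?_, ?_⟩
    · intro x hx y hy hxy
      simp only at hxy
      have h1 : x - y = t • (g y - g x) := by
        rw [smul_sub, sub_eq_sub_iff_add_eq_add, hxy]; abel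
      have h2 := hlip x (hOB hx) y (hOB hy)
      have h3 : ‖x - y‖ ≤ (t * L) * ‖x - y‖ := by
        calc ‖x - y‖ = t * ‖g y - g x‖ := by
              rw [h1, norm_smul, Real.norm_eq_abs, abs_of_pos ht]
          _ ≤ t * (L * ‖y - x‖) := by gcongr
          _ = _ := by rw [norm_sub_rev]; ring
      have h4 : ‖x - y‖ = 0 := by
        have := norm_nonneg (x - y)
        nlinarith
      exact sub_eq_zero.1 (norm_eq_zero.1 h4)
    · apply Subset.antisymm
      · rintro _ ⟨x, hx, rfl⟩
        have hx1 : ‖x‖ < 1 := by simpa [O] using hx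
        have : x + t • g x = (1 - t) • x + t • r x := by
          simp only [g, smul_sub, sub_smul, one_smul]; abel
        simp only [O, Metric.mem_ball, dist_zero_right, this]
        calc ‖(1 - t) • x + t • r x‖ ≤ (1 - t) * ‖x‖ + t * ‖r x‖ := by
              refine (norm_add_le _ _).trans ?_
              rw [norm_smul, norm_smul, Real.norm_eq_abs, Real.norm_eq_abs, abs_of_pos ht,
                abs_of_pos (by linarith)]
          _ < 1 := by rw [hr1 x hx1.le]; nlinarith
      · intro y hy
        have hy1 : ‖y‖ < 1 := by simpa [O] using hy
        have hcon : ContractingWith ⟨t * L, by positivity⟩ (fun x => y - t • e x) := by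
          refine ⟨by exact_mod_cast htL, LipschitzWith.of_dist_le_mul fun a b => ?_⟩
          rw [dist_eq_norm, dist_eq_norm]
          have : y - t • e a - (y - t • e b) = t • (e b - e a) := by rw [smul_sub]; abel
          rw [this, norm_smul, Real.norm_eq_abs, abs_of_pos ht]
          change _ ≤ t * L * _
          have := helip b a
          rw [norm_sub_rev b a] at this
          nlinarith
        have hfix := hcon.fixedPoint_isFixedPt
        set x := ContractingWith.fixedPoint _ hcon
        have hx : y - t • e x = x := hfix
        have hxlt : ‖x‖ < 1 := by
          by_contra hge
          push Not at hge
          have he0 : e x = 0 := by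
            rcases hge.eq_or_lt with h | h
            · simp [e, h.symm, hgS x h.symm]
            · simp [e, not_le.2 h]
          rw [he0, smul_zero, sub_zero] at hx
          rw [hx] at hy1
          linarith
        refine ⟨x, by simpa [O] using hxlt, ?_⟩
        have : e x = g x := by simp [e, hxlt.le]
        simp only
        rw [← this, ← hx]
        rw [hx]
        nth_rewrite 1 [← hx]
        abel
  have hOm : MeasurableSet O := Metric.isOpen_ball.measurableSet
  have hOfin : μ O ≠ ⊤ := (Metric.isBounded_ball.measure_lt_top).ne
  have hvol : ∀ t : ℝ, 0 < t → t * L < 1 →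
      ∫ x in O, (1 + t • fderiv ℝ g x).det ∂μ = μ.real O := by
    intro t ht htL
    obtain ⟨hinj, himg⟩ := hbij t ht htL
    have hder : ∀ x ∈ O, HasFDerivWithinAt (fun x => x + t • g x) (1 + t • fderiv ℝ g x) O x := by
      intro x hx
      exact ((hasFDerivAt_id x).add ((hgd x (hOB hx)).hasFDerivAt.const_smul t)).hasFDerivWithinAt
    have h := integral_image_eq_integral_abs_det_fderiv_smul μ hOm hder hinj (fun _ => (1 : ℝ))
    rw [himg] at h
    simp only [smul_eq_mul, mul_one, integral_const, measureReal_restrict_apply_univ] at h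
    rw [h]
    refine setIntegral_congr_fun hOm fun x hx => ?_
    rw [abs_of_pos]
    apply det_one_add_pos
    rw [norm_smul, Real.norm_eq_abs, abs_of_pos ht]
    have := hL x (hOB hx)
    nlinarith
  -- interpolation nodes in `(0, 1/L)`
  let n := Module.finrank ℝ E
  let v : Fin (n + 1) → ℝ := fun i => 1 / (L * ((i : ℝ) + 2))
  have hLpos : 0 < L := by linarith
  have hvinj : Function.Injective v := by
    intro i j hij
    have hi : (0 : ℝ) < L * ((i : ℝ) + 2) := by positivity
    have hj : (0 : ℝ) < L * ((j : ℝ) + 2) := by positivity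
    simp only [v] at hij
    rw [one_div, one_div, inv_inj] at hij
    have := mul_left_cancel₀ hLpos.ne' hij
    apply Fin.ext
    exact_mod_cast add_right_cancel this
  have hv0 : ∀ i, 0 < v i := fun i => by simp only [v]; positivity
  have hvL : ∀ i, v i * L < 1 := fun i => by
    simp only [v]
    rw [div_mul_eq_mul_div, one_mul, div_lt_one (by positivity)]
    have : (0 : ℝ) ≤ i := by positivity
    nlinarith
  have hInt : ∀ t : ℝ, IntegrableOn (fun x => (1 + t • fderiv ℝ g x).det) O μ := by
    intro t
    have : ContinuousOn (fun x => (1 + t • fderiv ℝ g x).det) B :=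
      ContinuousLinearMap.continuous_det.comp_continuousOn
        (continuousOn_const.add (hgc.const_smul t))
    exact (this.integrableOn_compact hBc).mono_set hOB
  have hsum : ∫ x in O, (1 + fderiv ℝ g x).det ∂μ = μ.real O := by
    have h1 : ∀ x, (1 + fderiv ℝ g x).det = ∑ i, (1 + v i • fderiv ℝ g x).det *
        (Lagrange.basis Finset.univ v i).eval 1 := fun x =>
      det_one_add_eq_sum_lagrange v hvinj _
    simp_rw [h1]
    rw [integral_finsetSum _ (fun i _ => (hInt (v i)).mul_const _)]
    have h2 : ∀ i, ∫ x in O, (1 + v i • fderiv ℝ g x).det *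
        (Lagrange.basis Finset.univ v i).eval 1 ∂μ
        = μ.real O * (Lagrange.basis Finset.univ v i).eval 1 := by
      intro i
      rw [integral_mul_const, hvol (v i) (hv0 i) (hvL i)]
    simp_rw [h2]
    rw [← Finset.mul_sum, ← Polynomial.eval_finsetSum,
      Lagrange.sum_basis hvinj.injOn Finset.univ_nonempty]
    simp
  -- but `1 + fderiv g = fderiv r` is singular on the open ball, as `r` takes values in the sphere
  have hzero : ∫ x in O, (1 + fderiv ℝ g x).det ∂μ = 0 := by
    rw [← integral_zero E ℝ (μ := μ.restrict O)]
    refine setIntegral_congr_fun hOm fun x hx => ?_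
    have hxB := hOB hx
    rw [hgf x hxB, add_sub_cancel]
    by_contra hdet
    have hconst : (fun y => ‖r y‖ ^ 2) =ᶠ[nhds x] fun _ => (1 : ℝ) := by
      filter_upwards [Metric.isOpen_ball.mem_nhds hx] with y hy
      rw [hr1 y (hB1 y (hOB hy)), one_pow]
    have hd1 : HasFDerivAt (fun y => ‖r y‖ ^ 2) (0 : E →L[ℝ] ℝ) x :=
      (hasFDerivAt_const (1 : ℝ) x).congr_of_eventuallyEq hconst
    have hd2 := (hrd x hxB).hasFDerivAt.norm_sq
    have heq := hd2.unique hd1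
    have hunit : IsUnit (LinearMap.det ((fderiv ℝ r x : E →L[ℝ] E) : E →ₗ[ℝ] E)) :=
      isUnit_iff_ne_zero.2 hdet
    let eqv := LinearEquiv.ofIsUnitDet (v := Module.finBasis ℝ E) (v' := Module.finBasis ℝ E)
      (f := ((fderiv ℝ r x : E →L[ℝ] E) : E →ₗ[ℝ] E))
      (by rw [LinearMap.det_toMatrix]; exact hunit)
    have hw : fderiv ℝ r x (eqv.symm (r x)) = r x := eqv.apply_symm_apply (r x)
    have h3 := congrArg (fun T : E →L[ℝ] ℝ => T (eqv.symm (r x))) heq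
    simp [hw] at h3
    have h4 := hr1 x (hB1 x hxB)
    rw [h3, norm_zero] at h4
    exact zero_ne_one h4
  rw [hzero] at hsum
  have hpos : 0 < μ.real O := by
    rw [measureReal_def]
    exact ENNReal.toReal_pos (Metric.measure_ball_pos μ 0 one_pos).ne' hOfin
  linarith

/-- If `P` had no fixed point, following the ray from `P x` through `x` up to the unit sphere
would give a `C¹` retraction of the ball. -/
theorem brouwer_smooth {E : Type*} [NormedAddCommGroup E] [InnerProductSpace ℝ E]
    [FiniteDimensional ℝ E] (P : E → E) (hP : ContDiff ℝ 1 P) (hP1 : ∀ x, ‖P x‖ ≤ 1) :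
    ∃ x, P x = x := by
  by_contra hne
  push Not at hne
  let u : E → E := fun x => x - P x
  have hu0 : ∀ x, 0 < ‖u x‖ ^ 2 := fun x => by
    have : u x ≠ 0 := fun h => hne x (sub_eq_zero.1 h).symm
    positivity
  have hu : ContDiff ℝ 1 u := contDiff_id.sub hP
  let d : E → ℝ := fun x => (inner ℝ x (u x)) ^ 2 + ‖u x‖ ^ 2 * (1 - ‖x‖ ^ 2)
  have hd : ContDiff ℝ 1 d := by
    have h1 : ContDiff ℝ 1 fun x => inner ℝ x (u x) := contDiff_id.inner ℝ hu
    have h2 : ContDiff ℝ 1 fun x => ‖u x‖ ^ 2 := hu.norm_sq ℝ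
    have h3 : ContDiff ℝ 1 fun x : E => ‖x‖ ^ 2 := contDiff_id.norm_sq ℝ
    exact (h1.pow 2).add (h2.mul (contDiff_const.sub h3))
  have hin : ∀ x, ‖x‖ = 1 → 0 < inner ℝ x (u x) := by
    intro x hx
    have h1 : inner ℝ x (u x) = 1 - inner ℝ x (P x) := by
      simp only [u, inner_sub_right, real_inner_self_eq_norm_sq, hx]; norm_num
    have h2 : ‖u x‖ ^ 2 = 1 - 2 * inner ℝ x (P x) + ‖P x‖ ^ 2 := by
      simp only [u]; rw [norm_sub_sq_real, hx]; norm_num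
    have h3 := hu0 x
    have h4 : ‖P x‖ ^ 2 ≤ 1 := pow_le_one₀ (norm_nonneg _) (hP1 x)
    rw [h1]; linarith
  have hd0 : ∀ x, ‖x‖ ≤ 1 → 0 < d x := by
    intro x hx
    rcases hx.eq_or_lt with h | h
    · have := hin x h
      simp only [d, h]
      nlinarith
    · have h1 : 0 < 1 - ‖x‖ ^ 2 := by nlinarith [norm_nonneg x]
      have := mul_pos (hu0 x) h1
      simp only [d]
      nlinarith [sq_nonneg (inner ℝ x (u x))]
  -- larger root of the quadratic equation `‖x + s u‖ ^ 2 = 1`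
  let s : E → ℝ := fun x => (-(inner ℝ x (u x)) + Real.sqrt (d x)) / ‖u x‖ ^ 2
  refine no_C1_retraction (fun x => x + s x • u x) {x | 0 < d x}
    (isOpen_lt continuous_const hd.continuous) (fun x hx => hd0 x (by simpa using hx)) ?_ ?_ ?_
  · have h1 : ContDiff ℝ 1 fun x => inner ℝ x (u x) := contDiff_id.inner ℝ hu
    have h2 : ContDiff ℝ 1 fun x => ‖u x‖ ^ 2 := hu.norm_sq ℝ
    have h4 : ContDiffOn ℝ 1 (fun x => Real.sqrt (d x)) {x | 0 < d x} :=
      hd.contDiffOn.sqrt fun x hx => ne_of_gt hx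
    have h5 : ContDiffOn ℝ 1 s {x | 0 < d x} :=
      (h1.neg.contDiffOn.add h4).div h2.contDiffOn fun x _ => (hu0 x).ne'
    exact contDiffOn_id.add (h5.smul hu.contDiffOn)
  · intro x hx
    have h1 : ‖x + s x • u x‖ ^ 2 = 1 := by
      rw [norm_add_sq_real, inner_smul_right, norm_smul, mul_pow, Real.norm_eq_abs, sq_abs]
      have hs : s x * ‖u x‖ ^ 2 = -(inner ℝ x (u x)) + Real.sqrt (d x) :=
        div_mul_cancel₀ _ (hu0 x).ne'
      have hsq := Real.sq_sqrt (hd0 x hx).le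
      have hdx : d x = (inner ℝ x (u x)) ^ 2 + ‖u x‖ ^ 2 * (1 - ‖x‖ ^ 2) := rfl
      apply mul_right_cancel₀ (hu0 x).ne'
      set q := Real.sqrt (d x)
      have : q = s x * ‖u x‖ ^ 2 + inner ℝ x (u x) := by linarith
      rw [this] at hsq
      rw [hdx] at hsq
      linear_combination hsq
    exact (pow_eq_one_iff_of_nonneg (norm_nonneg _) two_ne_zero).1 h1
  · intro x hx
    have h1 : s x = 0 := by
      have : d x = (inner ℝ x (u x)) ^ 2 := by simp [d, hx]
      simp only [s, this, Real.sqrt_sq (hin x hx).le]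
      simp
    simp [h1]

/-- Brouwer's fixed point theorem, for a map of the whole space into the closed unit ball. -/
theorem brouwer {E : Type*} [NormedAddCommGroup E] [InnerProductSpace ℝ E]
    [FiniteDimensional ℝ E] (F : E → E) (hF : Continuous F) (hF1 : ∀ x, ‖F x‖ ≤ 1) :
    ∃ x, F x = x := by
  by_contra hne
  push Not at hne
  obtain ⟨x0, -, hmin⟩ := (isCompact_closedBall (0 : E) 1).exists_isMinOn ⟨0, by simp⟩
    (f := fun x => ‖F x - x‖) (by fun_prop)
  let δ := ‖F x0 - x0‖ / 4
  have hδ : 0 < δ := by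
    have : 0 < ‖F x0 - x0‖ := norm_pos_iff.2 (sub_ne_zero.2 (hne x0))
    positivity
  obtain ⟨g, hg, hgF, -⟩ := hF.exists_contDiff_approx 1 (ε := fun _ => δ) continuous_const
    (fun _ => hδ)
  have hg1 : ∀ x, ‖g x‖ ≤ 1 + δ := by
    intro x
    have h1 := hgF x
    rw [dist_eq_norm] at h1
    have h2 : ‖g x‖ ≤ ‖F x‖ + ‖g x - F x‖ := by
      simpa using norm_add_le (F x) (g x - F x)
    linarith [hF1 x]
  obtain ⟨x, hx⟩ := brouwer_smooth (fun x => (1 + δ)⁻¹ • g x) (contDiff_const.smul hg) (by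
    intro x
    rw [norm_smul, Real.norm_eq_abs, abs_of_pos (by positivity), inv_mul_le_iff₀ (by positivity)]
    simpa using hg1 x)
  have hxB : ‖x‖ ≤ 1 := by
    rw [← hx, norm_smul, Real.norm_eq_abs, abs_of_pos (by positivity),
      inv_mul_le_iff₀ (by positivity)]
    simpa using hg1 x
  have h1 : ‖F x0 - x0‖ ≤ ‖F x - x‖ := hmin (by simpa using hxB)
  have h2 := hgF x
  rw [dist_eq_norm, norm_sub_rev] at h2
  have h3 : g x = x + δ • x := by
    have : (1 + δ) • ((1 + δ)⁻¹ • g x) = (1 + δ) • x := congrArg _ hx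
    rwa [smul_inv_smul₀ (by positivity), add_smul, one_smul] at this
  have h4 : ‖F x - x‖ ≤ ‖F x - g x‖ + ‖δ • x‖ := by
    have : F x - x = (F x - g x) + δ • x := by rw [h3]; abel
    rw [this]; exact norm_add_le _ _
  rw [norm_smul, Real.norm_eq_abs, abs_of_pos hδ] at h4
  have h5 : ‖F x0 - x0‖ = 4 * δ := by simp only [δ]; ring
  nlinarith

/-! ### Schauder's fixed point theorem -/

/-- Schauder's fixed point theorem for a compact convex set, by applying Brouwer's theorem to
finite-dimensional approximations. -/
theorem schauder {E : Type*} [NormedAddCommGroup E] [NormedSpace ℝ E] (K : Set E)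
    (hK : IsCompact K) (hconv : Convex ℝ K) (hne : K.Nonempty) (F : E → E)
    (hF : ContinuousOn F K) (hmaps : MapsTo F K K) : ∃ x ∈ K, F x = x := by
  obtain ⟨x0, hx0⟩ := hne
  -- approximate fixed points
  have happrox : ∀ ε : ℝ, 0 < ε → ∃ x ∈ K, ‖F x - x‖ ≤ ε := by
    intro ε hε
    obtain ⟨T, hTK, hTcov⟩ := hK.elim_finite_subcover_image (b := K)
      (c := fun y => Metric.ball y ε) (fun _ _ => Metric.isOpen_ball)
      (fun y hy => mem_biUnion hy (Metric.mem_ball_self hε))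
    obtain ⟨hTfin, hTcov⟩ := hTcov
    have : Fintype T := hTfin.fintype
    -- weights of the Schauder projection
    let w : T → E → ℝ := fun i y => max 0 (ε - ‖y - i‖)
    let W : E → ℝ := fun y => ∑ i, w i y
    have hw0 : ∀ i y, 0 ≤ w i y := fun i y => le_max_left _ _
    have hWpos : ∀ y ∈ K, 0 < W y := by
      intro y hy
      obtain ⟨i, hiT, hi⟩ := mem_iUnion₂.1 (hTcov hy)
      refine Finset.sum_pos' (fun i _ => hw0 i y) ⟨⟨i, hiT⟩, Finset.mem_univ _, ?_⟩
      rw [Metric.mem_ball, dist_eq_norm] at hi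
      exact lt_max_of_lt_right (by simpa using hi)
    have hwc : ∀ i, Continuous (w i) := fun i => by simp only [w]; fun_prop
    have hWc : Continuous W := continuous_finsetSum _ fun i _ => hwc i
    -- coefficients attached to an arbitrary vector
    let ρ : EuclideanSpace ℝ T → T → ℝ := fun a i => max 0 (a i) / max 1 (∑ j, max 0 (a j))
    have hden : ∀ a : EuclideanSpace ℝ T, 0 < max 1 (∑ j, max 0 (a j)) := fun a => lt_max_of_lt_left one_pos
    have hρ0 : ∀ a i, 0 ≤ ρ a i := fun a i => div_nonneg (le_max_left _ _) (hden a).le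
    have hρ1 : ∀ a, ∑ i, ρ a i ≤ 1 := fun a => by
      simp only [ρ]
      rw [← Finset.sum_div, div_le_one (hden a)]
      exact le_max_right _ _
    have hρc : ∀ i, Continuous fun a => ρ a i := fun i => by
      refine Continuous.div ?_ ?_ fun a => (hden a).ne'
      · fun_prop
      · exact continuous_const.max (continuous_finsetSum _ fun j _ => by fun_prop)
    let y : EuclideanSpace ℝ T → E := fun a => (1 - ∑ i, ρ a i) • x0 + ∑ i, ρ a i • (i : E)
    have hyK : ∀ a, y a ∈ K := by
      intro a
      have := hconv.sum_mem (t := (Finset.univ : Finset (Option T)))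
        (w := fun o => o.elim (1 - ∑ i, ρ a i) (ρ a)) (z := fun o => o.elim x0 (fun i => (i : E)))
        (by
          rintro (_ | i) -
          · simpa using hρ1 a
          · exact hρ0 a i)
        (by rw [Fintype.sum_option]; simp)
        (by
          rintro (_ | i) -
          · exact hx0
          · exact hTK i.2)
      rwa [Fintype.sum_option] at this
    have hyc : Continuous y := by
      refine ((continuous_const.sub (continuous_finsetSum _ fun i _ => hρc i)).smul
        continuous_const).add (continuous_finsetSum _ fun i _ => (hρc i).smul continuous_const)
    have hFy : Continuous fun a => F (y a) := hF.comp_continuous hyc hyK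
    let Φ : EuclideanSpace ℝ T → EuclideanSpace ℝ T := fun a => WithLp.toLp 2 fun i => w i (F (y a)) / W (F (y a))
    have hΦc : Continuous Φ := by
      refine (PiLp.continuous_toLp 2 _).comp (continuous_pi fun i => ?_)
      exact ((hwc i).comp hFy).div (hWc.comp hFy) fun a => (hWpos _ (hmaps (hyK a))).ne'
    have hΦ0 : ∀ a i, 0 ≤ Φ a i := fun a i =>
      div_nonneg (hw0 _ _) (hWpos _ (hmaps (hyK a))).le
    have hΦ1 : ∀ a, ∑ i, Φ a i = 1 := fun a => by
      change ∑ i, w i (F (y a)) / W (F (y a)) = 1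
      rw [← Finset.sum_div]
      exact div_self (hWpos _ (hmaps (hyK a))).ne'
    obtain ⟨a, ha⟩ := brouwer Φ hΦc (by
      intro a
      rw [EuclideanSpace.norm_eq]
      refine Real.sqrt_le_one.2 ?_
      rw [← hΦ1 a]
      refine Finset.sum_le_sum fun i _ => ?_
      rw [Real.norm_eq_abs, sq_abs]
      have h1 : Φ a i ≤ 1 := by
        rw [← hΦ1 a]
        exact Finset.single_le_sum (fun j _ => hΦ0 a j) (Finset.mem_univ i)
      nlinarith [hΦ0 a i])
    have ha0 : ∀ i, 0 ≤ a i := fun i => by rw [← ha]; exact hΦ0 a i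
    have ha1 : ∑ i, a i = 1 := by
      have := hΦ1 a
      rwa [ha] at this
    have hρa : ∀ i, ρ a i = a i := by
      intro i
      simp only [ρ, max_eq_right (ha0 _), ha1, max_self, div_one]
    refine ⟨y a, hyK a, ?_⟩
    set b := F (y a) with hb
    have hWb := hWpos b (hmaps (hyK a))
    have hya : y a = ∑ i, a i • (i : E) := by
      simp only [y, hρa, ha1, sub_self, zero_smul, zero_add]
    have hdiff : b - y a = ∑ i, a i • (b - i) := by
      simp_rw [smul_sub]
      rw [Finset.sum_sub_distrib, ← Finset.sum_smul, ha1, one_smul, hya]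
    rw [hdiff]
    calc ‖∑ i, a i • (b - (i : E))‖ ≤ ∑ i, ‖a i • (b - (i : E))‖ := norm_sum_le _ _
      _ ≤ ∑ i, a i * ε := by
        refine Finset.sum_le_sum fun i _ => ?_
        rw [norm_smul, Real.norm_eq_abs, abs_of_nonneg (ha0 i)]
        by_cases h : ‖b - i‖ ≤ ε
        · exact mul_le_mul_of_nonneg_left h (ha0 i)
        · have : a i = 0 := by
            rw [← ha]
            change w i b / W b = 0
            have : w i b = 0 := max_eq_left (by push Not at h; linarith)
            rw [this, zero_div]
          rw [this, zero_mul, zero_mul]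
      _ = ε := by rw [← Finset.sum_mul, ha1, one_mul]
  obtain ⟨x, hx, hmin⟩ := hK.exists_isMinOn ⟨x0, hx0⟩ (f := fun x => ‖F x - x‖)
    (hF.sub continuousOn_id).norm
  refine ⟨x, hx, ?_⟩
  by_contra hne
  have hpos : 0 < ‖F x - x‖ := norm_pos_iff.2 (sub_ne_zero.2 hne)
  obtain ⟨x', hx', h'⟩ := happrox (‖F x - x‖ / 2) (by positivity)
  have : ‖F x - x‖ ≤ ‖F x' - x'‖ := hmin hx'
  linarith

/-! ### Solutions of the delay equation and half-waves -/

/-- `x` solves `x'(t) = h (x (t - 1))` for `t ≥ 0`, in integrated form, with history `φ` on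
`(-∞, 0]`. -/
structure IsSol (h φ x : ℝ → ℝ) : Prop where
  cont : Continuous x
  hist : ∀ t ≤ 0, x t = φ t
  eqn : ∀ t, 0 ≤ t → x t = φ 0 + ∫ s in (0 : ℝ)..t, h (x (s - 1))

/-- Method of steps: the `n`-th iterate of the integral operator is exact on `(-∞, n]`. -/
theorem exists_isSol (h φ : ℝ → ℝ) (hh : Continuous h) (hφ : Continuous φ) :
    ∃ x, IsSol h φ x := by
  let y : ℕ → ℝ → ℝ := fun n => Nat.rec φ
    (fun _ u t => φ (min t 0) + ∫ s in (0 : ℝ)..max t 0, h (u (s - 1))) n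
  have hy0 : y 0 = φ := rfl
  have hys : ∀ n t, y (n + 1) t = φ (min t 0) + ∫ s in (0 : ℝ)..max t 0, h (y n (s - 1)) :=
    fun n t => rfl
  have hyc : ∀ n, Continuous (y n) := by
    intro n
    induction n with
    | zero => exact hφ
    | succ n ih =>
      have h1 : Continuous fun s => h (y n (s - 1)) := by fun_prop
      have h2 : Continuous fun t : ℝ => ∫ s in (0 : ℝ)..t, h (y n (s - 1)) :=
        intervalIntegral.continuous_primitive (fun a b => h1.intervalIntegrable a b) 0
      have h3 : Continuous fun t : ℝ => ∫ s in (0 : ℝ)..max t 0, h (y n (s - 1)) :=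
        h2.comp (by fun_prop : Continuous fun t : ℝ => max t 0)
      exact (by fun_prop : Continuous fun t => φ (min t 0)).add h3
  have hstep : ∀ n : ℕ, ∀ t : ℝ, t ≤ n → y (n + 1) t = y n t := by
    intro n
    induction n with
    | zero =>
      intro t ht
      have ht' : t ≤ 0 := by simpa using ht
      rw [hys, max_eq_right ht', min_eq_left ht', intervalIntegral.integral_same, add_zero, hy0]
    | succ n ih =>
      intro t ht
      push_cast at ht
      rw [hys (n + 1) t, hys n t]
      congr 1
      refine intervalIntegral.integral_congr fun s hs => ?_
      rw [uIcc_of_le (le_max_right t 0)] at hs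
      have hn : (0 : ℝ) ≤ n := by positivity
      have : s ≤ n + 1 := hs.2.trans (max_le ht (by linarith))
      rw [ih (s - 1) (by linarith)]
  have hmono : ∀ n m : ℕ, n ≤ m → ∀ t : ℝ, t ≤ n → y m t = y n t := by
    intro n m hnm
    induction m, hnm using Nat.le_induction with
    | base => intro t _; rfl
    | succ m hm ih =>
      intro t ht
      rw [hstep m t (ht.trans (by exact_mod_cast hm)), ih t ht]
  let x : ℝ → ℝ := fun t => y ⌈t⌉₊ t
  have hx : ∀ n : ℕ, ∀ t : ℝ, t ≤ n → x t = y n t := fun n t ht =>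
    (hmono ⌈t⌉₊ n (Nat.ceil_le.2 ht) t (Nat.le_ceil t)).symm
  refine ⟨x, ?_, ?_, ?_⟩
  · rw [continuous_iff_continuousAt]
    intro t
    have hlt : t < ((⌈t⌉₊ + 1 : ℕ) : ℝ) := by
      push_cast; linarith [Nat.le_ceil t]
    refine (hyc (⌈t⌉₊ + 1)).continuousAt.congr ?_
    filter_upwards [Iio_mem_nhds hlt] with s hs
    exact (hx _ s (le_of_lt hs)).symm
  · intro t ht
    rw [hx 0 t (by simpa using ht), hy0]
  · intro t ht
    rw [hx (⌈t⌉₊ + 1) t (by push_cast; linarith [Nat.le_ceil t]), hys, max_eq_left ht,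
      min_eq_right ht]
    congr 1
    refine intervalIntegral.integral_congr fun s hs => ?_
    rw [uIcc_of_le ht] at hs
    rw [hx ⌈t⌉₊ (s - 1) (by linarith [Nat.le_ceil t, hs.2])]

theorem sol_unique (h u v : ℝ → ℝ) (A : ℝ)
    (hu : ∀ t, 0 ≤ t → t ≤ A → u t = u 0 + ∫ s in (0 : ℝ)..t, h (u (s - 1)))
    (hv : ∀ t, 0 ≤ t → t ≤ A → v t = v 0 + ∫ s in (0 : ℝ)..t, h (v (s - 1)))
    (h0 : ∀ t, -1 ≤ t → t ≤ 0 → u t = v t) : ∀ t, -1 ≤ t → t ≤ A → u t = v t := by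
  have key : ∀ n : ℕ, ∀ t : ℝ, -1 ≤ t → t ≤ A → t ≤ n → u t = v t := by
    intro n
    induction n with
    | zero => intro t ht1 _ ht; exact h0 t ht1 (by simpa using ht)
    | succ n ih =>
      intro t ht1 htA htn
      push_cast at htn
      rcases le_total t 0 with h | h
      · exact h0 t ht1 h
      · rw [hu t h htA, hv t h htA, h0 0 (by norm_num) le_rfl]
        congr 1
        refine intervalIntegral.integral_congr fun s hs => ?_
        rw [uIcc_of_le h] at hs
        rw [ih (s - 1) (by linarith [hs.1]) (by linarith [hs.2]) (by linarith [hs.2])]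
  intro t ht1 htA
  exact key ⌈t⌉₊ t ht1 htA (Nat.le_ceil t)

namespace IsSol
variable {h φ x : ℝ → ℝ}

theorem sub_eq (hx : IsSol h φ x) (hh : Continuous h) {s t : ℝ} (hs : 0 ≤ s) (ht : 0 ≤ t) :
    x t - x s = ∫ u in s..t, h (x (u - 1)) := by
  have hc : Continuous fun u => h (x (u - 1)) := by have := hx.cont; fun_prop
  rw [hx.eqn t ht, hx.eqn s hs, add_sub_add_left_eq_sub,
    intervalIntegral.integral_interval_sub_left (hc.intervalIntegrable _ _)
      (hc.intervalIntegrable _ _)]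

theorem hasDerivAt (hx : IsSol h φ x) (hh : Continuous h) {t : ℝ} (ht : 0 < t) :
    HasDerivAt x (h (x (t - 1))) t := by
  have hc : Continuous fun u => h (x (u - 1)) := by have := hx.cont; fun_prop
  have h1 : HasDerivAt (fun t => ∫ s in (0 : ℝ)..t, h (x (s - 1))) (h (x (t - 1))) t :=
    intervalIntegral.integral_hasDerivAt_right (hc.intervalIntegrable _ _)
      (hc.stronglyMeasurableAtFilter _ _) hc.continuousAt
  refine (h1.const_add (φ 0)).congr_of_eventuallyEq ?_
  filter_upwards [Ioi_mem_nhds ht] with s hs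
  exact hx.eqn s (le_of_lt hs)

end IsSol

/-- One-sided feedback profile: the restriction of `∓f` to a half line, cut off to be bounded and
uniformly continuous and set to `0` on the other half line.  The bound `min (c u) m ≤ g u` with
`c > 1` encodes positivity together with steepness at `0`. -/
structure Feedback (g : ℝ → ℝ) (C c m : ℝ) : Prop where
  uc : UniformContinuous g
  zero : ∀ u ≤ 0, g u = 0
  low : ∀ u, 0 ≤ u → min (c * u) m ≤ g u
  up : ∀ u, g u ≤ C
  hc : 1 < c
  hm : 0 < m

/-- Admissible history: the cone of continuous nondecreasing functions on `[-1, 0]` vanishing at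
`-1`, extended by constants to `ℝ`, without its apex. -/
structure Adm (φ : ℝ → ℝ) : Prop where
  cont : Continuous φ
  mono : Monotone φ
  left : ∀ t ≤ -1, φ t = 0
  right : ∀ t, 0 ≤ t → φ t = φ 0
  pos : 0 < φ 0

theorem Adm.nonneg {φ : ℝ → ℝ} (h : Adm φ) (t : ℝ) : 0 ≤ φ t := by
  rcases le_total t (-1) with h1 | h1
  · exact (h.left t h1).ge
  · rw [← h.left (-1) le_rfl]; exact h.mono h1

theorem Adm.le_zero {φ : ℝ → ℝ} (h : Adm φ) (t : ℝ) : φ t ≤ φ 0 := by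
  rcases le_total t 0 with h1 | h1
  · exact h.mono h1
  · exact (h.right t h1).le

section Half
variable {g φ x : ℝ → ℝ} {C c m : ℝ}

theorem Feedback.pos (hg : Feedback g C c m) {u : ℝ} (hu : 0 < u) : 0 < g u :=
  lt_of_lt_of_le (lt_min (mul_pos (by linarith [hg.hc]) hu) hg.hm) (hg.low u hu.le)

theorem Feedback.nonneg (hg : Feedback g C c m) (u : ℝ) : 0 ≤ g u := by
  rcases le_or_gt u 0 with h | h
  · exact (hg.zero u h).ge
  · exact (hg.pos h).le

theorem Feedback.C_pos (hg : Feedback g C c m) : 0 < C := (hg.pos one_pos).trans_le (hg.up 1)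

theorem Feedback.pos_of_pos (hg : Feedback g C c m) {u : ℝ} (hu : 0 < g u) : 0 < u := by
  by_contra h
  rw [hg.zero u (not_lt.1 h)] at hu
  exact lt_irrefl _ hu

theorem half_eq (hg : Feedback g C c m) (hx : IsSol (fun u => -g u) φ x) {s t : ℝ}
    (hs : 0 ≤ s) (ht : 0 ≤ t) : x t - x s = -∫ u in s..t, g (x (u - 1)) := by
  rw [hx.sub_eq hg.uc.continuous.neg hs ht, intervalIntegral.integral_neg]

theorem half_cont (hg : Feedback g C c m) (hx : IsSol (fun u => -g u) φ x) :
    Continuous fun u => g (x (u - 1)) :=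
  hg.uc.continuous.comp (hx.cont.comp (continuous_sub_right 1))

theorem half_anti (hg : Feedback g C c m) (hx : IsSol (fun u => -g u) φ x) {s t : ℝ}
    (hs : 0 ≤ s) (hst : s ≤ t) : x t ≤ x s := by
  have h1 := half_eq hg hx hs (hs.trans hst)
  have h2 : 0 ≤ ∫ u in s..t, g (x (u - 1)) :=
    intervalIntegral.integral_nonneg hst fun u _ => hg.nonneg _
  linarith

theorem half_lip (hg : Feedback g C c m) (hx : IsSol (fun u => -g u) φ x) {s t : ℝ}
    (hs : 0 ≤ s) (hst : s ≤ t) : x s - x t ≤ C * (t - s) := by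
  have h1 := half_eq hg hx hs (hs.trans hst)
  have h2 : ∫ u in s..t, g (x (u - 1)) ≤ ∫ u in s..t, C :=
    intervalIntegral.integral_mono_on hst ((half_cont hg hx).intervalIntegrable _ _)
      (by simp) fun u _ => hg.up _
  rw [intervalIntegral.integral_const, smul_eq_mul] at h2
  linarith

/-- Lower bound on the drop over `[s, t]` when the delayed values are at least `b`. -/
theorem half_drop (hg : Feedback g C c m) (hx : IsSol (fun u => -g u) φ x) {s t b : ℝ}
    (hs : 0 ≤ s) (hst : s ≤ t) (hb : 0 ≤ b) (h : ∀ u ∈ Icc s t, b ≤ x (u - 1)) :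
    (t - s) * min (c * b) m ≤ x s - x t := by
  have h1 := half_eq hg hx hs (hs.trans hst)
  have h2 : ∫ u in s..t, min (c * b) m ≤ ∫ u in s..t, g (x (u - 1)) := by
    refine intervalIntegral.integral_mono_on hst (by simp)
      ((half_cont hg hx).intervalIntegrable _ _) fun u hu => ?_
    refine le_trans (min_le_min_right m ?_) (hg.low _ (hb.trans (h u hu)))
    exact mul_le_mul_of_nonneg_left (h u hu) (by linarith [hg.hc])
  rw [intervalIntegral.integral_const, smul_eq_mul] at h2
  linarith

/-- Solutions cannot stay positive: as `c > 1`, each positive unit step loses at least `m`. -/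
theorem half_exists_nonpos (hg : Feedback g C c m)
    (hx : IsSol (fun u => -g u) φ x) : ∃ t, 0 ≤ t ∧ x t ≤ 0 := by
  by_contra hcon
  push Not at hcon
  have hstep : ∀ n : ℕ, x (1 + (n : ℝ)) ≤ x 1 - n * m := by
    intro n
    induction n with
    | zero => simp
    | succ n ih =>
      have hn : (0 : ℝ) ≤ n := by positivity
      have hpos := hcon (1 + (n : ℝ)) (by linarith)
      have hd := half_drop hg hx (s := 1 + n) (t := 1 + n + 1) (b := x (1 + n)) (by linarith)
        (by linarith) hpos.le (fun u hu => half_anti hg hx (by linarith [hu.1]) (by linarith [hu.2]))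
      have hpos2 := hcon (1 + (n : ℝ) + 1) (by linarith)
      push_cast
      rw [← add_assoc]
      rcases min_cases (c * x (1 + n)) m with ⟨h1, h2⟩ | ⟨h1, h2⟩
      · rw [h1] at hd
        nlinarith [hg.hc]
      · rw [h1] at hd
        linarith
  obtain ⟨n, hn⟩ := exists_nat_gt (x 1 / m)
  rw [div_lt_iff₀ hg.hm] at hn
  have := hcon (1 + (n : ℝ)) (by positivity)
  linarith [hstep n]

/-- `z` is the only zero of `x` on `[0, ∞)`, and `x` changes sign there from positive to negative.
Positivity on all of `[z - 1, z)`, which may reach into the history, is part of the notion. -/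
structure IsZero (x : ℝ → ℝ) (z : ℝ) : Prop where
  pos : 0 < z
  zero : x z = 0
  before : ∀ t, 0 ≤ t → t < z → 0 < x t
  window : ∀ t, z - 1 ≤ t → t < z → 0 < x t
  after : ∀ t, z < t → x t < 0

theorem half_exists_zero (hg : Feedback g C c m) (hφ : Adm φ)
    (hx : IsSol (fun u => -g u) φ x) : ∃ z, IsZero x z := by
  obtain ⟨t0, ht0, hxt0⟩ := half_exists_nonpos hg hx
  have hx0 : x 0 = φ 0 := hx.hist 0 le_rfl
  let S : Set ℝ := {t | 0 ≤ t ∧ x t ≤ 0}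
  have hSc : IsClosed S := isClosed_Ici.inter (isClosed_le hx.cont continuous_const)
  have hSne : S.Nonempty := ⟨t0, ht0, hxt0⟩
  have hSb : BddBelow S := ⟨0, fun t ht => ht.1⟩
  let z := sInf S
  have hzS : z ∈ S := hSc.csInf_mem hSne hSb
  have hbefore : ∀ t, 0 ≤ t → t < z → 0 < x t := by
    intro t h0 h1
    by_contra h
    exact absurd (csInf_le hSb (show t ∈ S from ⟨h0, not_lt.1 h⟩)) (not_le.2 h1)
  have hzpos : 0 < z := by
    rcases hzS.1.eq_or_lt with h | h
    · have := hzS.2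
      rw [← h, hx0] at this
      linarith [hφ.pos]
    · exact h
  have hz0 : x z = 0 := by
    refine le_antisymm hzS.2 ?_
    have hcl : z ∈ closure (Ico 0 z) := by
      rw [closure_Ico hzpos.ne]; exact ⟨hzpos.le, le_rfl⟩
    exact closure_minimal (t := {t | 0 ≤ x t}) (fun t ht => (hbefore t ht.1 ht.2).le)
      (isClosed_le continuous_const hx.cont) hcl
  have hz1 : 0 < x (z - 1) := by
    by_contra hneg
    push Not at hneg
    have hlt : z - 1 < 0 := by
      by_contra h
      exact absurd (hbefore (z - 1) (not_lt.1 h) (by linarith)) (not_lt.2 hneg)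
    have hInt : ∫ u in (0 : ℝ)..z, g (x (u - 1)) = 0 := by
      refine (intervalIntegral.integral_congr (g := fun _ => (0 : ℝ)) fun u hu => ?_).trans
        intervalIntegral.integral_zero
      rw [uIcc_of_le hzpos.le] at hu
      apply hg.zero
      rw [hx.hist (u - 1) (by linarith [hu.2])]
      rw [hx.hist (z - 1) hlt.le] at hneg
      exact (hφ.mono (by linarith [hu.2])).trans hneg
    have := half_eq hg hx le_rfl hzpos.le
    rw [hInt, hz0, hx0] at this
    linarith [hφ.pos]
  have hwin : ∀ t, z - 1 ≤ t → t < z → 0 < x t := by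
    intro t h1 h2
    rcases le_total 0 t with h | h
    · exact hbefore t h h2
    · rw [hx.hist t h]
      rw [hx.hist (z - 1) (h1.trans h)] at hz1
      exact hz1.trans_le (hφ.mono h1)
  have hafter1 : ∀ t, z < t → t ≤ z + 1 → x t < 0 := by
    intro t h1 h2
    have h3 := half_eq hg hx hzpos.le (hzpos.le.trans h1.le)
    have h4 : 0 < ∫ u in z..t, g (x (u - 1)) := by
      refine intervalIntegral.intervalIntegral_pos_of_pos_on
        ((half_cont hg hx).intervalIntegrable _ _) (fun u hu => ?_) h1
      exact hg.pos (hwin (u - 1) (by linarith [hu.1]) (by linarith [hu.2]))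
    linarith
  refine ⟨z, hzpos, hz0, hbefore, hwin, fun t ht => ?_⟩
  rcases le_total t (z + 1) with h | h
  · exact hafter1 t ht h
  · exact (half_anti hg hx (by linarith) h).trans_lt (hafter1 (z + 1) (by linarith) le_rfl)

theorem IsZero.nonneg (hφ : Adm φ) (hx : IsSol (fun u => -g u) φ x) {z : ℝ} (hz : IsZero x z)
    {t : ℝ} (ht : t ≤ z) : 0 ≤ x t := by
  rcases le_total 0 t with h | h
  · rcases ht.eq_or_lt with h1 | h1
    · rw [h1, hz.zero]
    · exact (hz.before t h h1).le
  · rw [hx.hist t h]; exact hφ.nonneg t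

/-- Since `g` vanishes on `(-∞, 0]`, the solution freezes one delay after its zero. -/
theorem half_const (hg : Feedback g C c m) (hx : IsSol (fun u => -g u) φ x) {z : ℝ}
    (hz : IsZero x z) {t : ℝ} (ht : z + 1 ≤ t) : x t = x (z + 1) := by
  have h0 := hz.pos
  have h1 := half_eq hg hx (s := z + 1) (t := t) (by linarith) (by linarith)
  have h2 : ∫ u in (z + 1)..t, g (x (u - 1)) = 0 := by
    refine (intervalIntegral.integral_congr (g := fun _ => (0 : ℝ)) fun u hu => ?_).trans
      intervalIntegral.integral_zero
    rw [uIcc_of_le ht] at hu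
    apply hg.zero
    rcases (show z ≤ u - 1 by linarith [hu.1]).eq_or_lt with h | h
    · rw [← h, hz.zero]
    · exact (hz.after _ h).le
  linarith

theorem half_le (hg : Feedback g C c m) (hφ : Adm φ) (hx : IsSol (fun u => -g u) φ x) (t : ℝ) :
    x t ≤ φ 0 := by
  rcases le_total 0 t with h | h
  · exact (half_anti hg hx le_rfl h).trans (hx.hist 0 le_rfl).le
  · rw [hx.hist t h]; exact hφ.le_zero t

end Half

/-! ### The half-return map -/

/-- The solution of `x'(t) = -g (x (t - 1))` with history `φ`. -/
noncomputable def halfSol (g φ : ℝ → ℝ) : ℝ → ℝ :=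
  Classical.epsilon fun x => IsSol (fun u => -g u) φ x

/-- The zero of `halfSol g φ`. -/
noncomputable def halfZero (g φ : ℝ → ℝ) : ℝ :=
  Classical.epsilon fun z => IsZero (halfSol g φ) z

/-- The half-return map: minus the segment of `halfSol g φ` on the unit interval that follows its
zero, extended by constants. -/
noncomputable def halfMap (g φ : ℝ → ℝ) (s : ℝ) : ℝ :=
  max 0 (-halfSol g φ (halfZero g φ + 1 + s))

section HalfMap
variable {g φ : ℝ → ℝ} {C c m : ℝ}

theorem halfSol_spec (hg : Feedback g C c m) (hφ : Adm φ) :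
    IsSol (fun u => -g u) φ (halfSol g φ) :=
  Classical.epsilon_spec (exists_isSol _ φ hg.uc.continuous.neg hφ.cont)

theorem halfZero_spec (hg : Feedback g C c m) (hφ : Adm φ) :
    IsZero (halfSol g φ) (halfZero g φ) :=
  Classical.epsilon_spec (half_exists_zero hg hφ (halfSol_spec hg hφ))

theorem halfMap_eq (hg : Feedback g C c m) (hφ : Adm φ) {s : ℝ} (hs : -1 ≤ s) :
    halfMap g φ s = -halfSol g φ (halfZero g φ + 1 + s) := by
  have hz := halfZero_spec hg hφ
  refine max_eq_right ?_
  rcases (show halfZero g φ ≤ halfZero g φ + 1 + s by linarith).eq_or_lt with h | h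
  · rw [← h, hz.zero, neg_zero]
  · linarith [hz.after _ h]

theorem halfMap_left (hg : Feedback g C c m) (hφ : Adm φ) {s : ℝ} (hs : s ≤ -1) :
    halfMap g φ s = 0 :=
  max_eq_left (by
    linarith [(halfZero_spec hg hφ).nonneg hφ (halfSol_spec hg hφ)
      (show halfZero g φ + 1 + s ≤ halfZero g φ by linarith)])

theorem halfMap_right (hg : Feedback g C c m) (hφ : Adm φ) {s : ℝ} (hs : 0 ≤ s) :
    halfMap g φ s = halfMap g φ 0 := by
  rw [halfMap_eq hg hφ (by linarith), halfMap_eq hg hφ (by linarith), add_zero,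
    half_const hg (halfSol_spec hg hφ) (halfZero_spec hg hφ) (by linarith)]

theorem halfMap_pos (hg : Feedback g C c m) (hφ : Adm φ) {s : ℝ} (hs : -1 < s) :
    0 < halfMap g φ s := by
  rw [halfMap_eq hg hφ hs.le]
  linarith [(halfZero_spec hg hφ).after _ (show halfZero g φ < halfZero g φ + 1 + s by linarith)]

theorem halfMap_adm (hg : Feedback g C c m) (hφ : Adm φ) : Adm (halfMap g φ) := by
  have hx := halfSol_spec hg hφ
  have hz := halfZero_spec hg hφ
  refine ⟨?_, ?_, fun t => halfMap_left hg hφ, fun t => halfMap_right hg hφ,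
    halfMap_pos hg hφ (by norm_num)⟩
  · have := hx.cont
    unfold halfMap
    fun_prop
  · intro r s hrs
    rcases le_total r (-1) with h | h
    · rw [halfMap_left hg hφ h]; exact le_max_left _ _
    · rw [halfMap_eq hg hφ h, halfMap_eq hg hφ (h.trans hrs)]
      have := half_anti hg hx (s := halfZero g φ + 1 + r) (t := halfZero g φ + 1 + s)
        (by linarith [hz.pos]) (by linarith)
      linarith

theorem halfMap_lip (hg : Feedback g C c m) (hφ : Adm φ) {r s : ℝ} (hrs : r ≤ s) :
    halfMap g φ s - halfMap g φ r ≤ C * (s - r) := by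
  have hx := halfSol_spec hg hφ
  have hz := halfZero_spec hg hφ
  have key : ∀ r s, -1 ≤ r → r ≤ s → halfMap g φ s - halfMap g φ r ≤ C * (s - r) := by
    intro r s h hrs
    rw [halfMap_eq hg hφ h, halfMap_eq hg hφ (h.trans hrs)]
    have := half_lip hg hx (s := halfZero g φ + 1 + r) (t := halfZero g φ + 1 + s)
      (by linarith [hz.pos]) (by linarith)
    linarith
  have hC := hg.C_pos
  rcases le_total (-1) r with h | h
  · exact key r s h hrs
  rw [halfMap_left hg hφ h]
  rcases le_total (-1) s with h' | h'
  · have := key (-1) s le_rfl h'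
    rw [halfMap_left hg hφ le_rfl] at this
    nlinarith
  · rw [halfMap_left hg hφ h']
    nlinarith

theorem halfMap_le (hg : Feedback g C c m) (hφ : Adm φ) : halfMap g φ 0 ≤ C := by
  have := halfMap_lip hg hφ (show (-1 : ℝ) ≤ 0 by norm_num)
  rw [halfMap_left hg hφ le_rfl] at this
  linarith

/-- If the solution is at least `b` at some time of the unit interval before its zero, then the
Lipschitz bound keeps it above `b / 2` for a time `b / (2 C)`, which forces a definite undershoot
one delay later. -/
theorem half_low_aux (hg : Feedback g C c m) {x : ℝ → ℝ} (hx : IsSol (fun u => -g u) φ x) {z : ℝ}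
    (hz : IsZero x z) {t b : ℝ} (ht : 0 ≤ t) (htz : z - 1 ≤ t) (hb : 0 < b) (hbx : b ≤ x t) :
    b / (2 * C) * min (c * (b / 2)) m ≤ -x (z + 1) := by
  have hC := hg.C_pos
  have hz0 := hz.pos
  have h1 : t ≤ z := by
    by_contra h
    linarith [hz.after t (not_le.1 h)]
  have h2 := half_lip hg hx ht h1
  rw [hz.zero] at h2
  have hτ : C * (b / (2 * C)) = b / 2 := by field_simp
  have hτ0 : 0 < b / (2 * C) := by positivity
  have h3 : t + b / (2 * C) ≤ z := by nlinarith
  have h4 := half_drop hg hx (s := t + 1) (t := t + 1 + b / (2 * C)) (b := b / 2) (by linarith)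
    (by linarith) (by linarith) (by
      intro u hu
      have := half_lip hg hx (s := t) (t := u - 1) ht (by linarith [hu.1])
      have h5 : C * (u - 1 - t) ≤ C * (b / (2 * C)) :=
        mul_le_mul_of_nonneg_left (by linarith [hu.2]) hC.le
      linarith)
  rw [add_sub_cancel_left] at h4
  have h6 := half_anti hg hx (s := z) (t := t + 1) (by linarith) (by linarith)
  have h7 := half_anti hg hx (s := t + 1 + b / (2 * C)) (t := z + 1) (by linarith) (by linarith)
  rw [hz.zero] at h6
  linarith

/-- The half-return map is bounded away from `0` on histories with `φ 0 ≥ ε`: the solution is not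
small somewhere in the unit interval before its zero, whatever the position of that zero. -/
theorem halfMap_lower (hg : Feedback g C c m) {ε : ℝ} (hε : 0 < ε) :
    ∃ κ, 0 < κ ∧ ∀ φ, Adm φ → ε ≤ φ 0 → κ ≤ halfMap g φ 0 := by
  have hC := hg.C_pos
  have hm := hg.hm
  have hc := hg.hc
  set τ := ε / (2 * C) with hτ
  have hτ0 : 0 < τ := by positivity
  have hCτ : C * τ = ε / 2 := by rw [hτ]; field_simp
  have hmin : 0 < min (c * (ε / 2)) m := lt_min (by positivity) hm
  set b := min (ε / 2) (min m (τ * min (c * (ε / 2)) m)) with hb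
  have hb0 : 0 < b := lt_min (by linarith) (lt_min hm (by positivity))
  have hb1 : b ≤ ε / 2 := min_le_left _ _
  have hb2 : b ≤ m := (min_le_right _ _).trans (min_le_left _ _)
  have hb3 : b ≤ τ * min (c * (ε / 2)) m := (min_le_right _ _).trans (min_le_right _ _)
  refine ⟨b / (2 * C) * min (c * (b / 2)) m, mul_pos (by positivity)
    (lt_min (by positivity) hm), fun φ hφ hφε => ?_⟩
  have hx := halfSol_spec hg hφ
  have hz := halfZero_spec hg hφ
  rw [halfMap_eq hg hφ (by norm_num), add_zero]
  set x := halfSol g φ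
  set z := halfZero g φ
  have hz0 := hz.pos
  have hx0 : x 0 = φ 0 := hx.hist 0 le_rfl
  rcases le_total z 1 with h | h
  · exact half_low_aux hg hx hz le_rfl (by linarith) hb0 (by linarith)
  refine half_low_aux hg hx hz (t := z - 1) (by linarith) le_rfl hb0 ?_
  have hpos : 0 < x (z - 1) := hz.before _ (by linarith) (by linarith)
  rcases le_total 2 z with h2 | h2
  · refine hb2.trans ?_
    have hd := half_drop hg hx (s := z - 1) (t := z) (b := x (z - 1)) (by linarith)
      (by linarith) hpos.le (fun u hu => half_anti hg hx (by linarith [hu.1]) (by linarith [hu.2]))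
    rw [hz.zero] at hd
    rcases min_cases (c * x (z - 1)) m with ⟨h3, h4⟩ | ⟨h3, h4⟩
    · rw [h3] at hd
      nlinarith
    · rw [h3] at hd
      linarith
  · have hlow : ∀ u, 0 ≤ u → u ≤ τ → ε / 2 ≤ x u := by
      intro u h0 h1
      have h3 := half_lip hg hx le_rfl h0
      have h5 : C * (u - 0) ≤ C * τ := mul_le_mul_of_nonneg_left (by linarith) hC.le
      linarith
    rcases le_total (z - 1) τ with h3 | h3
    · exact hb1.trans (hlow _ (by linarith) h3)
    · refine hb3.trans ?_
      have hd := half_drop hg hx (s := 1) (t := 1 + τ) (b := ε / 2) (by linarith)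
        (by linarith) (by linarith) (fun u hu => hlow _ (by linarith [hu.1]) (by linarith [hu.2]))
      rw [add_sub_cancel_left] at hd
      have h6 := half_anti hg hx (s := z - 1) (t := 1) (by linarith) (by linarith)
      have h7 := hz.nonneg hφ hx (t := 1 + τ) (by linarith)
      linarith

/-- Continuous dependence on the history, uniformly on bounded time intervals. -/
theorem sol_close (h : ℝ → ℝ) (hh : UniformContinuous h) (N : ℕ) :
    ∀ ε, 0 < ε → ∃ δ, 0 < δ ∧ ∀ φ x φ' x', IsSol h φ x → IsSol h φ' x' →
      (∀ t, |φ t - φ' t| ≤ δ) → ∀ t : ℝ, t ≤ N → |x t - x' t| ≤ ε := by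
  induction N with
  | zero =>
    intro ε hε
    refine ⟨ε, hε, fun φ x φ' x' hx hx' hφ t ht => ?_⟩
    have ht' : t ≤ 0 := by simpa using ht
    rw [hx.hist t ht', hx'.hist t ht']
    exact hφ t
  | succ N ih =>
    intro ε hε
    have hN : (0 : ℝ) < N + 1 := by positivity
    obtain ⟨δ1, hδ1, H1⟩ := Metric.uniformContinuous_iff.1 hh (ε / (2 * (N + 1))) (by positivity)
    obtain ⟨δ2, hδ2, H2⟩ := ih (δ1 / 2) (by positivity)
    refine ⟨min δ2 (ε / 2), by positivity, fun φ x φ' x' hx hx' hφ t ht => ?_⟩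
    push_cast at ht
    have hφ2 : ∀ t, |φ t - φ' t| ≤ ε / 2 := fun t => (hφ t).trans (min_le_right _ _)
    rcases le_total t 0 with h0 | h0
    · rw [hx.hist t h0, hx'.hist t h0]
      linarith [hφ2 t]
    · have hc : Continuous fun u => h (x (u - 1)) :=
        hh.continuous.comp (hx.cont.comp (continuous_sub_right 1))
      have hc' : Continuous fun u => h (x' (u - 1)) :=
        hh.continuous.comp (hx'.cont.comp (continuous_sub_right 1))
      rw [hx.eqn t h0, hx'.eqn t h0, add_sub_add_comm, ← intervalIntegral.integral_sub
        (hc.intervalIntegrable _ _) (hc'.intervalIntegrable _ _)]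
      have hI : ‖∫ u in (0 : ℝ)..t, (h (x (u - 1)) - h (x' (u - 1)))‖
          ≤ ε / (2 * (N + 1)) * |t - 0| := by
        refine intervalIntegral.norm_integral_le_of_norm_le_const fun u hu => ?_
        rw [uIoc_of_le h0] at hu
        rw [← dist_eq_norm]
        refine (H1 ?_).le
        rw [Real.dist_eq]
        refine (H2 φ x φ' x' hx hx' (fun t => (hφ t).trans (min_le_left _ _)) (u - 1)
          (by linarith [hu.2])).trans_lt (by linarith)
      rw [sub_zero, abs_of_nonneg h0, Real.norm_eq_abs] at hI
      have h3 : ε / (2 * (N + 1)) * t ≤ ε / (2 * (N + 1)) * (N + 1) :=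
        mul_le_mul_of_nonneg_left ht (by positivity)
      have h4 : ε / (2 * ((N : ℝ) + 1)) * (N + 1) = ε / 2 := by field_simp
      calc _ ≤ |φ 0 - φ' 0| + |∫ u in (0 : ℝ)..t, (h (x (u - 1)) - h (x' (u - 1)))| :=
            abs_add_le _ _
        _ ≤ ε := by linarith [hφ2 0]

theorem half_lip_abs (hg : Feedback g C c m) {x : ℝ → ℝ} (hx : IsSol (fun u => -g u) φ x)
    {s t : ℝ} (hs : 0 ≤ s) (ht : 0 ≤ t) : |x s - x t| ≤ C * |s - t| := by
  rcases le_total s t with h | h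
  · rw [abs_of_nonneg (by linarith [half_anti hg hx hs h]), abs_sub_comm,
      abs_of_nonneg (by linarith)]
    exact half_lip hg hx hs h
  · rw [abs_sub_comm, abs_of_nonneg (by linarith [half_anti hg hx ht h]),
      abs_of_nonneg (by linarith)]
    exact half_lip hg hx ht h

/-- Continuity of the half-return map at `φ` in the sup norm; the zero moves little because the
solution crosses it with a strict sign change. -/
theorem halfMap_close (hg : Feedback g C c m) (hφ : Adm φ) {ε : ℝ} (hε : 0 < ε) :
    ∃ δ, 0 < δ ∧ ∀ φ', Adm φ' → (∀ t, |φ t - φ' t| ≤ δ) →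
      ∀ s, |halfMap g φ s - halfMap g φ' s| ≤ ε := by
  have hC := hg.C_pos
  have hx := halfSol_spec hg hφ
  have hz := halfZero_spec hg hφ
  set x := halfSol g φ with hxdef
  set z := halfZero g φ with hzdef
  have hz0 := hz.pos
  obtain ⟨η, hη0, hη1, hη2, hη3⟩ : ∃ η, 0 < η ∧ η < z ∧ η ≤ 1 ∧ C * η ≤ ε / 2 := by
    refine ⟨min (z / 2) (min 1 (ε / (2 * C))), by positivity, ?_, ?_, ?_⟩
    · exact (min_le_left _ _).trans_lt (by linarith)
    · exact (min_le_right _ _).trans (min_le_left _ _)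
    · calc _ ≤ C * (ε / (2 * C)) :=
            mul_le_mul_of_nonneg_left ((min_le_right _ _).trans (min_le_right _ _)) hC.le
        _ = ε / 2 := by field_simp
  have hp1 : 0 < x (z - η) := hz.before _ (by linarith) (by linarith)
  have hp2 : x (z + η) < 0 := hz.after _ (by linarith)
  obtain ⟨N, hN⟩ := exists_nat_ge (z + 2)
  obtain ⟨e, he0, he1, he2, he3⟩ : ∃ e, 0 < e ∧ e < x (z - η) ∧ e < -x (z + η) ∧ e ≤ ε / 2 := by
    have hp3 : 0 < -x (z + η) := by linarith
    refine ⟨min (x (z - η) / 2) (min (-x (z + η) / 2) (ε / 2)), by positivity, ?_, ?_, ?_⟩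
    · exact (min_le_left _ _).trans_lt (by linarith)
    · exact ((min_le_right _ _).trans (min_le_left _ _)).trans_lt (by linarith)
    · exact (min_le_right _ _).trans (min_le_right _ _)
  obtain ⟨δ, hδ, H⟩ := sol_close (fun u => -g u) hg.uc.neg N e he0
  refine ⟨δ, hδ, fun φ' hφ' hclose => ?_⟩
  have hx' := halfSol_spec hg hφ'
  have hz' := halfZero_spec hg hφ'
  have Hx := H φ x φ' _ hx hx' hclose
  have hz'0 := hz'.pos
  have hzz : |z - halfZero g φ'| ≤ η := by
    rw [abs_le]
    constructor
    · by_contra hcon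
      have h1 := hz'.before (z + η) (by linarith) (by linarith)
      have h2 := abs_le.1 (Hx (z + η) (by linarith))
      linarith [h2.1]
    · by_contra hcon
      have h1 := hz'.after (z - η) (by linarith)
      have h2 := abs_le.1 (Hx (z - η) (by linarith))
      linarith [h2.2]
  have key : ∀ s, -1 ≤ s → s ≤ 0 → |halfMap g φ s - halfMap g φ' s| ≤ ε := by
    intro s hs1 hs0
    rw [halfMap_eq hg hφ hs1, halfMap_eq hg hφ' hs1, ← hxdef, ← hzdef]
    have h1 := half_lip_abs hg hx (s := z + 1 + s) (t := halfZero g φ' + 1 + s) (by linarith)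
      (by linarith)
    have h2 := Hx (halfZero g φ' + 1 + s) (by linarith [(abs_le.1 hzz).1])
    have h3 : z + 1 + s - (halfZero g φ' + 1 + s) = z - halfZero g φ' := by ring
    rw [h3] at h1
    have h4 : C * |z - halfZero g φ'| ≤ C * η := mul_le_mul_of_nonneg_left hzz hC.le
    rw [abs_le] at h1 h2 ⊢
    constructor <;> linarith [h1.1, h1.2, h2.1, h2.2]
  intro s
  rcases le_total s (-1) with h | h
  · rw [halfMap_left hg hφ h, halfMap_left hg hφ' h]; simpa using hε.le
  rcases le_total s 0 with h' | h'
  · exact key s h h'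
  · rw [halfMap_right hg hφ h', halfMap_right hg hφ' h']
    exact key 0 (by norm_num) le_rfl

end HalfMap

/-! ### The functional of an unstable characteristic root -/

/-- For `α > π / 2` the characteristic equation `l + α e^{-l} = 0` has a root with positive real
part and imaginary part in `(0, π)`. -/
theorem exists_char_root {α : ℝ} (hα : Real.pi / 2 < α) :
    ∃ l : ℂ, -l = α * Complex.exp (-l) ∧ 0 < l.re ∧ 0 < l.im ∧ l.im < Real.pi := by
  have hpi := Real.pi_pos
  have hα0 : 0 < α := by linarith
  set δ := Real.pi / (4 * α) with hδ
  have hδ0 : 0 < δ := by positivity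
  have hαδ : α * δ = Real.pi / 4 := by rw [hδ]; field_simp
  have hδ1 : δ < 1 / 2 := by nlinarith
  have hpi3 := Real.pi_gt_three
  have hab : Real.pi / 2 ≤ Real.pi - δ := by linarith
  have hsin : ∀ ν ∈ Icc (Real.pi / 2) (Real.pi - δ), 0 < Real.sin ν := fun ν hν =>
    Real.sin_pos_of_pos_of_lt_pi (by linarith [hν.1]) (by linarith [hν.2])
  have hcont : ContinuousOn (fun ν => ν * Real.exp (-(ν * Real.cos ν / Real.sin ν)) -
      α * Real.sin ν) (Icc (Real.pi / 2) (Real.pi - δ)) := by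
    have hne : ∀ ν ∈ Icc (Real.pi / 2) (Real.pi - δ), Real.sin ν ≠ 0 :=
      fun ν hν => (hsin ν hν).ne'
    fun_prop (disch := assumption)
  have hl : Real.pi / 2 * Real.exp (-(Real.pi / 2 * Real.cos (Real.pi / 2) /
      Real.sin (Real.pi / 2))) - α * Real.sin (Real.pi / 2) < 0 := by
    simp only [Real.cos_pi_div_two, Real.sin_pi_div_two, mul_zero, zero_div, neg_zero,
      Real.exp_zero, mul_one]
    linarith
  have hr : 0 ≤ (Real.pi - δ) * Real.exp (-((Real.pi - δ) * Real.cos (Real.pi - δ) /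
      Real.sin (Real.pi - δ))) - α * Real.sin (Real.pi - δ) := by
    have h1 : Real.sin (Real.pi - δ) ≤ δ := by
      rw [Real.sin_pi_sub]; exact Real.sin_le hδ0.le
    have h2 : Real.cos (Real.pi - δ) ≤ 0 := by
      rw [Real.cos_pi_sub]
      linarith [Real.cos_nonneg_of_neg_pi_div_two_le_of_le (x := δ) (by linarith) (by linarith)]
    have h3 := hsin (Real.pi - δ) ⟨hab, le_rfl⟩
    have h4 : 1 ≤ Real.exp (-((Real.pi - δ) * Real.cos (Real.pi - δ) /
        Real.sin (Real.pi - δ))) := by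
      rw [Real.one_le_exp_iff, neg_nonneg]
      exact div_nonpos_of_nonpos_of_nonneg
        (mul_nonpos_of_nonneg_of_nonpos (by linarith) h2) h3.le
    have h5 : α * Real.sin (Real.pi - δ) ≤ α * δ := mul_le_mul_of_nonneg_left h1 hα0.le
    nlinarith
  obtain ⟨ν, hν, hν0⟩ := intermediate_value_Icc hab hcont ⟨hl.le, hr⟩
  simp only at hν0
  have hs := hsin ν hν
  have hνgt : Real.pi / 2 < ν := by
    rcases hν.1.eq_or_lt with h | h
    · rw [← h] at hν0
      linarith
    · exact h
  have hcos : Real.cos ν < 0 :=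
    Real.cos_neg_of_pi_div_two_lt_of_lt hνgt (by linarith [hν.2])
  set μ := -(ν * Real.cos ν / Real.sin ν) with hμ
  have hμpos : 0 < μ := by
    rw [hμ, neg_pos]
    exact div_neg_of_neg_of_pos (mul_neg_of_pos_of_neg (by linarith) hcos) hs
  have e1 : ν = α * Real.sin ν * Real.exp (-μ) := by
    rw [Real.exp_neg, ← div_eq_mul_inv, eq_div_iff (Real.exp_pos μ).ne']
    linarith
  have e2 : -μ = α * Real.cos ν * Real.exp (-μ) := by
    have : -μ = ν * (Real.cos ν / Real.sin ν) := by rw [hμ]; ring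
    clear_value μ
    calc -μ = (α * Real.sin ν * Real.exp (-μ)) * (Real.cos ν / Real.sin ν) := by rw [← e1, this]
      _ = _ := by field_simp
  refine ⟨⟨μ, ν⟩, ?_, hμpos, by simpa using (by linarith : 0 < ν), by simp; linarith [hν.2]⟩
  apply Complex.ext
  · simp [Complex.exp_re]
    linarith
  · simp [Complex.exp_im]
    linarith

/-- The linear functional attached to a characteristic root `l` of the linearisation at `0`; it
is the coordinate along the corresponding eigenfunction, up to normalisation. -/
noncomputable def linFun (l : ℂ) (φ : ℝ → ℝ) : ℂ :=
  φ 0 + l * ∫ s in (-1 : ℝ)..0, Complex.exp (-l * s) * φ s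

theorem linFun_congr (l : ℂ) {φ ψ : ℝ → ℝ} (h : ∀ s, -1 ≤ s → s ≤ 0 → φ s = ψ s) :
    linFun l φ = linFun l ψ := by
  unfold linFun
  rw [h 0 (by norm_num) le_rfl]
  congr 2
  refine intervalIntegral.integral_congr fun s hs => ?_
  rw [uIcc_of_le (by norm_num)] at hs
  simp only [h s hs.1 hs.2]

theorem linFun_mul (l : ℂ) (k : ℝ) (φ : ℝ → ℝ) :
    linFun l (fun s => k * φ s) = k * linFun l φ := by
  unfold linFun
  have : ∀ s : ℝ, Complex.exp (-l * s) * ((k * φ s : ℝ) : ℂ) =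
      (k : ℂ) * (Complex.exp (-l * s) * φ s) := by intro s; push_cast; ring
  simp only [this, intervalIntegral.integral_const_mul]
  push_cast
  ring

theorem hasDerivAt_cexp_neg (l : ℂ) (s : ℝ) :
    HasDerivAt (fun s : ℝ => Complex.exp (-l * s)) (-l * Complex.exp (-l * s)) s := by
  have h1 : HasDerivAt (fun s : ℝ => -l * (s : ℂ)) (-l) s := by
    simpa using (Complex.ofRealCLM.hasDerivAt (x := s)).const_mul (-l)
  simpa [mul_comm] using h1.cexp

/-- Integrating by parts turns the functional into `∫ e^{-ls} q'(s) ds`; with `q' ≥ 0` and the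
argument of `e^{-ls}` sweeping an angle `im l < π`, there is no cancellation. -/
theorem linFun_lower {l : ℂ} (h0 : 0 < l.re) (h1 : 0 < l.im) (h2 : l.im < Real.pi)
    {q q' : ℝ → ℝ} (hq : ∀ s, -1 ≤ s → s ≤ 0 → HasDerivAt q (q' s) s) (hq' : Continuous q')
    (hpos : ∀ s, -1 ≤ s → s ≤ 0 → 0 ≤ q' s) (hq1 : q (-1) = 0) (hqc : Continuous q) :
    Real.cos (l.im / 2) * q 0 ≤ ‖linFun l q‖ := by
  have hle : (-1 : ℝ) ≤ 0 := by norm_num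
  have hEc : Continuous fun s : ℝ => Complex.exp (-l * s) := by fun_prop
  have hc1 : Continuous fun s : ℝ => l * (Complex.exp (-l * s) * q s) := by fun_prop
  have hc2 : Continuous fun s : ℝ => Complex.exp (-l * s) * q' s := by fun_prop
  have hI1 : linFun l q = ∫ s in (-1 : ℝ)..0, Complex.exp (-l * s) * q' s := by
    have hF : ∫ s in (-1 : ℝ)..0, (Complex.exp (-l * s) * q' s - l * (Complex.exp (-l * s) * q s))
        = Complex.exp (-l * (0 : ℝ)) * q 0 - Complex.exp (-l * (-1 : ℝ)) * q (-1) := by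
      refine intervalIntegral.integral_eq_sub_of_hasDerivAt
        (f := fun s : ℝ => Complex.exp (-l * s) * (q s : ℂ)) (fun s hs => ?_)
        ((hc2.sub hc1).intervalIntegrable _ _)
      rw [uIcc_of_le hle] at hs
      have := (hasDerivAt_cexp_neg l s).mul (hq s hs.1 hs.2).ofReal_comp
      exact HasDerivAt.congr_deriv this (by ring)
    rw [intervalIntegral.integral_sub (hc2.intervalIntegrable _ _) (hc1.intervalIntegrable _ _),
      intervalIntegral.integral_const_mul, hq1] at hF
    simp only [Complex.ofReal_zero, mul_zero, Complex.exp_zero, one_mul, sub_zero] at hF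
    unfold linFun
    rw [← hF]
    ring
  set e : ℂ := Complex.exp (-(l.im / 2 : ℝ) * Complex.I) with he
  have hnorm : ‖e‖ = 1 := by
    rw [he, ← Complex.ofReal_neg, Complex.norm_exp_ofReal_mul_I]
  have hre : (e * linFun l q).re = ∫ s in (-1 : ℝ)..0,
      Real.exp (-l.re * s) * Real.cos (l.im / 2 + l.im * s) * q' s := by
    rw [hI1, ← intervalIntegral.integral_const_mul]
    have := Complex.reCLM.intervalIntegral_comp_comm (μ := MeasureTheory.volume) (a := -1) (b := 0)
      (f := fun s : ℝ => e * (Complex.exp (-l * s) * q' s))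
      ((by fun_prop : Continuous fun s : ℝ =>
        e * (Complex.exp (-l * s) * q' s)).intervalIntegrable _ _)
    simp only [Complex.reCLM_apply] at this
    rw [← this]
    refine intervalIntegral.integral_congr fun s _ => ?_
    rw [← mul_assoc, Complex.re_mul_ofReal, he, ← Complex.exp_add, Complex.exp_re]
    congr 2
    · congr 1; simp
    · rw [← Real.cos_neg]; congr 1; simp; ring
  have hInt : Real.cos (l.im / 2) * q 0 ≤ ∫ s in (-1 : ℝ)..0,
      Real.exp (-l.re * s) * Real.cos (l.im / 2 + l.im * s) * q' s := by
    have hq0 : ∫ s in (-1 : ℝ)..0, q' s = q 0 - q (-1) :=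
      intervalIntegral.integral_eq_sub_of_hasDerivAt (fun s hs => by
        rw [uIcc_of_le hle] at hs
        exact hq s hs.1 hs.2) (hq'.intervalIntegrable _ _)
    rw [hq1, sub_zero] at hq0
    rw [← hq0, ← intervalIntegral.integral_const_mul]
    refine intervalIntegral.integral_mono_on hle
      ((by fun_prop : Continuous fun s : ℝ => Real.cos (l.im / 2) * q' s).intervalIntegrable _ _)
      ((by fun_prop : Continuous fun s : ℝ => Real.exp (-l.re * s) *
        Real.cos (l.im / 2 + l.im * s) * q' s).intervalIntegrable _ _) fun s hs => ?_
    refine mul_le_mul_of_nonneg_right ?_ (hpos s hs.1 hs.2)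
    have hs1 := hs.1
    have hs0 := hs.2
    have hcos : Real.cos (l.im / 2) ≤ Real.cos (l.im / 2 + l.im * s) := by
      rw [← Real.cos_abs (l.im / 2 + l.im * s)]
      refine Real.cos_le_cos_of_nonneg_of_le_pi (abs_nonneg _) (by linarith) ?_
      rw [abs_le]
      constructor <;> nlinarith
    have hc0 : 0 ≤ Real.cos (l.im / 2) :=
      Real.cos_nonneg_of_neg_pi_div_two_le_of_le (by linarith) (by linarith)
    have hexp : 1 ≤ Real.exp (-l.re * s) := by
      rw [Real.one_le_exp_iff]; nlinarith
    nlinarith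
  calc _ ≤ (e * linFun l q).re := by rw [hre]; exact hInt
    _ ≤ ‖e * linFun l q‖ := Complex.re_le_norm _
    _ = ‖linFun l q‖ := by rw [norm_mul, hnorm, one_mul]

section Expansion
variable {g φ : ℝ → ℝ} {C c m : ℝ}

theorem halfMap_linFun_lower {l : ℂ} (h0 : 0 < l.re) (h1 : 0 < l.im) (h2 : l.im < Real.pi)
    (hg : Feedback g C c m) (hφ : Adm φ) :
    Real.cos (l.im / 2) * halfMap g φ 0 ≤ ‖linFun l (halfMap g φ)‖ := by
  have hx := halfSol_spec hg hφ
  have hz := halfZero_spec hg hφ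
  have hz0 := hz.pos
  have hxc := hx.cont
  have hgc := hg.uc.continuous
  rw [linFun_congr l (fun s hs _ => halfMap_eq hg hφ hs), halfMap_eq hg hφ (by norm_num)]
  refine linFun_lower h0 h1 h2 (q := fun s => -halfSol g φ (halfZero g φ + 1 + s))
    (q' := fun s => g (halfSol g φ (halfZero g φ + 1 + s - 1))) (fun s hs1 hs0 => ?_)
    (by fun_prop) (fun s _ _ => hg.nonneg _) (by simp [hz.zero]) (by fun_prop)
  have := (hx.hasDerivAt hgc.neg (t := halfZero g φ + 1 + s) (by linarith)).neg
  rw [neg_neg] at this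
  exact HasDerivAt.comp_const_add (halfZero g φ + 1) s this

/-- The half-return map expands the functional, up to an error from the deviation of `g` from
its linearisation.  Along the solution `e^{-lt} ℓ(x_t)` is constant for the linear equation, and
the elapsed time `z + 1 ≥ 1` produces the factor `e^{re l}`. -/
theorem halfMap_expand {l : ℂ} {α η : ℝ} (hl : -l = α * Complex.exp (-l)) (h0 : 0 < l.re)
    (hg : Feedback g C c m) (hφ : Adm φ)
    (hη : ∀ u, 0 ≤ u → u ≤ φ 0 → |g u - α * u| ≤ η * u) :
    Real.exp l.re * (‖linFun l φ‖ - η * φ 0 / l.re) ≤ ‖linFun l (halfMap g φ)‖ := by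
  have hx := halfSol_spec hg hφ
  have hz := halfZero_spec hg hφ
  rw [linFun_congr l (fun s hs _ => halfMap_eq hg hφ hs)]
  have hxle := half_le hg hφ hx
  have hxnn : ∀ t ≤ halfZero g φ, 0 ≤ halfSol g φ t := fun t ht => hz.nonneg hφ hx ht
  set x := halfSol g φ
  set z := halfZero g φ
  have hz0 := hz.pos
  have hxc := hx.cont
  have hgc := hg.uc.continuous
  have hη0 : 0 ≤ η := by
    have := (abs_nonneg _).trans (hη (φ 0) hφ.pos.le le_rfl)
    exact nonneg_of_mul_nonneg_left this hφ.pos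
  set G : ℝ → ℂ := fun s => Complex.exp (-l * s) * x s with hG
  have hGc : Continuous G := by rw [hG]; fun_prop
  set Φ : ℝ → ℂ := fun t => ∫ s in (0 : ℝ)..t, G s with hΦ
  have hΦd : ∀ t, HasDerivAt Φ (G t) t := fun t =>
    intervalIntegral.integral_hasDerivAt_right (hGc.intervalIntegrable _ _)
      (hGc.stronglyMeasurableAtFilter _ _) hGc.continuousAt
  have hΦc : Continuous Φ := continuous_iff_continuousAt.2 fun t => (hΦd t).continuousAt
  set w : ℝ → ℂ := fun t => G t + l * (Φ t - Φ (t - 1)) with hw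
  have hwc : Continuous w := by rw [hw]; fun_prop
  set w' : ℝ → ℂ := fun t => Complex.exp (-l * t) * ((α * x (t - 1) - g (x (t - 1)) : ℝ) : ℂ)
    with hw'
  have hw'c : Continuous w' := by rw [hw']; fun_prop
  have hwd : ∀ t, 0 < t → HasDerivAt w (w' t) t := by
    intro t ht
    have d1 : HasDerivAt G (-l * Complex.exp (-l * t) * x t +
        Complex.exp (-l * t) * ((-g (x (t - 1)) : ℝ) : ℂ)) t :=
      (hasDerivAt_cexp_neg l t).mul (hx.hasDerivAt hgc.neg ht).ofReal_comp
    have d2 : HasDerivAt (fun t => Φ (t - 1)) (G (t - 1)) t :=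
      HasDerivAt.comp_sub_const t 1 (hΦd (t - 1))
    have d3 := d1.add (((hΦd t).sub d2).const_mul l)
    refine HasDerivAt.congr_deriv d3 (Eq.symm ?_)
    have hsh : l * Complex.exp (-l * ((t - 1 : ℝ) : ℂ)) = -(α * Complex.exp (-l * t)) := by
      have : Complex.exp (-l * ((t - 1 : ℝ) : ℂ)) * Complex.exp (-l) = Complex.exp (-l * t) := by
        rw [← Complex.exp_add]; congr 1; push_cast; ring
      rw [← this]
      linear_combination -Complex.exp (-l * ((t - 1 : ℝ) : ℂ)) * hl
    simp only [hw', hG]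
    push_cast at hsh ⊢
    linear_combination x (t - 1) * hsh
  have hw0 : w 0 = linFun l φ := by
    simp only [hw, hG, hΦ, linFun]
    rw [hx.hist 0 le_rfl, intervalIntegral.integral_same, zero_sub, zero_sub,
      ← intervalIntegral.integral_symm]
    simp only [Complex.ofReal_zero, mul_zero, Complex.exp_zero, one_mul]
    congr 2
    refine intervalIntegral.integral_congr fun s hs => ?_
    rw [uIcc_of_le (by norm_num)] at hs
    simp only [hx.hist s hs.2]
  have hwa : w (z + 1) = -(Complex.exp (-l * ((z + 1 : ℝ) : ℂ)) *
      linFun l (fun s => -x (z + 1 + s))) := by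
    have hΦs : Φ (z + 1) - Φ (z + 1 - 1) = ∫ s in (-1 : ℝ)..0, G (z + 1 + s) := by
      rw [hΦ]
      simp only
      rw [intervalIntegral.integral_interval_sub_left (hGc.intervalIntegrable _ _)
        (hGc.intervalIntegrable _ _), intervalIntegral.integral_comp_add_left]
      (congr 1; ring)
    simp only [hw, linFun]
    rw [hΦs]
    have hGs : ∀ s : ℝ, G (z + 1 + s) = -(Complex.exp (-l * ((z + 1 : ℝ) : ℂ)) *
        (Complex.exp (-l * s) * ((-x (z + 1 + s) : ℝ) : ℂ))) := by
      intro s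
      simp only [hG]
      have : Complex.exp (-l * ((z + 1 + s : ℝ) : ℂ)) =
          Complex.exp (-l * ((z + 1 : ℝ) : ℂ)) * Complex.exp (-l * s) := by
        rw [← Complex.exp_add]; congr 1; push_cast; ring
      rw [this]; push_cast; ring
    simp only [hGs, intervalIntegral.integral_neg, intervalIntegral.integral_const_mul]
    simp only [hG, add_zero]
    push_cast
    ring
  have hz1 : 0 ≤ z + 1 := by linarith
  have hdiff : ‖w (z + 1) - w 0‖ ≤ η * φ 0 / l.re := by
    rw [← intervalIntegral.integral_eq_sub_of_hasDerivAt_of_le hz1 hwc.continuousOn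
      (fun t ht => hwd t ht.1) (hw'c.intervalIntegrable _ _)]
    have hb : ∀ t ∈ Ioc 0 (z + 1), ‖w' t‖ ≤ η * φ 0 * Real.exp (-l.re * t) := by
      intro t ht
      have hn : ‖Complex.exp (-l * t)‖ = Real.exp (-l.re * t) := by
        rw [Complex.norm_exp]; congr 1; simp
      simp only [hw']
      rw [norm_mul, hn, Complex.norm_real, Real.norm_eq_abs, mul_comm]
      refine mul_le_mul_of_nonneg_right ?_ (Real.exp_pos _).le
      rw [abs_sub_comm]
      refine (hη _ (hxnn _ (by linarith [ht.2])) (hxle _)).trans ?_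
      exact mul_le_mul_of_nonneg_left (hxle _) hη0
    have hbc : Continuous fun t : ℝ => η * φ 0 * Real.exp (-l.re * t) := by fun_prop
    refine (intervalIntegral.norm_integral_le_of_norm_le hz1
      (Eventually.of_forall hb) (hbc.intervalIntegrable _ _)).trans ?_
    rw [intervalIntegral.integral_const_mul]
    have hI : ∫ t in (0 : ℝ)..(z + 1), Real.exp (-l.re * t) =
        (1 - Real.exp (-l.re * (z + 1))) / l.re := by
      rw [intervalIntegral.integral_comp_mul_left Real.exp (neg_ne_zero.2 h0.ne'), integral_exp]
      simp only [mul_zero, Real.exp_zero, smul_eq_mul]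
      field_simp
      ring
    rw [hI, div_eq_mul_one_div (η * φ 0)]
    refine mul_le_mul_of_nonneg_left ?_ (mul_nonneg hη0 hφ.pos.le)
    have := Real.exp_pos (-l.re * (z + 1))
    gcongr
    linarith
  have hnw : ‖w (z + 1)‖ = Real.exp (-l.re * (z + 1)) * ‖linFun l (fun s => -x (z + 1 + s))‖ := by
    rw [hwa, norm_neg, norm_mul, Complex.norm_exp]
    congr 2; simp
  have htri : ‖linFun l φ‖ - η * φ 0 / l.re ≤ ‖w (z + 1)‖ := by
    rw [← hw0]
    have := norm_sub_norm_le (w 0) (w (z + 1))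
    rw [norm_sub_rev] at this
    linarith
  rw [hnw] at htri
  have h3 := mul_le_mul_of_nonneg_left htri (Real.exp_pos l.re).le
  refine h3.trans ?_
  rw [← mul_assoc, ← Real.exp_add]
  refine mul_le_of_le_one_left (norm_nonneg _) ?_
  rw [Real.exp_le_one_iff]
  nlinarith

/-- Ejectivity of the origin: a nonnegative positively homogeneous functional that strictly grows
under every half-return map whose profile is close to `α u` on the range of the history. -/
theorem exists_growing_functional {α : ℝ} (hα : Real.pi / 2 < α) :
    ∃ η : ℝ, 0 < η ∧ ∃ L : (ℝ → ℝ) → ℝ, (∀ φ, 0 ≤ L φ) ∧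
      (∀ k : ℝ, 0 ≤ k → ∀ φ : ℝ → ℝ, L (fun s => k * φ s) = k * L φ) ∧
      ∀ (g g' ψ φ : ℝ → ℝ) (C c m C' c' m' k : ℝ), Feedback g C c m → Feedback g' C' c' m' →
        Adm ψ → Adm φ → 0 < k → (φ = fun s => k * halfMap g ψ s) →
        (∀ u, 0 ≤ u → u ≤ φ 0 → |g' u - α * u| ≤ η * u) → L φ < L (halfMap g' φ) := by
  obtain ⟨l, hl, h0, h1, h2⟩ := exists_char_root hα
  have hcos : 0 < Real.cos (l.im / 2) :=
    Real.cos_pos_of_mem_Ioo ⟨by linarith, by linarith⟩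
  have hexp : 1 < Real.exp l.re := Real.one_lt_exp_iff.2 h0
  set κ := Real.cos (l.im / 2) with hκ
  set X := Real.exp l.re with hX
  refine ⟨l.re * κ * (X - 1) / (2 * X), by
    have : 0 < X - 1 := by linarith
    positivity, fun φ => ‖linFun l φ‖, fun φ => norm_nonneg _, fun k hk φ => ?_, ?_⟩
  · beta_reduce
    rw [linFun_mul, norm_mul, Complex.norm_real, Real.norm_of_nonneg hk]
  · intro g g' ψ φ C c m C' c' m' k hg hg' hψ hφ hk hφψ hη
    have hlow : κ * φ 0 ≤ ‖linFun l φ‖ := by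
      have := halfMap_linFun_lower h0 h1 h2 hg hψ
      rw [hφψ, linFun_mul, norm_mul, Complex.norm_real, Real.norm_of_nonneg hk.le]
      nlinarith
    have hexpand := halfMap_expand hl h0 hg' hφ hη
    refine lt_of_lt_of_le ?_ hexpand
    have hφ0 := hφ.pos
    have hX0 : 0 < X := by linarith
    have e : X * (‖linFun l φ‖ - l.re * κ * (X - 1) / (2 * X) * φ 0 / l.re) =
        X * ‖linFun l φ‖ - (X - 1) * (κ * φ 0) / 2 := by
      field_simp
    rw [e]
    have h3 : 0 < κ * φ 0 := mul_pos hcos hφ0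
    nlinarith

/-- The amplitude after half a turn is controlled by the values of `g` on the range of `φ`. -/
theorem halfMap_zero_le (hg : Feedback g C c m) (hφ : Adm φ) {B : ℝ}
    (hB : ∀ u ≤ φ 0, g u ≤ B) : halfMap g φ 0 ≤ B := by
  have hx := halfSol_spec hg hφ
  have hz := halfZero_spec hg hφ
  have hz0 := hz.pos
  rw [halfMap_eq hg hφ (by norm_num), add_zero]
  have h1 := half_eq hg hx (s := halfZero g φ) (t := halfZero g φ + 1) hz0.le (by linarith)
  have h2 : ∫ u in (halfZero g φ)..(halfZero g φ + 1), g (halfSol g φ (u - 1)) ≤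
      ∫ u in (halfZero g φ)..(halfZero g φ + 1), B :=
    intervalIntegral.integral_mono_on (by linarith)
      ((half_cont hg hx).intervalIntegrable _ _) (by simp)
      fun u _ => hB _ (half_le hg hφ hx _)
  rw [intervalIntegral.integral_const, smul_eq_mul] at h2
  rw [hz.zero] at h1
  linarith

end Expansion

/-! ### The fixed point of the return map -/

/-- The interval `[-1, 0]` as a type. -/
abbrev HI : Type := Icc (-1 : ℝ) 0

/-- Extension of a function on `[-1, 0]` to `ℝ` by constants. -/
noncomputable def extHI (φ : HI → ℝ) : ℝ → ℝ := IccExtend (by norm_num : (-1 : ℝ) ≤ 0) φ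

/-- Left endpoint of `[-1, 0]`. -/
def hiL : HI := ⟨-1, by norm_num⟩

/-- Right endpoint of `[-1, 0]`. -/
def hiR : HI := ⟨0, by norm_num⟩

theorem extHI_coe (φ : HI → ℝ) (s : HI) : extHI φ s = φ s := IccExtend_val _ _ s

theorem extHI_left (φ : HI → ℝ) {t : ℝ} (ht : t ≤ -1) : extHI φ t = φ hiL :=
  IccExtend_of_le_left _ _ ht

theorem extHI_right (φ : HI → ℝ) {t : ℝ} (ht : 0 ≤ t) : extHI φ t = φ hiR :=
  IccExtend_of_right_le _ _ ht

/-- The nondecreasing `C`-Lipschitz functions on `[-1, 0]` with value `0` at `-1` and at least `ε`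
at `0`. -/
structure InD (ε C : ℝ) (φ : HI → ℝ) : Prop where
  left : φ hiL = 0
  mono : ∀ s t : HI, s ≤ t → φ s ≤ φ t
  right : ε ≤ φ hiR
  lip : ∀ s t : HI, φ s - φ t ≤ C * |(s : ℝ) - t|

namespace InD
variable {ε C : ℝ} {φ : HI → ℝ}

theorem dist_le (h : InD ε C φ) (s t : HI) : |φ s - φ t| ≤ C * |(s : ℝ) - t| := by
  rw [abs_le]
  refine ⟨?_, h.lip s t⟩
  have := h.lip t s
  rw [abs_sub_comm] at this
  linarith

theorem C_nonneg (h : InD ε C φ) : 0 ≤ C := by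
  have h1 := h.lip hiR hiL
  have h2 := h.mono hiL hiR (by simp [hiL, hiR])
  simp [hiR, hiL] at h1
  simp [hiR, hiL] at h2
  linarith

theorem lipschitzWith (h : InD ε C φ) : LipschitzWith C.toNNReal φ := by
  refine LipschitzWith.of_dist_le_mul fun s t => ?_
  rw [Real.coe_toNNReal _ h.C_nonneg]
  exact h.dist_le s t

theorem continuous (h : InD ε C φ) : Continuous φ := h.lipschitzWith.continuous

theorem mem_Icc (h : InD ε C φ) (s : HI) : φ s ∈ Icc 0 C := by
  have hs1 := s.2.1
  have hs0 := s.2.2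
  constructor
  · rw [← h.left]; exact h.mono _ _ hs1
  · have h1 := h.lip s hiL
    rw [h.left, sub_zero] at h1
    refine h1.trans (mul_le_of_le_one_right h.C_nonneg ?_)
    simp only [hiL]
    rw [abs_le]
    constructor <;> linarith

theorem adm (h : InD ε C φ) (hε : 0 < ε) : Adm (extHI φ) where
  cont := h.continuous.Icc_extend'
  mono := Monotone.IccExtend _ (fun s t hst => h.mono s t hst)
  left t ht := by rw [extHI_left φ ht, h.left]
  right t ht := by rw [extHI_right φ ht, extHI_right φ le_rfl]
  pos := by rw [extHI_right φ le_rfl]; linarith [h.right]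

end InD

theorem isCompact_D (ε C : ℝ) : IsCompact {φ : C(HI, ℝ) | InD ε C φ} := by
  have hcl : IsClosed {φ : HI → ℝ | InD ε C φ} := by
    have : {φ : HI → ℝ | InD ε C φ} = {φ | φ hiL = 0} ∩ ({φ | ∀ s t : HI, s ≤ t → φ s ≤ φ t} ∩
        ({φ | ε ≤ φ hiR} ∩ {φ | ∀ s t : HI, φ s - φ t ≤ C * |(s : ℝ) - t|})) := by
      ext φ
      exact ⟨fun h => ⟨h.left, h.mono, h.right, h.lip⟩, fun h => ⟨h.1, h.2.1, h.2.2.1, h.2.2.2⟩⟩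
    rw [this]
    refine (isClosed_eq (continuous_apply _) continuous_const).inter (IsClosed.inter ?_
      ((isClosed_le continuous_const (continuous_apply _)).inter ?_))
    · simp only [Set.ofPred_forall]
      exact isClosed_iInter fun s => isClosed_iInter fun t => isClosed_iInter fun _ =>
        isClosed_le (continuous_apply _) (continuous_apply _)
    · simp only [Set.ofPred_forall]
      exact isClosed_iInter fun s => isClosed_iInter fun t =>
        isClosed_le ((continuous_apply s).sub (continuous_apply t)) continuous_const
  have hcomp : IsCompact {φ : HI → ℝ | InD ε C φ} :=
    (isCompact_univ_pi fun _ : HI => isCompact_Icc (a := (0 : ℝ)) (b := C)).of_isClosed_subset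
      hcl fun φ hφ s _ => InD.mem_Icc hφ s
  refine ArzelaAscoli.isCompact_of_equicontinuous _ ?_ ?_
  · convert hcomp using 1
    ext φ
    constructor
    · rintro ⟨ψ, hψ, rfl⟩; exact hψ
    · intro h; exact ⟨⟨φ, InD.continuous h⟩, h, rfl⟩
  · exact (LipschitzWith.uniformEquicontinuous _ C.toNNReal fun φ =>
      InD.lipschitzWith φ.2).equicontinuous

theorem convex_D (ε C : ℝ) : Convex ℝ {φ : C(HI, ℝ) | InD ε C φ} := by
  intro φ hφ ψ hψ a b ha hb hab
  refine ⟨?_, fun s t hst => ?_, ?_, fun s t => ?_⟩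
  · simp [hφ.left, hψ.left]
  · exact add_le_add (mul_le_mul_of_nonneg_left (hφ.mono s t hst) ha)
      (mul_le_mul_of_nonneg_left (hψ.mono s t hst) hb)
  · have h1 := mul_le_mul_of_nonneg_left hφ.right ha
    have h2 := mul_le_mul_of_nonneg_left hψ.right hb
    have h3 : a * ε + b * ε = ε := by rw [← add_mul, hab, one_mul]
    change ε ≤ a * φ hiR + b * ψ hiR
    linarith
  · have h1 := mul_le_mul_of_nonneg_left (hφ.lip s t) ha
    have h2 := mul_le_mul_of_nonneg_left (hψ.lip s t) hb
    have h3 : a * (C * |(s : ℝ) - t|) + b * (C * |(s : ℝ) - t|) = C * |(s : ℝ) - t| := by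
      rw [← add_mul, hab, one_mul]
    change a * φ s + b * ψ s - (a * φ t + b * ψ t) ≤ _
    linarith

open Classical in
/-- The composed half-return maps on `C([-1, 0], ℝ)`, with junk value `0` when the image is not
continuous, which does not happen for admissible histories. -/
noncomputable def retMap (g₁ g₂ : ℝ → ℝ) (φ : C(HI, ℝ)) : C(HI, ℝ) :=
  if h : Continuous fun s : HI => halfMap g₂ (halfMap g₁ (extHI φ)) s then ⟨_, h⟩ else 0

section Fixed
variable {g₁ g₂ : ℝ → ℝ} {C₁ c₁ m₁ C₂ c₂ m₂ : ℝ}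

theorem retMap_apply (h₁ : Feedback g₁ C₁ c₁ m₁) (h₂ : Feedback g₂ C₂ c₂ m₂) {φ : C(HI, ℝ)}
    (hφ : Adm (extHI φ)) (s : HI) :
    retMap g₁ g₂ φ s = halfMap g₂ (halfMap g₁ (extHI φ)) s := by
  have h : Continuous fun s : HI => halfMap g₂ (halfMap g₁ (extHI φ)) s :=
    (halfMap_adm h₂ (halfMap_adm h₁ hφ)).cont.comp continuous_subtype_val
  rw [retMap, dif_pos h]
  rfl

theorem retMap_continuousOn (h₁ : Feedback g₁ C₁ c₁ m₁) (h₂ : Feedback g₂ C₂ c₂ m₂) {ε C : ℝ}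
    (hε : 0 < ε) : ContinuousOn (retMap g₁ g₂) {φ : C(HI, ℝ) | InD ε C φ} := by
  rw [Metric.continuousOn_iff]
  intro φ hφ e he
  have hA := InD.adm hφ hε
  obtain ⟨δ₂, hδ₂, H₂⟩ := halfMap_close h₂ (halfMap_adm h₁ hA) (half_pos he)
  obtain ⟨δ₁, hδ₁, H₁⟩ := halfMap_close h₁ hA hδ₂
  refine ⟨δ₁, hδ₁, fun ψ hψ hd => ?_⟩
  have hB := InD.adm hψ hε
  refine lt_of_le_of_lt ?_ (half_lt_self he)
  rw [ContinuousMap.dist_le (half_pos he).le]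
  intro s
  rw [retMap_apply h₁ h₂ hA, retMap_apply h₁ h₂ hB, dist_comm, Real.dist_eq]
  refine H₂ _ (halfMap_adm h₁ hB) (H₁ _ hB fun t => ?_) s
  rw [dist_comm] at hd
  exact (ContinuousMap.dist_apply_le_dist (f := φ) (g := ψ) _).trans hd.le

/-- The composed half-return maps have a fixed point.  Schauder's theorem applies to the return
map rescaled so that the value at `0` stays at least `ε`; a fixed point at which the rescaling is
active would contradict the growth of the functional near the origin. -/
theorem exists_fixed (h₁ : Feedback g₁ C₁ c₁ m₁) (h₂ : Feedback g₂ C₂ c₂ m₂) {α : ℝ}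
    (hα : Real.pi / 2 < α)
    (hl₁ : ∀ η, 0 < η → ∃ r, 0 < r ∧ ∀ u, 0 ≤ u → u ≤ r → |g₁ u - α * u| ≤ η * u)
    (hl₂ : ∀ η, 0 < η → ∃ r, 0 < r ∧ ∀ u, 0 ≤ u → u ≤ r → |g₂ u - α * u| ≤ η * u) :
    ∃ φ, Adm φ ∧ halfMap g₂ (halfMap g₁ φ) = φ := by
  obtain ⟨η, hη, L, hL0, hLk, hgrow⟩ := exists_growing_functional hα
  obtain ⟨r₁, hr₁, H₁⟩ := hl₁ η hη
  obtain ⟨r₂, hr₂, H₂⟩ := hl₂ η hη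
  have hα0 : 0 < α := by linarith [Real.pi_pos]
  obtain ⟨ε, hε, hε1, hε2⟩ : ∃ ε, 0 < ε ∧ ε ≤ r₁ ∧ (α + η) * ε ≤ r₂ := by
    refine ⟨min r₁ (r₂ / (α + η)), by positivity, min_le_left _ _, ?_⟩
    calc _ ≤ (α + η) * (r₂ / (α + η)) :=
          mul_le_mul_of_nonneg_left (min_le_right _ _) (by positivity)
      _ = r₂ := by field_simp
  -- histories with `φ 0 = ε`, and their images under the first half-return map, lie in the range
  -- where both profiles are `η`-close to linear
  obtain ⟨κ₁, hκ₁, K₁⟩ := halfMap_lower h₁ hε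
  obtain ⟨κ, hκ, K₂⟩ := halfMap_lower h₂ hκ₁
  have hC₂ := h₂.C_pos
  set C := max ε (C₂ * max 1 (ε / κ)) with hC
  set D : Set C(HI, ℝ) := {φ | InD ε C φ} with hD
  have hC0 : 0 < C := lt_of_lt_of_le hε (le_max_left _ _)
  set H := retMap g₁ g₂ with hH
  have hHr : ∀ φ ∈ D, κ ≤ H φ hiR := by
    intro φ hφ
    have hA := InD.adm hφ hε
    rw [hH, retMap_apply h₁ h₂ hA]
    refine K₂ _ (halfMap_adm h₁ hA) (K₁ _ hA ?_)
    rw [extHI_right _ le_rfl]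
    exact hφ.right
  -- the rescaling factor: equal to `1` unless the amplitude drops below `ε`
  set k : C(HI, ℝ) → ℝ := fun φ => max 1 (ε / H φ hiR) with hk
  have hk1 : ∀ φ, 1 ≤ k φ := fun φ => le_max_left _ _
  obtain ⟨φ, hφD, hfix⟩ : ∃ φ ∈ D, k φ • H φ = φ := by
    refine schauder D (isCompact_D ε C) (convex_D ε C) ?_ (fun φ => k φ • H φ) ?_ ?_
    · refine ⟨⟨fun s => ε * ((s : ℝ) + 1), by fun_prop⟩, ?_, fun s t hst => ?_, ?_, fun s t => ?_⟩
      · simp [hiL]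
      · exact mul_le_mul_of_nonneg_left (add_le_add_left (Subtype.coe_le_coe.2 hst) 1) hε.le
      · simp [hiR]
      · change ε * ((s : ℝ) + 1) - ε * ((t : ℝ) + 1) ≤ _
        calc _ = ε * ((s : ℝ) - t) := by ring
          _ ≤ ε * |(s : ℝ) - t| := mul_le_mul_of_nonneg_left (le_abs_self _) hε.le
          _ ≤ C * |(s : ℝ) - t| := mul_le_mul_of_nonneg_right (le_max_left _ _) (abs_nonneg _)
    · have hHc : ContinuousOn H D := retMap_continuousOn h₁ h₂ hε
      have hev : ContinuousOn (fun φ => H φ hiR) D :=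
        (continuous_eval_const (F := C(HI, ℝ)) hiR).comp_continuousOn hHc
      have hkc : ContinuousOn k D :=
        continuousOn_const.sup (continuousOn_const.div hev fun φ hφ =>
          (hκ.trans_le (hHr φ hφ)).ne')
      exact hkc.smul hHc
    · intro φ hφ
      have hA := InD.adm hφ hε
      have hB := halfMap_adm h₁ hA
      have hR := halfMap_adm h₂ hB
      have hap := fun s => retMap_apply h₁ h₂ hA s
      have hHpos := hκ.trans_le (hHr φ hφ)
      have hk0 : 0 ≤ k φ := by linarith [hk1 φ]
      have hkle : C₂ * k φ ≤ C := by
        refine le_trans ?_ (le_max_right _ _)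
        refine mul_le_mul_of_nonneg_left (max_le_max le_rfl ?_) hC₂.le
        exact div_le_div_of_nonneg_left hε.le hκ (hHr φ hφ)
      refine ⟨?_, fun s t hst => ?_, ?_, fun s t => ?_⟩
      · change k φ * retMap g₁ g₂ φ hiL = 0
        rw [hap, hR.left _ (by simp [hiL]), mul_zero]
      · change k φ * retMap g₁ g₂ φ s ≤ k φ * retMap g₁ g₂ φ t
        rw [hap, hap]
        exact mul_le_mul_of_nonneg_left (hR.mono hst) hk0
      · change ε ≤ k φ * H φ hiR
        calc ε = ε / H φ hiR * H φ hiR := by field_simp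
          _ ≤ _ := mul_le_mul_of_nonneg_right (le_max_right _ _) hHpos.le
      · change k φ * retMap g₁ g₂ φ s - k φ * retMap g₁ g₂ φ t ≤ _
        rw [hap, hap, ← mul_sub]
        have hst0 := abs_nonneg ((s : ℝ) - t)
        rcases le_total (s : ℝ) t with h | h
        · refine le_trans (mul_nonpos_of_nonneg_of_nonpos hk0 ?_) (mul_nonneg hC0.le hst0)
          linarith [hR.mono h]
        · have := halfMap_lip h₂ hB h
          rw [abs_of_nonneg (by linarith : 0 ≤ (s : ℝ) - t)]
          calc _ ≤ k φ * (C₂ * ((s : ℝ) - t)) := mul_le_mul_of_nonneg_left this hk0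
            _ = C₂ * k φ * ((s : ℝ) - t) := by ring
            _ ≤ _ := mul_le_mul_of_nonneg_right hkle (by linarith)
  have hA := InD.adm hφD hε
  have hB := halfMap_adm h₁ hA
  have hR := halfMap_adm h₂ hB
  set q := halfMap g₁ (extHI φ) with hq
  have hfix' : extHI φ = fun s => k φ * halfMap g₂ q s := by
    have hI : ∀ s : HI, φ s = k φ * halfMap g₂ q s := by
      intro s
      rw [hq, ← retMap_apply h₁ h₂ hA]
      exact (congrArg (fun ψ : C(HI, ℝ) => ψ s) hfix).symm
    funext t
    rcases le_total t (-1) with h | h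
    · rw [hA.left t h, hR.left t h, mul_zero]
    rcases le_total t 0 with h' | h'
    · have := hI ⟨t, h, h'⟩
      rw [← extHI_coe φ ⟨t, h, h'⟩] at this
      exact this
    · rw [hA.right t h', hR.right t h', extHI_right _ le_rfl, hI]
      rfl
  have hHR : H φ hiR = halfMap g₂ q 0 := retMap_apply h₁ h₂ hA hiR
  rcases le_or_gt (ε / H φ hiR) 1 with hle | hgt
  · refine ⟨extHI φ, hA, ?_⟩
    have hk' : k φ = 1 := max_eq_left hle
    rw [← hq]
    rw [hk'] at hfix'
    simpa using hfix'.symm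
  · exfalso
    have hk' : k φ = ε / H φ hiR := max_eq_right hgt.le
    have hkpos : 0 < k φ := by linarith [hk1 φ]
    have hφ0 : extHI φ 0 = ε := by
      rw [hfix', hk', hHR]
      have := hR.pos
      field_simp
    have hq0 : q 0 ≤ r₂ := by
      refine (halfMap_zero_le h₁ hA (B := (α + η) * ε) fun u hu => ?_).trans hε2
      rw [hφ0] at hu
      rcases le_total u 0 with h | h
      · rw [h₁.zero u h]; positivity
      · have := (abs_le.1 (H₁ u h (hu.trans hε1))).2
        nlinarith
    have g1 := hgrow g₂ g₁ q (extHI φ) _ _ _ _ _ _ (k φ) h₂ h₁ hB hA hkpos hfix'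
      fun u h h' => H₁ u h (h'.trans (by rw [hφ0]; exact hε1))
    have g2 := hgrow g₁ g₂ (extHI φ) q _ _ _ _ _ _ 1 h₁ h₂ hA hB one_pos (by simp [hq])
      fun u h h' => H₂ u h (h'.trans hq0)
    have e : L (extHI φ) = k φ * L (halfMap g₂ q) := by
      rw [← hLk _ hkpos.le, ← hfix']
    rw [← hq] at g1
    have := hL0 (halfMap g₂ q)
    -- `L φ < L (H φ) ≤ k φ * L (H φ) = L φ`
    nlinarith [hk1 φ]

end Fixed

/-! ### The periodic solution -/

/-- Extending a forward orbit that returns after time `T` to a periodic solution on `ℝ`. -/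
theorem sop_of_orbit {f x : ℝ → ℝ} {T z : ℝ} (hd : ∀ t, 0 < t → HasDerivAt x (f (x (t - 1))) t)
    (hper : ∀ t, -1 ≤ t → x (t + T) = x t) (hz : 0 < z) (hT : z + 2 < T) (hx1 : x (-1) = 0)
    (hxz : x z = 0) (hpos : ∀ t, -1 < t → t < z → 0 < x t)
    (hneg : ∀ t, z < t → t < T - 1 → x t < 0) (hmono : MonotoneOn x (Icc (-1) 0)) :
    ∃ p : ℝ → ℝ, IsSOP f p ∧ p (-1) = 0 ∧ MonotoneOn p (Icc (-1 : ℝ) 0) ∧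
      ∃ z₁ z₂ : ℝ, 0 < z₁ ∧ z₁ < z₂ ∧ p z₁ = 0 ∧ p z₂ = 0 ∧
        (∀ t : ℝ, 0 < t → t ≤ z₂ → p t = 0 → t = z₁ ∨ t = z₂) ∧
        (∀ t : ℝ, p (t + (z₂ + 1)) = p t) ∧ MinPeriod p (z₂ + 1) := by
  have hT0 : 0 < T := by linarith
  have hstep : ∀ (n m : ℕ) (t : ℝ), n ≤ m → -1 ≤ t + n * T → x (t + m * T) = x (t + n * T) := by
    intro n m t hnm hn
    induction m, hnm using Nat.le_induction with
    | base => rfl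
    | succ m hm ih =>
      have h1 : (n : ℝ) * T ≤ m * T := by
        have : (n : ℝ) ≤ m := by exact_mod_cast hm
        exact mul_le_mul_of_nonneg_right this hT0.le
      rw [← ih, ← hper (t + m * T) (by linarith)]
      congr 1
      push_cast
      ring
  -- shift `t` forward by enough periods to land in the domain of the orbit
  set p : ℝ → ℝ := fun t => x (t + ⌈|t|⌉₊ * T) with hp
  have hceil : ∀ t : ℝ, -1 ≤ t + ⌈|t|⌉₊ * T := by
    intro t
    have h1 := Nat.le_ceil |t|
    have h2 := neg_abs_le t
    nlinarith [abs_nonneg t]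
  have hpx : ∀ (N : ℕ) (t : ℝ), -1 ≤ t + N * T → p t = x (t + N * T) := by
    intro N t hN
    rcases le_total N ⌈|t|⌉₊ with h | h
    · exact hstep _ _ t h hN
    · exact (hstep _ _ t h (hceil t)).symm
  have hbig : ∀ t : ℝ, ∃ N : ℕ, 1 < t + N * T := by
    intro t
    obtain ⟨N, hN⟩ := exists_nat_gt ((1 - t) / T)
    rw [div_lt_iff₀ hT0] at hN
    exact ⟨N, by linarith⟩
  have hpx0 : ∀ t, -1 ≤ t → p t = x t := by
    intro t ht
    have := hpx 0 t (by simpa using ht)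
    simpa using this
  have hpT : Function.Periodic p T := by
    intro t
    obtain ⟨N, hN⟩ := hbig t
    rw [hpx N (t + T) (by linarith), hpx (N + 1) t (by push_cast; linarith)]
    congr 1
    push_cast
    ring
  have hpd : ∀ t, HasDerivAt p (f (p (t - 1))) t := by
    intro t
    obtain ⟨N, hN⟩ := hbig t
    have h1 := hd (t + N * T) (by linarith)
    have h2 : HasDerivAt (fun s => x (s + N * T)) (f (x (t + N * T - 1))) t :=
      HasDerivAt.comp_add_const t (N * T) h1
    rw [hpx N (t - 1) (by linarith), sub_add_eq_add_sub]
    refine h2.congr_of_eventuallyEq ?_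
    filter_upwards [Ioi_mem_nhds (show t - 1 < t by linarith)] with s hs
    have hs' : t - 1 < s := hs
    exact hpx N s (by linarith)
  have hp1 : p (-1) = 0 := by rw [hpx0 _ le_rfl, hx1]
  have hpz : p z = 0 := by rw [hpx0 _ (by linarith), hxz]
  have hpT1 : p (T - 1) = 0 := by
    have := hpT (-1)
    rw [hp1] at this
    rw [← this]; congr 1; ring
  have hppos : ∀ t, -1 < t → t < z → 0 < p t := fun t h1 h2 => by
    rw [hpx0 _ h1.le]; exact hpos t h1 h2
  have hpneg : ∀ t, z < t → t < T - 1 → p t < 0 := fun t h1 h2 => by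
    rw [hpx0 _ (by linarith)]; exact hneg t h1 h2
  have hzero : ∀ t, -1 < t → t < T - 1 → p t = 0 → t = z := by
    intro t h1 h2 h3
    rcases lt_trichotomy t z with h | h | h
    · exact absurd h3 (hppos t h1 h).ne'
    · exact h
    · exact absurd h3 (hpneg t h h2).ne
  have hsep : ∀ y y', p y = 0 → p y' = 0 → y < y' → 1 < y' - y := by
    intro y y' hy hy' hlt
    obtain ⟨n, hn, -⟩ := existsUnique_sub_zsmul_mem_Ico hT0 y (-1)
    have e1 : p (y - n • T) = 0 := by rw [hpT.sub_zsmul_eq, hy]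
    have e2 : p (y' - n • T) = 0 := by rw [hpT.sub_zsmul_eq, hy']
    have key : ∀ s s', s ∈ Ico (-1) (-1 + T) → p s = 0 → p s' = 0 → s < s' → 1 < s' - s := by
      intro s s' hs h1 h2 hlt
      by_contra hcon
      rcases hs.1.eq_or_lt with h | h
      · have := hppos s' (by linarith) (by linarith)
        linarith
      · have hsz := hzero s h (by linarith [hs.2]) h1
        have := hpneg s' (by linarith) (by linarith)
        linarith
    have := key _ _ hn e1 e2 (by linarith)
    linarith
  have hT' : T - 1 + 1 = T := by ring
  refine ⟨p, ⟨hpd, ⟨T, hT0, hpT⟩, ⟨0, -1, ?_⟩, ?_⟩, hp1, ?_, z, T - 1, hz, by linarith, hpz, hpT1,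
    ?_, ?_, ?_, ?_, ?_⟩
  · rw [hp1]; exact (hppos 0 (by norm_num) hz).ne'
  · intro y y' hy hy' hne
    rcases lt_or_gt_of_ne hne with h | h
    · rw [abs_sub_comm]
      exact (hsep y y' hy hy' h).trans_le (le_abs_self _)
    · exact (hsep y' y hy' hy h).trans_le (le_abs_self _)
  · intro s hs t ht hst
    rw [hpx0 s hs.1, hpx0 t ht.1]
    exact hmono hs ht hst
  · intro t h1 h2 h3
    rcases h2.eq_or_lt with h | h
    · exact Or.inr h
    · exact Or.inl (hzero t (by linarith) h h3)
  · rw [hT']; exact hpT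
  · linarith
  · rw [hT']; exact hpT
  · intro T' hT'0 hT'p
    rw [hT']
    by_contra hcon
    have h1 : -1 + T' = z := hzero _ (by linarith) (by linarith) (by rw [hT'p, hp1])
    have h2 := hT'p 0
    have h3 := hppos 0 (by norm_num) hz
    have h4 := hpneg (0 + T') (by linarith) (by linarith)
    linarith

/-- `h` frozen at its boundary values outside `[0, B]`. -/
noncomputable def clip (B : ℝ) (hB : 0 ≤ B) (h : ℝ → ℝ) (u : ℝ) : ℝ := h (projIcc 0 B hB u)

theorem clip_of_mem {B : ℝ} (hB : 0 ≤ B) (h : ℝ → ℝ) {u : ℝ} (h0 : 0 ≤ u) (h1 : u ≤ B) :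
    clip B hB h u = h u := by
  rw [clip, projIcc_of_mem hB ⟨h0, h1⟩]

theorem clip_feedback {B C α : ℝ} (hB : 0 < B) {h : ℝ → ℝ} (hc : Continuous h) (h0 : h 0 = 0)
    (hpos : ∀ u, 0 < u → 0 < h u) (hα : 1 < α) (hd : HasDerivAt h α 0)
    (hC : ∀ u, 0 ≤ u → u ≤ B → h u ≤ C) :
    (∃ c m, Feedback (clip B hB.le h) C c m) ∧
    ∀ η, 0 < η → ∃ r, 0 < r ∧ ∀ u, 0 ≤ u → u ≤ r → |clip B hB.le h u - α * u| ≤ η * u := by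
  have hlin : ∀ η, 0 < η → ∃ r, 0 < r ∧ r ≤ B ∧ ∀ u, 0 ≤ u → u ≤ r →
      |clip B hB.le h u - α * u| ≤ η * u := by
    intro η hη
    have h1 := (hasDerivAt_iff_isLittleO_nhds_zero.1 hd).def hη
    obtain ⟨r, hr, H⟩ := Metric.eventually_nhds_iff.1 h1
    refine ⟨min B (r / 2), by positivity, min_le_left _ _, fun u hu0 hu => ?_⟩
    rw [clip_of_mem hB.le h hu0 (hu.trans (min_le_left _ _))]
    have := H (y := u) (by
      rw [Real.dist_eq, sub_zero, abs_of_nonneg hu0]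
      linarith [hu.trans (min_le_right _ _)])
    rw [zero_add, h0, sub_zero, smul_eq_mul, Real.norm_eq_abs, Real.norm_eq_abs,
      abs_of_nonneg hu0, mul_comm u α] at this
    exact this
  refine ⟨?_, fun η hη => ?_⟩
  · obtain ⟨r, hr, hrB, H⟩ := hlin ((α - 1) / 2) (by linarith)
    obtain ⟨y, hy, hmin⟩ := isCompact_Icc.exists_isMinOn (nonempty_Icc.2 hrB) hc.continuousOn
    refine ⟨(1 + α) / 2, h y, ?_, fun u hu => ?_, fun u hu => ?_, fun u => ?_, by linarith,
      hpos y (by linarith [hy.1])⟩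
    · have h1 : UniformContinuous fun s : Icc (0 : ℝ) B => h s :=
        CompactSpace.uniformContinuous_of_continuous (by fun_prop)
      exact h1.comp (LipschitzWith.projIcc hB.le).uniformContinuous
    · rw [clip, projIcc_of_le_left hB.le hu]; exact h0
    · rcases le_total u r with h1 | h1
      · refine (min_le_left _ _).trans ?_
        have := (abs_le.1 (H u hu h1)).1
        linarith
      · refine (min_le_right _ _).trans ?_
        refine hmin ⟨?_, (projIcc 0 B hB.le u).2.2⟩
        rw [coe_projIcc]
        exact le_max_of_le_right (le_min hrB h1)
    · exact hC _ (projIcc 0 B hB.le u).2.1 (projIcc 0 B hB.le u).2.2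
  · obtain ⟨r, hr, -, H⟩ := hlin η hη
    exact ⟨r, hr, H⟩

/-- The integrated equation started at time `a`. -/
theorem IsSol.shift {h φ x : ℝ → ℝ} (hx : IsSol h φ x) (hh : Continuous h) {a : ℝ} (ha : 0 ≤ a)
    {t : ℝ} (ht : 0 ≤ t) : x (a + t) = x (a + 0) + ∫ s in (0 : ℝ)..t, h (x (a + (s - 1))) := by
  have h1 := hx.sub_eq hh ha (add_nonneg ha ht)
  have h2 := intervalIntegral.integral_comp_add_left (a := 0) (b := t)
    (fun s => h (x (s - 1))) a
  simp only [add_sub_assoc, add_zero] at h2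
  rw [add_zero, h2, ← sub_eq_iff_eq_add', h1]

theorem statement_2 (f : ℝ → ℝ) (M : ℝ) (hM : 0 < M)
    (hH : HypH f) (hbd : ∀ y : ℝ, f y ≤ M)
    (hunstable : deriv f 0 < -(Real.pi / 2)) :
    ∃ p : ℝ → ℝ, IsSOP f p ∧ p (-1) = 0 ∧ MonotoneOn p (Icc (-1 : ℝ) 0) ∧
      ∃ z₁ z₂ : ℝ, 0 < z₁ ∧ z₁ < z₂ ∧ p z₁ = 0 ∧ p z₂ = 0 ∧
        (∀ t : ℝ, 0 < t → t ≤ z₂ → p t = 0 → t = z₁ ∨ t = z₂) ∧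
        (∀ t : ℝ, p (t + (z₂ + 1)) = p t) ∧ MinPeriod p (z₂ + 1) := by
  obtain ⟨hfc, hnf, hdiff, -⟩ := hH
  have hpi := Real.pi_gt_three
  have hfpos : ∀ u, u < 0 → 0 < f u := fun u hu => by
    have := hnf u hu.ne; nlinarith
  have hfneg : ∀ u, 0 < u → f u < 0 := fun u hu => by
    have := hnf u hu.ne'; nlinarith
  have hf0 : f 0 = 0 := by
    refine le_antisymm ?_ ?_
    · have hcl : (0 : ℝ) ∈ closure (Ioi (0 : ℝ)) := by rw [closure_Ioi]; exact mem_Ici.2 le_rfl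
      exact closure_minimal (t := {u | f u ≤ 0}) (fun u hu => (hfneg u hu).le)
        (isClosed_le hfc continuous_const) hcl
    · have hcl : (0 : ℝ) ∈ closure (Iio (0 : ℝ)) := by rw [closure_Iio]; exact mem_Iic.2 le_rfl
      exact closure_minimal (t := {u | 0 ≤ f u}) (fun u hu => (hfpos u hu).le)
        (isClosed_le continuous_const hfc) hcl
  obtain ⟨α, hαdef⟩ : ∃ α, α = -deriv f 0 := ⟨_, rfl⟩
  have hα : Real.pi / 2 < α := by linarith
  have hfd : HasDerivAt f (-α) 0 := by
    rw [hαdef, neg_neg]; exact hdiff.self_of_nhds.hasDerivAt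
  obtain ⟨y, -, hy⟩ := isCompact_Icc.exists_isMinOn (nonempty_Icc.2 hM.le) hfc.continuousOn
  obtain ⟨C, hCdef⟩ : ∃ C, C = -f y := ⟨_, rfl⟩
  have hC : ∀ u, 0 ≤ u → u ≤ M → -f u ≤ C := fun u h1 h2 => by
    have : f y ≤ f u := hy ⟨h1, h2⟩
    linarith
  have hC0 : 0 < C := by linarith [hC M hM.le le_rfl, hfneg M hM]
  obtain ⟨⟨c₁, m₁, h₁⟩, hl₁⟩ := clip_feedback (C := C) (α := α) hM (h := fun u => -f u) hfc.neg
    (by simp [hf0]) (fun u hu => by linarith [hfneg u hu]) (by linarith)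
    (HasDerivAt.congr_deriv hfd.neg (neg_neg α)) hC
  have hfd' : HasDerivAt (fun u => f (-u)) α 0 := by
    have h1 : HasDerivAt f (-α) (-0) := by rwa [neg_zero]
    exact HasDerivAt.congr_deriv (HasDerivAt.comp (0 : ℝ) h1 (hasDerivAt_neg (0 : ℝ))) (by simp)
  obtain ⟨⟨c₂, m₂, h₂⟩, hl₂⟩ := clip_feedback (C := M) (α := α) hC0 (h := fun u => f (-u))
    (by fun_prop) (by simp [hf0]) (fun u hu => hfpos _ (by linarith)) (by linarith) hfd'
    (fun u _ _ => hbd _)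
  -- positive half-waves never exceed `M` and negative ones never go below `-C`, so the cut-offs
  -- are invisible to the solution
  set g₁ := clip M hM.le fun u => -f u with hg₁
  set g₂ := clip C hC0.le fun u => f (-u) with hg₂
  obtain ⟨φ, hφ, hfix⟩ := exists_fixed h₁ h₂ hα hl₁ hl₂
  have hq := halfMap_adm h₁ hφ
  have hqeq : ∀ s, -1 ≤ s → halfMap g₁ φ s = -halfSol g₁ φ (halfZero g₁ φ + 1 + s) :=
    fun s hs => halfMap_eq h₁ hφ hs
  have hqC : halfMap g₁ φ 0 ≤ C := halfMap_le h₁ hφ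
  set q := halfMap g₁ φ
  have hφM : φ 0 ≤ M := by rw [← hfix]; exact halfMap_le h₂ hq
  have hφpos : ∀ s, -1 < s → 0 < φ s := fun s hs => by
    rw [← hfix]; exact halfMap_pos h₂ hq hs
  have hφeq : ∀ s, -1 ≤ s → φ s = -halfSol g₂ q (halfZero g₂ q + 1 + s) := fun s hs => by
    rw [← halfMap_eq h₂ hq hs, hfix]
  have hx₁ := halfSol_spec h₁ hφ
  have hz₁ := halfZero_spec h₁ hφ
  have hx₂ := halfSol_spec h₂ hq
  have hz₂ := halfZero_spec h₂ hq
  set x₁ := halfSol g₁ φ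
  set z₁ := halfZero g₁ φ
  set x₂ := halfSol g₂ q
  set z₂ := halfZero g₂ q
  have hz₁0 := hz₁.pos
  have hz₂0 := hz₂.pos
  obtain ⟨x, hx⟩ := exists_isSol f φ hfc hφ.cont
  -- `x` follows the half-wave `x₁` up to time `z₁ + 1`, then `-x₂`
  have hA : ∀ t, -1 ≤ t → t ≤ z₁ + 1 → x t = x₁ t := by
    refine sol_unique f x x₁ (z₁ + 1) (fun t h0 _ => ?_) (fun t h0 ht => ?_) fun t _ h0 => ?_
    · rw [hx.eqn t h0, hx.hist 0 le_rfl]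
    · rw [hx₁.eqn t h0, hx₁.hist 0 le_rfl]
      congr 1
      refine intervalIntegral.integral_congr fun s hs => ?_
      rw [uIcc_of_le h0] at hs
      have hb := hz₁.nonneg hφ hx₁ (t := s - 1) (by linarith [hs.2])
      have hb' := half_le h₁ hφ hx₁ (s - 1)
      simp only [hg₁]
      rw [clip_of_mem hM.le _ hb (by linarith), neg_neg]
    · rw [hx.hist t h0, hx₁.hist t h0]
  have hB : ∀ t, -1 ≤ t → t ≤ z₂ + 1 → x (z₁ + 1 + t) = -x₂ t := by
    refine sol_unique f (fun t => x (z₁ + 1 + t)) (fun t => -x₂ t) (z₂ + 1) (fun t h0 _ => ?_)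
      (fun t h0 ht => ?_) fun t h1 h0 => ?_
    · exact hx.shift hfc (by linarith) h0
    · rw [hx₂.eqn t h0, hx₂.hist 0 le_rfl, neg_add, ← intervalIntegral.integral_neg]
      congr 1
      refine intervalIntegral.integral_congr fun s hs => ?_
      rw [uIcc_of_le h0] at hs
      have hb := hz₂.nonneg hq hx₂ (t := s - 1) (by linarith [hs.2])
      have hb' := half_le h₂ hq hx₂ (s - 1)
      simp only [hg₂]
      rw [clip_of_mem hC0.le _ hb (by linarith), neg_neg]
    · rw [hA _ (by linarith) (by linarith), hx₂.hist t h0, hqeq t h1, neg_neg]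
  have hx0 : ∀ t, t ≤ 0 → x t = φ t := hx.hist
  refine sop_of_orbit (x := x) (T := z₁ + 1 + (z₂ + 1)) (z := z₁)
    (fun t ht => hx.hasDerivAt hfc ht) ?_ hz₁0 (by linarith) ?_ ?_ ?_ ?_ ?_
  · intro t ht
    rw [add_comm]
    refine sol_unique f (fun t => x (z₁ + 1 + (z₂ + 1) + t)) x t (fun t h0 _ => ?_)
      (fun t h0 _ => ?_) (fun t h1 h0 => ?_) t ht le_rfl
    · exact hx.shift hfc (by linarith) h0
    · rw [hx.eqn t h0, hx.hist 0 le_rfl]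
    · rw [add_assoc, hB _ (by linarith) (by linarith), hx0 t h0, hφeq t h1]
  · rw [hx0 _ (by norm_num), hφ.left _ le_rfl]
  · rw [hA _ (by linarith) (by linarith), hz₁.zero]
  · intro t h1 h2
    rcases le_total t 0 with h | h
    · rw [hx0 t h]; exact hφpos t h1
    · rw [hA t (by linarith) (by linarith)]; exact hz₁.before t h h2
  · intro t h1 h2
    rcases le_total t (z₁ + 1) with h | h
    · rw [hA t (by linarith) h]; exact hz₁.after t h1
    · have := hB (t - (z₁ + 1)) (by linarith) (by linarith)
      rw [add_sub_cancel] at this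
      rw [this]
      linarith [hz₂.before (t - (z₁ + 1)) (by linarith) (by linarith)]
  · intro s hs t ht hst
    rw [hx0 s hs.2, hx0 t ht.2]
    exact hφ.mono hst
end

section
/- Suppose f satisfies (H), is locally Lipschitz and odd, and that ∫₀^T |f(s)| ds → ∞ as T → ∞. Suppose the limits a = lim_{x→0} f(x)/x and A = lim_{x→∞} f(x)/x exist, and that either A < -π/2 < a or a < -π/2 < A. Then the equation x'(t) = f(x(t-1)) has a Kaplan–Yorke solution, i.e., an SOP solution x of minimal period 4 satisfying x(t) = -x(t-2) for all t ∈ ℝ. -/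
/-!
Put `g = -f`. If `(x, y)` solves the Hamiltonian system `x' = -g(y)`, `y' = g(x)` and a quarter of
its period is `1`, the symmetry of the system under rotation by a right angle forces
`y(t) = x(t - 1)` and `x(t - 2) = -x(t)`, so `x` is a Kaplan–Yorke solution. It remains to find an
orbit whose quarter period is exactly `1`.

Let `H` be the odd function with `H² / 2 = ∫₀ˣ g` (`exists_chart`). Since `f'(0) < 0`, it is a `C¹`
diffeomorphism of the line; let `q` be its inverse and `k = q' > 0`, so that `g(q(u)) = u / k(u)`.
In the coordinates `x = q(ρ cos φ)`, `y = q(ρ sin φ)` the system becomes `ρ' = 0` and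
`φ' = 1 / (k(ρ cos φ) k(ρ sin φ))`. Hence time is the integral of `k(ρ cos s) k(ρ sin s)` in the
angle, with no singularity, and inverting it gives the orbit on all of `ℝ` (`isKY_of_quarter`).

The quarter period `I(ρ) = ∫ k(ρ cos s) k(ρ sin s) ds` over `[0, π/2]` is continuous in `ρ`, equals
`π / (2|a|)` at `ρ = 0`, and tends to `π / (2|A|)` as `ρ → ∞` when `A < 0` (`tendsto_quarter`).
When `A = 0` a bound on the speed shows that `I` exceeds `1` somewhere (`le_mul_quarter`). The
intermediate value theorem gives `I(ρ) = 1`, and `ρ ≠ 0` because `|a| ≠ π / 2`.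
-/

open Set Filter

/-! ### The energy coordinate -/

/-- A surjective function with positive derivative has a global differentiable inverse. -/
lemma exists_inverse (P w : ℝ → ℝ) (hP : ∀ x, HasDerivAt P (w x) x) (hw : ∀ x, 0 < w x)
    (hs : Function.Surjective P) :
    ∃ Q : ℝ → ℝ, (∀ x, Q (P x) = x) ∧ (∀ u, P (Q u) = u) ∧ StrictMono Q ∧
      ∀ u, HasDerivAt Q (w (Q u))⁻¹ u := by
  have hm : StrictMono P := strictMono_of_hasDerivAt_pos hP hw
  let e := hm.orderIsoOfSurjective P hs
  have he : ∀ x, e x = P x := fun x => rfl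
  have h1 : ∀ u, P (e.symm u) = u := fun u => by rw [← he, e.apply_symm_apply]
  refine ⟨e.symm, fun x => by rw [← he, e.symm_apply_apply], h1, e.symm.strictMono, fun u => ?_⟩
  exact HasDerivAt.of_local_left_inverse e.symm.continuous.continuousAt (hP _) (hw _).ne'
    (Eventually.of_forall h1)

lemma hasDerivAt_primitive {g : ℝ → ℝ} (hg : Continuous g) (x : ℝ) :
    HasDerivAt (fun u => ∫ s in (0 : ℝ)..u, g s) (g x) x :=
  (hg.integral_hasStrictDerivAt 0 x).hasDerivAt

/-- At the origin the potential of `g` is asymptotic to `α x² / 2`. -/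
lemma tendsto_potential_zero {g : ℝ → ℝ} (hg : Continuous g) {α : ℝ}
    (h0 : Tendsto (fun x => g x / x) (nhdsWithin 0 {(0 : ℝ)}ᶜ) (nhds α)) :
    Tendsto (fun x => 2 * (∫ s in (0 : ℝ)..x, g s) / x ^ 2) (nhdsWithin 0 {(0 : ℝ)}ᶜ)
      (nhds α) := by
  have hc : Continuous (fun x => 2 * (∫ s in (0 : ℝ)..x, g s)) :=
    continuous_iff_continuousAt.2
      fun x => ((hasDerivAt_primitive hg x).const_mul 2).continuousAt
  refine HasDerivAt.lhopital_zero_nhdsNE (f' := fun x => 2 * g x) (g' := fun x => 2 * x)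
    (Eventually.of_forall fun x => (hasDerivAt_primitive hg x).const_mul 2)
    (Eventually.of_forall fun x => by simpa using hasDerivAt_pow 2 x) ?_ ?_ ?_ ?_
  · filter_upwards [self_mem_nhdsWithin] with x hx
    exact mul_ne_zero two_ne_zero hx
  · have := hc.tendsto 0
    simp only [intervalIntegral.integral_same, mul_zero] at this
    exact this.mono_left nhdsWithin_le_nhds
  · have := (continuous_pow (M := ℝ) 2).tendsto 0
    simp only [ne_eq, OfNat.ofNat_ne_zero, not_false_eq_true, zero_pow] at this
    exact this.mono_left nhdsWithin_le_nhds
  · refine h0.congr fun x => ?_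
    rw [mul_div_mul_left _ _ two_ne_zero]

lemma potential_le {F g : ℝ → ℝ} (hF : ∀ x, HasDerivAt F (g x) x) {b X : ℝ}
    (hb : ∀ x, X ≤ x → g x ≤ b * x) {x : ℝ} (hx : X ≤ x) :
    2 * F x ≤ b * x ^ 2 + (2 * F X - b * X ^ 2) := by
  have hd : ∀ y, HasDerivAt (fun y => 2 * F y - b * y ^ 2) (2 * g y - b * (2 * y)) y := by
    intro y
    have := ((hF y).const_mul 2).sub ((hasDerivAt_pow 2 y).const_mul b)
    refine this.congr_deriv ?_
    simp
  have := antitoneOn_of_deriv_nonpos (convex_Ici X)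
    (f := fun y => 2 * F y - b * y ^ 2)
    (fun y _ => (hd y).continuousAt.continuousWithinAt)
    (fun y _ => (hd y).differentiableAt.differentiableWithinAt)
    (fun y hy => by
      rw [interior_Ici] at hy
      rw [(hd y).deriv]
      have := hb y (le_of_lt hy)
      linarith) (mem_Ici.2 le_rfl) (mem_Ici.2 hx) hx
  simp only at this
  linarith

/-- At infinity the potential of `g` is asymptotic to `α x² / 2`. -/
lemma tendsto_potential_top {F g : ℝ → ℝ} (hF : ∀ x, HasDerivAt F (g x) x) {α : ℝ}
    (hA : Tendsto (fun x => g x / x) atTop (nhds α)) :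
    Tendsto (fun x => 2 * F x / x ^ 2) atTop (nhds α) := by
  have key : ∀ (F g : ℝ → ℝ) (α : ℝ), (∀ x, HasDerivAt F (g x) x) →
      Tendsto (fun x => g x / x) atTop (nhds α) → ∀ b, α < b →
      ∀ᶠ x in atTop, 2 * F x / x ^ 2 < b := by
    intro F g α hF hA b hb
    obtain ⟨c, hc1, hc2⟩ := exists_between hb
    obtain ⟨X, hX⟩ := eventually_atTop.1 ((hA.eventually_lt_const hc1).and
      (eventually_gt_atTop 0))
    have hle : ∀ x, X ≤ x → g x ≤ c * x := fun x hx => by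
      have := (hX x hx).1
      rw [div_lt_iff₀ (hX x hx).2] at this
      exact this.le
    have hsq : Tendsto (fun x : ℝ => (b - c) * x ^ 2) atTop atTop :=
      (tendsto_pow_atTop two_ne_zero).const_mul_atTop (sub_pos.2 hc2)
    filter_upwards [eventually_ge_atTop X, eventually_gt_atTop 0,
      hsq.eventually_gt_atTop (2 * F X - c * X ^ 2)] with x h1 h2 h3
    rw [div_lt_iff₀ (by positivity)]
    have := potential_le hF hle h1
    linarith
  refine tendsto_order.2 ⟨fun b hb => ?_, fun b hb => key F g α hF hA b hb⟩
  have := key (fun x => -F x) (fun x => -g x) (-α) (fun x => (hF x).neg)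
    (by simpa [neg_div] using hA.neg) (-b) (by linarith)
  filter_upwards [this] with x hx
  have h : 2 * -F x / x ^ 2 = -(2 * F x / x ^ 2) := by ring
  linarith

/-- The energy coordinate: a surjective odd function `H` whose derivative `h` is continuous and
positive, including at the origin, and satisfies `H h = g`, so that `H² / 2` is the potential of
`g`. -/
lemma exists_chart {g : ℝ → ℝ} (hg : Continuous g) (hodd : ∀ x, g (-x) = -g x)
    (hpos : ∀ x, 0 < x → 0 < g x) {α : ℝ} (hα : 0 < α)
    (h0 : Tendsto (fun x => g x / x) (nhdsWithin 0 {(0 : ℝ)}ᶜ) (nhds α))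
    (hinf : Tendsto (fun T => ∫ s in (0 : ℝ)..T, g s) atTop atTop) :
    ∃ H h : ℝ → ℝ, Continuous h ∧ (∀ x, 0 < h x) ∧ (∀ x, HasDerivAt H (h x) x) ∧
      (∀ x, H (-x) = -H x) ∧ (∀ x, h (-x) = h x) ∧ (∀ x, H x * h x = g x) ∧
      (∀ x, 0 < x → h x = g x / √(2 * ∫ s in (0 : ℝ)..x, g s)) ∧
      Tendsto H atTop atTop ∧ Function.Surjective H ∧ h 0 = √α := by
  set F : ℝ → ℝ := fun x => ∫ s in (0 : ℝ)..x, g s with hFdef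
  have hF : ∀ x, HasDerivAt F (g x) x := hasDerivAt_primitive hg
  have hg0 : g 0 = 0 := by
    have := hodd 0
    simp only [neg_zero] at this
    linarith
  have hF0 : F 0 = 0 := by simp [hFdef]
  have hFeven : ∀ x, F (-x) = F x := by
    intro x
    have h1 := intervalIntegral.integral_comp_neg (a := 0) (b := -x) g
    simp only [hodd, intervalIntegral.integral_neg, neg_neg, neg_zero] at h1
    rw [intervalIntegral.integral_symm 0 x] at h1
    simp only [hFdef]
    linarith
  have hFpos' : ∀ x, 0 < x → 0 < F x := fun x hx =>
    intervalIntegral.intervalIntegral_pos_of_pos_on (hg.intervalIntegrable _ _)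
      (fun y hy => hpos y hy.1) hx
  have hFpos : ∀ x, x ≠ 0 → 0 < F x := by
    intro x hx
    rcases lt_or_gt_of_ne hx with h | h
    · rw [← hFeven]; exact hFpos' _ (by linarith)
    · exact hFpos' _ h
  have hFc : Continuous F := continuous_iff_continuousAt.2 fun x => (hF x).continuousAt
  have hneg : ∀ x, x < 0 → g x < 0 := fun x hx => by
    have := hpos (-x) (by linarith)
    rw [hodd] at this
    linarith
  let H : ℝ → ℝ := fun x => Real.sign x * √(2 * F x)
  let h : ℝ → ℝ := fun x => if x = 0 then √α else |g x| / √(2 * F x)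
  have hh0 : h 0 = √α := if_pos rfl
  have hhne : ∀ x, x ≠ 0 → h x = |g x| / √(2 * F x) := fun x hx => if_neg hx
  have hsq : ∀ x, x ≠ 0 → 0 < √(2 * F x) := fun x hx =>
    Real.sqrt_pos.2 (by linarith [hFpos x hx])
  have hgne : ∀ x, x ≠ 0 → 0 < |g x| := by
    intro x hx
    rcases lt_or_gt_of_ne hx with h | h
    · exact abs_pos.2 (hneg x h).ne
    · exact abs_pos.2 (hpos x h).ne'
  have hhpos : ∀ x, 0 < h x := by
    intro x
    by_cases hx : x = 0
    · rw [hx, hh0]; exact Real.sqrt_pos.2 hα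
    · rw [hhne x hx]; exact div_pos (hgne x hx) (hsq x hx)
  have hhc : Continuous h := by
    refine continuous_iff_continuousAt.2 fun x => ?_
    by_cases hx : x = 0
    · subst hx
      rw [continuousAt_iff_punctured_nhds, hh0]
      have h2 := (tendsto_potential_zero hg h0).sqrt
      have h3 := h0.abs.div h2 (Real.sqrt_pos.2 hα).ne'
      rw [abs_of_pos hα, Real.div_sqrt] at h3
      refine h3.congr' ?_
      filter_upwards [self_mem_nhdsWithin] with x hx
      have hx : x ≠ 0 := hx
      rw [Pi.div_apply, hhne x hx, Real.sqrt_div (by linarith [hFpos x hx]), Real.sqrt_sq_eq_abs,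
        abs_div, div_div_div_cancel_right₀ (abs_pos.2 hx).ne']
    · have : ContinuousAt (fun x => |g x| / √(2 * F x)) x :=
        hg.abs.continuousAt.div (by fun_prop) (hsq x hx).ne'
      refine this.congr ?_
      filter_upwards [isOpen_ne.mem_nhds hx] with y hy
      exact (hhne y hy).symm
  have hHc0 : ContinuousAt H 0 := by
    have h1 : Tendsto (fun x => √(2 * F x)) (nhds 0) (nhds 0) := by
      have : Continuous (fun x => √(2 * F x)) := by fun_prop
      simpa [hF0] using this.tendsto 0
    have h2 : H 0 = 0 := by simp [H]
    rw [ContinuousAt, h2]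
    refine squeeze_zero_norm (fun x => ?_) h1
    rw [Real.norm_eq_abs, abs_mul, abs_of_nonneg (Real.sqrt_nonneg _)]
    refine mul_le_of_le_one_left (Real.sqrt_nonneg _) ?_
    rcases Real.sign_apply_eq x with h | h | h <;> rw [h] <;> norm_num
  have hHtop : Tendsto H atTop atTop := by
    have h1 : Tendsto (fun x => √(2 * F x)) atTop atTop :=
      Real.tendsto_sqrt_atTop.comp (hinf.const_mul_atTop two_pos)
    refine h1.congr' ?_
    filter_upwards [eventually_gt_atTop 0] with x hx
    simp [H, Real.sign_of_pos hx]
  have hHodd : ∀ x, H (-x) = -H x := fun x => by simp [H, hFeven, Real.sign_neg]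
  have hder : ∀ x, x ≠ 0 → HasDerivAt H (h x) x := by
    intro x hx
    have h1 : HasDerivAt (fun y => √(2 * F y)) (2 * g x / (2 * √(2 * F x))) x :=
      ((hF x).const_mul 2).sqrt (by linarith [hFpos x hx])
    rw [mul_div_mul_left _ _ two_ne_zero] at h1
    rcases lt_or_gt_of_ne hx with hl | hl
    · refine (h1.neg.congr_of_eventuallyEq ?_).congr_deriv ?_
      · filter_upwards [Iio_mem_nhds hl] with y hy
        simp [H, Real.sign_of_neg hy]
      · rw [hhne x hx, abs_of_neg (hneg x hl), neg_div]
    · refine (h1.congr_of_eventuallyEq ?_).congr_deriv ?_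
      · filter_upwards [Ioi_mem_nhds hl] with y hy
        simp [H, Real.sign_of_pos hy]
      · rw [hhne x hx, abs_of_pos (hpos x hl)]
  have hder' : ∀ x, HasDerivAt H (h x) x := by
    intro x
    by_cases hx : x = 0
    · subst hx
      exact hasDerivAt_of_hasDerivAt_of_ne hder hHc0 hhc.continuousAt
    · exact hder x hx
  refine ⟨H, h, hhc, hhpos, hder', hHodd, ?_, ?_, ?_, hHtop, ?_, hh0⟩
  · intro x
    by_cases hx : x = 0
    · simp [hx]
    · rw [hhne x hx, hhne (-x) (neg_ne_zero.2 hx), hFeven, hodd, abs_neg]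
  · intro x
    by_cases hx : x = 0
    · simp [hx, H, hg0]
    · rw [hhne x hx]
      simp only [H]
      rw [mul_assoc, mul_div_cancel₀ _ (hsq x hx).ne']
      rcases lt_or_gt_of_ne hx with hl | hl
      · rw [Real.sign_of_neg hl, abs_of_neg (hneg x hl)]; ring
      · rw [Real.sign_of_pos hl, abs_of_pos (hpos x hl)]; ring
  · intro x hx
    rw [hhne x hx.ne', abs_of_pos (hpos x hx)]
  · refine Continuous.surjective
      (continuous_iff_continuousAt.2 fun x => (hder' x).continuousAt) hHtop ?_
    have := tendsto_neg_atTop_atBot.comp (hHtop.comp tendsto_neg_atBot_atTop)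
    refine this.congr fun x => ?_
    simp [hHodd]

/-! ### The quarter period and the orbit -/

open Real in
/-- If the quarter period `∫ k(ρ cos s) k(ρ sin s)` over `[0, π/2]` equals `1`, the orbit of energy
`ρ² / 2` is a Kaplan–Yorke solution. -/
lemma isKY_of_quarter {f q k : ℝ → ℝ} (hk : Continuous k) (hkpos : ∀ u, 0 < k u)
    (hkeven : ∀ u, k (-u) = k u) (hq : ∀ u, HasDerivAt q (k u) u) (hqodd : ∀ u, q (-u) = -q u)
    (hqk : ∀ u, f (q u) = -(u / k u)) {ρ : ℝ} (hρ : ρ ≠ 0)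
    (hI : ∫ s in (0 : ℝ)..(π / 2), k (ρ * cos s) * k (ρ * sin s) = 1) :
    ∃ x : ℝ → ℝ, IsKY f x := by
  have hqm : StrictMono q := strictMono_of_hasDerivAt_pos hq hkpos
  have hq0 : q 0 = 0 := by
    have := hqodd 0
    simp only [neg_zero] at this
    linarith
  set W : ℝ → ℝ := fun s => k (ρ * cos s) * k (ρ * sin s) with hW
  have hWc : Continuous W := by fun_prop
  have hWpos : ∀ s, 0 < W s := fun s => mul_pos (hkpos _) (hkpos _)
  have hWper : Function.Periodic W (π / 2) := by
    intro s
    simp only [hW, cos_add_pi_div_two, sin_add_pi_div_two, mul_neg, hkeven]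
    ring
  set Θ : ℝ → ℝ := fun φ => ∫ s in (0 : ℝ)..φ, W s with hΘ
  have hΘd : ∀ φ, HasDerivAt Θ (W φ) φ := hasDerivAt_primitive hWc
  have hΘ0 : Θ 0 = 0 := by simp [hΘ]
  have hΘadd : ∀ φ, Θ (φ + π / 2) = Θ φ + 1 := by
    intro φ
    have h1 := hWper.intervalIntegral_add_eq φ 0
    rw [zero_add, hI] at h1
    rw [← h1]
    exact (intervalIntegral.integral_add_adjacent_intervals (hWc.intervalIntegrable _ _)
      (hWc.intervalIntegrable _ _)).symm
  have hΘc : Continuous Θ := continuous_iff_continuousAt.2 fun x => (hΘd x).continuousAt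
  have hΘnat : ∀ n : ℕ, Θ (n * (π / 2)) = n := by
    intro n
    induction n with
    | zero => simpa using hΘ0
    | succ n ih =>
      rw [Nat.cast_succ, add_mul, one_mul, hΘadd, ih]
  have hΘnat' : ∀ n : ℕ, Θ (-(n * (π / 2))) = -n := by
    intro n
    induction n with
    | zero => simpa using hΘ0
    | succ n ih =>
      have h1 := hΘadd (-((n + 1 : ℕ) * (π / 2)))
      have h2 : -((n + 1 : ℕ) * (π / 2)) + π / 2 = -(n * (π / 2)) := by push_cast; ring
      rw [h2, ih] at h1
      push_cast at h1 ⊢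
      linarith
  have hΘs : Function.Surjective Θ := by
    intro t
    obtain ⟨n, hn⟩ := exists_nat_ge |t|
    have h1 := abs_le.1 hn
    exact mem_range_of_exists_le_of_exists_ge hΘc ⟨_, (hΘnat' n).trans_le h1.1⟩
      ⟨_, h1.2.trans_eq (hΘnat n).symm⟩
  obtain ⟨φ, hφΘ, hΘφ, hφm, hφd⟩ := exists_inverse Θ W hΘd hWpos hΘs
  have hφ0 : φ 0 = 0 := by simpa [hΘ0] using hφΘ 0
  have hφadd : ∀ t, φ (t + 1) = φ t + π / 2 := by
    intro t
    rw [← hφΘ (φ t + π / 2), hΘadd, hΘφ]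
  have hφ1 : ∀ t, φ (t - 1) = φ t - π / 2 := by
    intro t
    have := hφadd (t - 1)
    rw [sub_add_cancel] at this
    linarith
  have hφ2 : ∀ t, φ (t - 2) = φ t - π := by
    intro t
    rw [show t - 2 = t - 1 - 1 by ring, hφ1, hφ1]
    ring
  have hφ2' : ∀ t, φ (t + 2) = φ t + π := by
    intro t
    rw [show t + 2 = t + 1 + 1 by ring, hφadd, hφadd]
    ring
  have hφ4 : ∀ t, φ (t + 4) = φ t + 2 * π := by
    intro t
    rw [show t + 4 = t + 2 + 2 by ring, hφ2', hφ2']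
    ring
  set x : ℝ → ℝ := fun t => q (ρ * cos (φ t)) with hx
  have hxz : ∀ t, x t = 0 → cos (φ t) = 0 := by
    intro t ht
    have : ρ * cos (φ t) = 0 := hqm.injective (ht.trans hq0.symm)
    exact (mul_eq_zero.1 this).resolve_left hρ
  have hx2 : ∀ t, x t = -x (t - 2) := by
    intro t
    simp only [hx, hφ2, cos_sub_pi, mul_neg, hqodd, neg_neg]
  have hx4 : ∀ t, x (t + 4) = x t := by
    intro t
    simp only [hx, hφ4, cos_add_two_pi]
  have hxd : ∀ t, HasDerivAt x (f (x (t - 1))) t := by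
    intro t
    have h1 := (hq (ρ * cos (φ t))).comp t (((hφd t).cos).const_mul ρ)
    refine h1.congr_deriv ?_
    simp only [hx, hφ1, cos_sub_pi_div_two, hqk, hW]
    have h2 := (hkpos (ρ * cos (φ t))).ne'
    have h3 := (hkpos (ρ * sin (φ t))).ne'
    field_simp
  -- Successive zeros are two time units apart, the time needed for the angle to gain `π`.
  have hsep : ∀ z z', x z = 0 → x z' = 0 → z < z' → z + 2 ≤ z' := by
    intro z z' hz hz' hlt
    by_contra hcon
    push Not at hcon
    have h1 := hφm hlt
    have h2 := hφm hcon
    rw [hφ2'] at h2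
    have h3 : sin (φ z' - φ z) = 0 := by
      rw [sin_sub, hxz z hz, hxz z' hz']; ring
    exact (sin_pos_of_pos_of_lt_pi (by linarith) (by linarith)).ne' h3
  refine ⟨x, ⟨hxd, ⟨4, by norm_num, hx4⟩, ⟨0, 2, ?_⟩, ?_⟩, ⟨by norm_num, hx4, ?_⟩, hx2⟩
  · intro h
    have h1 := hx2 2
    rw [sub_self] at h1
    have h2 := hxz 0 (by linarith)
    rw [hφ0, cos_zero] at h2
    exact one_ne_zero h2
  · intro z z' hz hz' hne
    rcases lt_or_gt_of_ne hne with hl | hl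
    · have := hsep z z' hz hz' hl
      rw [abs_sub_comm, abs_of_pos (by linarith)]
      linarith
    · have := hsep z' z hz' hz hl
      rw [abs_of_pos (by linarith)]
      linarith
  · intro T hT hper
    by_contra hcon
    push Not at hcon
    have h1 := hper 0
    rw [zero_add] at h1
    have h2 : cos (φ T) = 1 := by
      have := mul_left_cancel₀ hρ (hqm.injective h1)
      rwa [hφ0, cos_zero] at this
    have h3 := hφm hT
    have h4 := hφm hcon
    have h5 := hφ4 0
    rw [zero_add] at h5
    rw [hφ0] at h3 h5
    have := (cos_eq_one_iff_of_lt_of_lt (by linarith) (by linarith)).1 h2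
    linarith

open Real in
/-- If `k` tends to a finite limit, the quarter period converges as the amplitude grows. -/
lemma tendsto_quarter {k : ℝ → ℝ} (hk : Continuous k) (hkeven : ∀ u, k (-u) = k u) {l : ℝ}
    (hl : Tendsto k atTop (nhds l)) :
    Tendsto (fun ρ => ∫ s in (0 : ℝ)..(π / 2), k (ρ * cos s) * k (ρ * sin s)) atTop
      (nhds (π / 2 * (l * l))) := by
  obtain ⟨C, hC⟩ : ∃ C, ∀ u, |k u| ≤ C := by
    obtain ⟨X, hX⟩ := eventually_atTop.1
      ((hl.abs.eventually_lt_const (lt_add_one |l|)).and (eventually_ge_atTop 0))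
    obtain ⟨D, hD⟩ := (isCompact_Icc (a := (0 : ℝ)) (b := X)).exists_bound_of_continuousOn
      hk.continuousOn
    have hnn : ∀ u, 0 ≤ u → |k u| ≤ max (|l| + 1) D := by
      intro u hu
      rcases le_total X u with h | h
      · exact (hX u h).1.le.trans (le_max_left _ _)
      · exact (hD u ⟨hu, h⟩).trans (le_max_right _ _)
    refine ⟨max (|l| + 1) D, fun u => ?_⟩
    rcases le_total 0 u with h | h
    · exact hnn u h
    · rw [← hkeven]; exact hnn _ (by linarith)
  have h1 : ∫ _ in (0 : ℝ)..(π / 2), l * l = π / 2 * (l * l) := by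
    rw [intervalIntegral.integral_const, sub_zero, smul_eq_mul]
  rw [← h1]
  refine intervalIntegral.tendsto_integral_filter_of_dominated_convergence (fun _ => C * C)
    (Eventually.of_forall fun ρ => ?_) (Eventually.of_forall fun ρ => ?_)
    intervalIntegrable_const ?_
  · exact Continuous.aestronglyMeasurable (by fun_prop)
  · refine Eventually.of_forall fun s _ => ?_
    rw [Real.norm_eq_abs, abs_mul]
    exact mul_le_mul (hC _) (hC _) (abs_nonneg _) ((abs_nonneg _).trans (hC 0))
  · have hne : ∀ᵐ s : ℝ, s ≠ π / 2 := by
      simp [MeasureTheory.ae_iff]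
    filter_upwards [hne] with s hs hmem
    rw [uIoc_of_le (by positivity)] at hmem
    have hlt := lt_of_le_of_ne hmem.2 hs
    have hc : 0 < cos s := cos_pos_of_mem_Ioo ⟨by linarith [pi_pos, hmem.1], hlt⟩
    have hs' : 0 < sin s := sin_pos_of_pos_of_lt_pi hmem.1 (by linarith [pi_pos])
    exact (hl.comp (tendsto_id.atTop_mul_const hc)).mul
      (hl.comp (tendsto_id.atTop_mul_const hs'))

open Real in
/-- The first coordinate covers the distance `q ρ` at speed at most `M` during a quarter period. -/
lemma le_mul_quarter {g q k : ℝ → ℝ} (hk : Continuous k) (hkpos : ∀ u, 0 < k u)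
    (hq : ∀ u, HasDerivAt q (k u) u) (hq0 : q 0 = 0) (hqk : ∀ u, k u * g (q u) = u)
    {ρ M : ℝ} (hρ : 0 ≤ ρ) (hM : ∀ y, 0 ≤ y → y ≤ q ρ → g y ≤ M) :
    q ρ ≤ M * ∫ s in (0 : ℝ)..(π / 2), k (ρ * cos s) * k (ρ * sin s) := by
  have hqm : StrictMono q := strictMono_of_hasDerivAt_pos hq hkpos
  have h1 : ∫ s in (0 : ℝ)..(π / 2), k (ρ * cos s) * (ρ * sin s) = q ρ := by
    have hd : ∀ s, HasDerivAt (fun s => -q (ρ * cos s)) (k (ρ * cos s) * (ρ * sin s)) s := by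
      intro s
      have := ((hq (ρ * cos s)).comp s ((hasDerivAt_cos s).const_mul ρ)).neg
      refine this.congr_deriv ?_
      ring
    rw [intervalIntegral.integral_eq_sub_of_hasDerivAt (fun s _ => hd s)
      (Continuous.intervalIntegrable (by fun_prop) _ _)]
    simp [hq0]
  rw [← intervalIntegral.integral_const_mul]
  nth_rewrite 1 [← h1]
  refine intervalIntegral.integral_mono_on (by positivity)
    (Continuous.intervalIntegrable (by fun_prop) _ _)
    (Continuous.intervalIntegrable (by fun_prop) _ _) fun s hs => ?_
  have hs0 : 0 ≤ sin s := sin_nonneg_of_nonneg_of_le_pi hs.1 (by linarith [hs.2, pi_pos])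
  have h2 : g (q (ρ * sin s)) ≤ M := by
    refine hM _ ?_ (hqm.monotone (mul_le_of_le_one_right hρ (sin_le_one s)))
    rw [← hq0]
    exact hqm.monotone (mul_nonneg hρ hs0)
  have h3 : ρ * sin s ≤ k (ρ * sin s) * M := by
    nth_rewrite 1 [← hqk (ρ * sin s)]
    exact mul_le_mul_of_nonneg_left h2 (hkpos _).le
  calc _ ≤ k (ρ * cos s) * (k (ρ * sin s) * M) :=
        mul_le_mul_of_nonneg_left h3 (hkpos _).le
    _ = _ := by ring

theorem statement_3 (f : ℝ → ℝ) (hH : HypH f) (hlip : LocallyLipschitz f)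
    (hodd : ∀ x : ℝ, f (-x) = -f x)
    (hint : Tendsto (fun T : ℝ => ∫ s in (0 : ℝ)..T, |f s|) atTop atTop)
    (a A : ℝ)
    (ha : Tendsto (fun x : ℝ => f x / x) (nhdsWithin 0 {(0 : ℝ)}ᶜ) (nhds a))
    (hA : Tendsto (fun x : ℝ => f x / x) atTop (nhds A))
    (hcross : (A < -(Real.pi / 2) ∧ -(Real.pi / 2) < a) ∨
      (a < -(Real.pi / 2) ∧ -(Real.pi / 2) < A)) :
    ∃ x : ℝ → ℝ, IsKY f x := by
  obtain ⟨hf, hfb, hfd, hf0⟩ := hH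
  have hpi := Real.pi_pos
  have hpi3 := Real.pi_gt_three
  have hf00 : f 0 = 0 := by
    have := hodd 0
    simp only [neg_zero] at this
    linarith
  have ha0 : a < 0 := by
    have h1 := hasDerivAt_iff_tendsto_slope.1 hfd.self_of_nhds.hasDerivAt
    have h2 : slope f 0 = fun x => f x / x := by
      funext x
      simp [slope_def_field, hf00]
    rw [h2] at h1
    exact (tendsto_nhds_unique ha h1).trans_lt hf0
  have hneg : ∀ x, 0 < x → f x < 0 := fun x hx => by
    have := hfb x hx.ne'
    exact (pos_iff_neg_of_mul_neg this).1 hx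
  have hA0 : A ≤ 0 := by
    refine le_of_tendsto hA ?_
    filter_upwards [eventually_gt_atTop 0] with x hx
    exact (div_neg_of_neg_of_pos (hneg x hx) hx).le
  set g : ℝ → ℝ := fun x => -f x with hg
  have hgc : Continuous g := hf.neg
  have hgpos : ∀ x, 0 < x → 0 < g x := fun x hx => neg_pos.2 (hneg x hx)
  have hg0 : Tendsto (fun x => g x / x) (nhdsWithin 0 {(0 : ℝ)}ᶜ) (nhds (-a)) := by
    simpa [hg, neg_div] using ha.neg
  have hgA : Tendsto (fun x => g x / x) atTop (nhds (-A)) := by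
    simpa [hg, neg_div] using hA.neg
  have hginf : Tendsto (fun T => ∫ s in (0 : ℝ)..T, g s) atTop atTop := by
    refine hint.congr' ?_
    filter_upwards [eventually_ge_atTop 0] with T hT
    refine intervalIntegral.integral_congr fun s hs => ?_
    rw [uIcc_of_le hT] at hs
    rcases hs.1.eq_or_lt with h | h
    · simp [hg, ← h, hf00]
    · exact abs_of_neg (hneg s h)
  obtain ⟨H, h, hhc, hhpos, hHd, hHodd, hheven, hHh, hhx, hHtop, hHs, hh0⟩ :=
    exists_chart hgc (fun x => by simp [hg, hodd]) hgpos (neg_pos.2 ha0) hg0 hginf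
  obtain ⟨q, hqH, hHq, hqm, hqd⟩ := exists_inverse H h hHd hhpos hHs
  have hqc : Continuous q := continuous_iff_continuousAt.2 fun u => (hqd u).continuousAt
  have hqodd : ∀ u, q (-u) = -q u := by
    intro u
    rw [← hqH (-q u), hHodd, hHq]
  have hH0 : H 0 = 0 := by
    have := hHodd 0
    simp only [neg_zero] at this
    linarith
  have hq0 : q 0 = 0 := by simpa [hH0] using hqH 0
  set k : ℝ → ℝ := fun u => (h (q u))⁻¹ with hk
  have hkc : Continuous k := (hhc.comp hqc).inv₀ fun u => (hhpos _).ne'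
  have hkpos : ∀ u, 0 < k u := fun u => inv_pos.2 (hhpos _)
  have hkeven : ∀ u, k (-u) = k u := fun u => by simp only [hk, hqodd, hheven]
  have hgq : ∀ u, g (q u) = u / k u := by
    intro u
    rw [← hHh, hHq]
    simp [hk]
  set I : ℝ → ℝ :=
    fun ρ => ∫ s in (0 : ℝ)..(Real.pi / 2), k (ρ * Real.cos s) * k (ρ * Real.sin s) with hI
  have hIc : Continuous I := by
    refine intervalIntegral.continuous_parametric_intervalIntegral_of_continuous' ?_ _ _
    simp only [Function.uncurry_def]
    fun_prop
  have hI0 : I 0 = Real.pi / 2 / (-a) := by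
    simp only [hI, hk, zero_mul, hq0, hh0, intervalIntegral.integral_const, smul_eq_mul, sub_zero]
    rw [← mul_inv, Real.mul_self_sqrt (by linarith), ← div_eq_mul_inv]
  -- For `A < 0` the quarter period tends to `π / (2|A|)` at large amplitude.
  have hItop : A < 0 → Tendsto I atTop (nhds (Real.pi / 2 / (-A))) := by
    intro hA1
    have hsA : 0 < √(-A) := Real.sqrt_pos.2 (by linarith)
    have h1 := (tendsto_potential_top (hasDerivAt_primitive hgc) hgA).sqrt
    have h2 : Tendsto h atTop (nhds √(-A)) := by
      have h3 := hgA.div h1 hsA.ne'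
      rw [Real.div_sqrt] at h3
      refine h3.congr' ?_
      filter_upwards [eventually_gt_atTop 0] with x hx
      rw [Pi.div_apply, hhx x hx, Real.sqrt_div' _ (sq_nonneg x), Real.sqrt_sq hx.le,
        div_div_div_cancel_right₀ hx.ne']
    have hqtop : Tendsto q atTop atTop := by
      refine tendsto_atTop_atTop_of_monotone hqm.monotone fun b => ⟨H b, (hqH b).ge⟩
    have h4 := tendsto_quarter hkc hkeven ((h2.comp hqtop).inv₀ hsA.ne')
    rwa [← mul_inv, Real.mul_self_sqrt (by linarith), ← div_eq_mul_inv] at h4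
  have hone : (1 : ℝ) ∈ range I := by
    rcases hcross with ⟨h1, h2⟩ | ⟨h1, h2⟩
    · have h3 : Real.pi / 2 / (-A) < 1 := by
        rw [div_lt_one (by linarith)]; linarith
      obtain ⟨R, hR⟩ := ((hItop (by linarith)).eventually_lt_const h3).exists
      refine mem_range_of_exists_le_of_exists_ge hIc ⟨R, hR.le⟩ ⟨0, ?_⟩
      rw [hI0, le_div_iff₀ (by linarith)]
      linarith
    · refine mem_range_of_exists_le_of_exists_ge hIc ⟨0, ?_⟩ ?_
      · rw [hI0, div_le_iff₀ (by linarith)]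
        linarith
      · rcases hA0.lt_or_eq with h3 | h3
        · have h4 : 1 < Real.pi / 2 / (-A) := by
            rw [one_lt_div (by linarith)]; linarith
          obtain ⟨R, hR⟩ := ((hItop h3).eventually_const_lt h4).exists
          exact ⟨R, hR.le⟩
        · -- Sublinear growth: the speed is at most `C + c / 2` on the orbit of amplitude `c`.
          have h4 : -A < 1 / 2 := by rw [h3]; norm_num
          obtain ⟨X, hX⟩ := eventually_atTop.1 ((hgA.eventually_lt_const h4).and
            (eventually_gt_atTop 0))
          obtain ⟨C, hC⟩ := (isCompact_Icc (a := (0 : ℝ)) (b := X)).exists_bound_of_continuousOn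
            hgc.continuousOn
          have hX0 : 0 < X := (hX X le_rfl).2
          have hC0 : 0 ≤ C := (norm_nonneg _).trans (hC 0 ⟨le_rfl, hX0.le⟩)
          set c : ℝ := 2 * C + 1 with hc
          have hHm : StrictMono H := strictMono_of_hasDerivAt_pos hHd hhpos
          have hρ0 : 0 ≤ H c := by
            rw [← hH0]
            exact hHm.monotone (by positivity)
          have h5 := le_mul_quarter (g := g) (M := C + c / 2) hkc hkpos hqd hq0
            (fun u => by rw [hgq, mul_div_cancel₀ _ (hkpos u).ne']) hρ0 (by
              intro y hy0 hy
              rw [hqH] at hy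
              rcases le_total X y with h6 | h6
              · have h7 := (hX y h6).1
                rw [div_lt_iff₀ (hX y h6).2] at h7
                linarith
              · have := (le_abs_self _).trans (hC y ⟨hy0, h6⟩)
                linarith)
          rw [hqH] at h5
          refine ⟨H c, ?_⟩
          by_contra hlt
          push Not at hlt
          have h8 : (C + c / 2) * I (H c) ≤ (C + c / 2) * 1 :=
            mul_le_mul_of_nonneg_left hlt.le (by positivity)
          have h9 : c ≤ (C + c / 2) * I (H c) := h5
          linarith
  obtain ⟨ρ, hρ⟩ := hone
  refine isKY_of_quarter hkc hkpos hkeven hqd hqodd (fun u => ?_) (ρ := ρ) ?_ hρ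
  · rw [← hgq]
    simp [hg]
  · rintro rfl
    rw [hI0, div_eq_one_iff_eq (by linarith)] at hρ
    rcases hcross with h | h <;> linarith [h.1, h.2]
end
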